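/- arXiv:1706.09924 — 10 statements merged into one kernel-verified Lean document; each statement's English description precedes it below -/
import Mathlib

section
/- For every x ∈ ℝ^d with x ≠ 0, the function y ↦ π^{-d/2} (Γ(d/2)^2 / (Γ((d-α)/2) Γ(α/2))) · (|x|^2 - |y|^2)^{α/2} / (|x - y|^d |y|^α) on {y ∈ ℝ^d : 0 < |y| < |x|} is a probability density; that is, ∫_{0<|y|<|x|} (|x|^2 - |y|^2)^{α/2} / (|x - y|^d |y|^α) dy = π^{d/2} Γ((d-α)/2) Γ(α/2) / Γ(d/2)^2. (This is the total-mass identity for the law of the point of closest reach to the origin in Theorem 1.1.) -/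
open MeasureTheory Real Set

section SphericalIntegrals

open Metric
open scoped Topology Pointwise

/-- Differentiation under the integral sign on a compact space, for a jointly continuous derivative. -/
theorem hasDerivAt_integral_of_continuousOn_prod {K : Type*} [TopologicalSpace K] [CompactSpace K]
    [MeasurableSpace K] [OpensMeasurableSpace K] {μ : Measure K} [IsFiniteMeasure μ]
    {F F' : ℝ → K → ℝ} {U : Set ℝ} {t : ℝ} (hU : U ∈ 𝓝 t)
    (hF : ∀ u ∈ U, ∀ k, HasDerivAt (F · k) (F' u k) u)
    (hFc : ∀ u ∈ U, Continuous (F u))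
    (hF'c : ContinuousOn (fun p : ℝ × K => F' p.1 p.2) (U ×ˢ univ)) :
    HasDerivAt (fun u => ∫ k, F u k ∂μ) (∫ k, F' t k ∂μ) t := by
  obtain ⟨V, hV, hVU, hVc⟩ := local_compact_nhds hU
  obtain ⟨C, hC⟩ := (hVc.prod isCompact_univ).exists_bound_of_continuousOn
    (hF'c.mono (prod_mono hVU subset_rfl))
  have htU := mem_of_mem_nhds hU
  refine (hasDerivAt_integral_of_dominated_loc_of_deriv_le (bound := fun _ => C) hV ?_ ?_ ?_ ?_
    (integrable_const C) ?_).2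
  · filter_upwards [hU] with u hu using (hFc u hu).aestronglyMeasurable
  · exact (hFc t htU).integrable_of_hasCompactSupport (HasCompactSupport.of_compactSpace _)
  · refine Continuous.aestronglyMeasurable ?_
    exact hF'c.comp_continuous (f := fun k => (t, k)) (by fun_prop) fun k => ⟨htU, mem_univ _⟩
  · exact .of_forall fun k u hu => hC (u, k) ⟨hu, mem_univ _⟩
  · exact .of_forall fun k u hu => hF u (hVU hu) k

theorem cos_mul_sub_sin_mul_mem_Icc {s β : ℝ} (h : s ^ 2 + β ^ 2 ≤ 1) (t : ℝ) :
    cos t * s - sin t * β ∈ Icc (-1 : ℝ) 1 := by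
  have h1 : (cos t * s - sin t * β) ^ 2 ≤ 1 := by
    nlinarith [sq_nonneg (sin t * s + cos t * β), sin_sq_add_cos_sq t]
  exact abs_le.1 ((sq_le_one_iff_abs_le_one _).1 h1)

theorem one_sub_two_mul_add_sq_pos {r s : ℝ} (hr : r ∈ Ioo (-1 : ℝ) 1) (hs : s ∈ Icc (-1 : ℝ) 1) :
    0 < 1 - 2 * r * s + r ^ 2 := by
  have h1 : 0 < (1 - r) ^ 2 := pow_pos (by linarith [hr.2]) 2
  have h2 : 0 < (1 + r) ^ 2 := pow_pos (by linarith [hr.1]) 2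
  rcases le_total 0 s with h | h
  · nlinarith [hs.2, mul_nonneg h h1.le, mul_nonneg (sub_nonneg.2 hs.2) h2.le]
  · nlinarith [hs.1, mul_nonneg (neg_nonneg.2 h) h2.le,
      mul_nonneg (neg_le_iff_add_nonneg.1 hs.1) h1.le]

theorem hasDerivAt_one_sub_two_mul_add_sq_rpow {r s : ℝ} (hr : r ∈ Ioo (-1 : ℝ) 1)
    (hs : s ∈ Icc (-1 : ℝ) 1) (p : ℝ) :
    HasDerivAt (fun r => (1 - 2 * r * s + r ^ 2) ^ p)
      (2 * p * (r - s) * (1 - 2 * r * s + r ^ 2) ^ (p - 1)) r := by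
  have h : HasDerivAt (fun r => 1 - 2 * r * s + r ^ 2) (-2 * s + 2 * r) r := by
    have h1 := ((((hasDerivAt_id r).const_mul 2).mul_const s).const_sub 1).add
      ((hasDerivAt_id r).pow 2)
    exact h1.congr_deriv (by simp)
  exact (h.rpow_const (p := p) (.inl (one_sub_two_mul_add_sq_pos hr hs).ne')).congr_deriv (by ring)

variable {E : Type*} [NormedAddCommGroup E] [InnerProductSpace ℝ E]

theorem inner_mem_Icc_of_mem_sphere {e : E} (he : ‖e‖ = 1) (θ : sphere (0 : E) 1) :
    inner ℝ e (θ : E) ∈ Icc (-1 : ℝ) 1 := by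
  have h := abs_real_inner_le_norm e (θ : E)
  rw [he, norm_eq_of_mem_sphere θ, one_mul] at h
  exact abs_le.1 h

theorem continuousOn_one_sub_two_mul_add_sq_rpow {e : E} (he : ‖e‖ = 1) (p : ℝ) :
    ContinuousOn (fun q : ℝ × sphere (0 : E) 1 =>
      (1 - 2 * q.1 * inner ℝ e (q.2 : E) + q.1 ^ 2) ^ p) (Ioo (-1) 1 ×ˢ univ) :=
  ContinuousOn.rpow_const (Continuous.continuousOn (by fun_prop)) fun q hq =>
    .inl (one_sub_two_mul_add_sq_pos hq.1 (inner_mem_Icc_of_mem_sphere he q.2)).ne'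

theorem continuous_one_sub_two_mul_add_sq_rpow {e : E} (he : ‖e‖ = 1) (p : ℝ) {r : ℝ}
    (hr : r ∈ Ioo (-1 : ℝ) 1) :
    Continuous (fun θ : sphere (0 : E) 1 => (1 - 2 * r * inner ℝ e (θ : E) + r ^ 2) ^ p) :=
  (continuousOn_one_sub_two_mul_add_sq_rpow he p).comp_continuous (f := fun θ => (r, θ))
    (by fun_prop) fun _ => ⟨hr, mem_univ _⟩

variable [FiniteDimensional ℝ E]

/-- The rotation by the angle `t` in the plane spanned by two orthonormal vectors `e` and `b`. -/
theorem exists_linearIsometryEquiv_inner_rotation {e b : E} (he : ‖e‖ = 1) (hb : ‖b‖ = 1)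
    (heb : inner ℝ e b = 0) (t : ℝ) :
    ∃ R : E ≃ₗᵢ[ℝ] E, ∀ y,
      inner ℝ e (R y) = cos t * inner ℝ e y - sin t * inner ℝ b y ∧
      inner ℝ b (R y) = sin t * inner ℝ e y + cos t * inner ℝ b y := by
  let L : E →ₗ[ℝ] E := LinearMap.id +
    ((cos t - 1) • (innerₗ E e) - sin t • (innerₗ E b)).smulRight e +
    (sin t • (innerₗ E e) + (cos t - 1) • (innerₗ E b)).smulRight b
  have hee : inner ℝ e e = 1 := by simp [he]
  have hbb : inner ℝ b b = 1 := by simp [hb]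
  have hbe : inner ℝ b e = 0 := by rw [real_inner_comm, heb]
  have hL : ∀ y, L y = y + ((cos t - 1) * inner ℝ e y - sin t * inner ℝ b y) • e +
      (sin t * inner ℝ e y + (cos t - 1) * inner ℝ b y) • b := fun y => by simp [L]
  have hLe : ∀ y, inner ℝ e (L y) = cos t * inner ℝ e y - sin t * inner ℝ b y := fun y => by
    rw [hL, inner_add_right, inner_add_right, inner_smul_right, inner_smul_right, hee, heb]; ring
  have hLb : ∀ y, inner ℝ b (L y) = sin t * inner ℝ e y + cos t * inner ℝ b y := fun y => by
    rw [hL, inner_add_right, inner_add_right, inner_smul_right, inner_smul_right, hbb, hbe]; ring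
  have hnorm : ∀ y, ‖L y‖ = ‖y‖ := fun y => by
    rw [← sq_eq_sq₀ (norm_nonneg _) (norm_nonneg _), ← real_inner_self_eq_norm_sq,
      ← real_inner_self_eq_norm_sq]
    conv_lhs => rw [hL y]
    simp only [inner_add_left, inner_add_right, inner_smul_left, inner_smul_right, hee, hbb, hbe,
      heb, real_inner_comm e y, real_inner_comm b y, conj_trivial]
    linear_combination ((inner ℝ e y) ^ 2 + (inner ℝ b y) ^ 2) * sin_sq_add_cos_sq t
  exact ⟨LinearIsometry.toLinearIsometryEquiv ⟨L, hnorm⟩ rfl, fun y => ⟨hLe y, hLb y⟩⟩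

variable [MeasurableSpace E] [BorelSpace E]

/-- The surface measure on the unit sphere is invariant under linear isometries. -/
theorem integral_toSphere_comp_linearIsometryEquiv (R : E ≃ₗᵢ[ℝ] E) (f : E → ℝ) :
    ∫ θ, f (R θ) ∂(volume : Measure E).toSphere = ∫ θ, f θ ∂(volume : Measure E).toSphere := by
  let T : sphere (0 : E) 1 ≃ₜ sphere (0 : E) 1 :=
    R.toHomeomorph.subtype (fun y => by simp)
  have hT : MeasurePreserving T (volume : Measure E).toSphere (volume : Measure E).toSphere := by
    refine ⟨T.measurable, Measure.ext fun s hs => ?_⟩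
    rw [Measure.map_apply T.measurable hs, Measure.toSphere_apply' _ (T.measurable hs),
      Measure.toSphere_apply' _ hs,
      ← R.measurePreserving.measure_preimage_emb R.toHomeomorph.measurableEmbedding
        (Ioo (0 : ℝ) 1 • (Subtype.val '' s))]
    congr 2
    ext y
    simp only [mem_smul, mem_image, mem_preimage]
    constructor
    · rintro ⟨r, hr, _, ⟨θ, hθ, rfl⟩, rfl⟩
      exact ⟨r, hr, _, ⟨T θ, hθ, rfl⟩, (map_smul R r (θ : E)).symm⟩
    · rintro ⟨r, hr, _, ⟨θ, hθ, rfl⟩, h⟩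
      refine ⟨r, hr, _, ⟨T.symm θ, by simpa using hθ, rfl⟩, R.injective ?_⟩
      rw [map_smul]
      exact (congrArg (fun z : sphere (0 : E) 1 => r • (z : E)) (T.apply_symm_apply θ)).trans h
  exact hT.integral_comp T.measurableEmbedding (fun θ => f θ)

/-- Integration by parts on the sphere along the infinitesimal rotation in the plane of `e` and `b`,
applied to `θ ↦ ⟪b, θ⟫ * g ⟪e, θ⟫`. -/
theorem integral_toSphere_inner_sq_mul_deriv {e b : E} (he : ‖e‖ = 1) (hb : ‖b‖ = 1)
    (heb : inner ℝ e b = 0) {g g' : ℝ → ℝ} (hg : ∀ u ∈ Icc (-1 : ℝ) 1, HasDerivAt g (g' u) u)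
    (hg' : ContinuousOn g' (Icc (-1) 1)) :
    ∫ θ, (inner ℝ e (θ : E) * g (inner ℝ e (θ : E)) -
      inner ℝ b (θ : E) ^ 2 * g' (inner ℝ e (θ : E))) ∂(volume : Measure E).toSphere = 0 := by
  have hsq : ∀ θ : sphere (0 : E) 1, inner ℝ e (θ : E) ^ 2 + inner ℝ b (θ : E) ^ 2 ≤ 1 := by
    intro θ
    have hθ : ‖(θ : E)‖ = 1 := by simp
    have ho : Orthonormal ℝ ![e, b] := by
      rw [orthonormal_iff_ite]
      have hbe : inner ℝ b e = 0 := by rw [real_inner_comm, heb]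
      intro i j
      fin_cases i <;> fin_cases j <;> simp [he, hb, heb, hbe]
    have := ho.sum_inner_products_le (θ : E) (s := Finset.univ)
    simpa [Fin.sum_univ_two, hθ] using this
  have hgc : ContinuousOn g (Icc (-1) 1) := fun u hu => (hg u hu).continuousAt.continuousWithinAt
  have hmem := fun (u : ℝ) (θ : sphere (0 : E) 1) => cos_mul_sub_sin_mul_mem_Icc (hsq θ) u
  have key := hasDerivAt_integral_of_continuousOn_prod (μ := (volume : Measure E).toSphere)
    (F := fun t θ => (sin t * inner ℝ e (θ : E) + cos t * inner ℝ b (θ : E)) *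
      g (cos t * inner ℝ e (θ : E) - sin t * inner ℝ b (θ : E)))
    (F' := fun t θ => (cos t * inner ℝ e (θ : E) - sin t * inner ℝ b (θ : E)) *
      g (cos t * inner ℝ e (θ : E) - sin t * inner ℝ b (θ : E)) +
      (sin t * inner ℝ e (θ : E) + cos t * inner ℝ b (θ : E)) *
      (g' (cos t * inner ℝ e (θ : E) - sin t * inner ℝ b (θ : E)) *
        (-sin t * inner ℝ e (θ : E) - cos t * inner ℝ b (θ : E))))
    (t := 0) (U := univ) Filter.univ_mem ?_ ?_ ?_
  · have hconst : ∀ t, ∫ θ, (sin t * inner ℝ e (θ : E) + cos t * inner ℝ b (θ : E)) *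
        g (cos t * inner ℝ e (θ : E) - sin t * inner ℝ b (θ : E)) ∂(volume : Measure E).toSphere =
        ∫ θ, inner ℝ b (θ : E) * g (inner ℝ e (θ : E)) ∂(volume : Measure E).toSphere := by
      intro t
      obtain ⟨R, hR⟩ := exists_linearIsometryEquiv_inner_rotation he hb heb t
      rw [← integral_toSphere_comp_linearIsometryEquiv R
        (fun y => inner ℝ b y * g (inner ℝ e y))]
      simp only [hR]
    simp only [hconst] at key
    refine Eq.trans ?_ (key.unique (hasDerivAt_const (0 : ℝ) _))
    refine integral_congr_ae (.of_forall fun θ => ?_)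
    simp
    ring
  · intro u _ θ
    have h1 : HasDerivAt (fun t => sin t * inner ℝ e (θ : E) + cos t * inner ℝ b (θ : E))
        (cos u * inner ℝ e (θ : E) - sin u * inner ℝ b (θ : E)) u := by
      exact (((hasDerivAt_sin u).mul_const (inner ℝ e (θ : E))).add
        ((hasDerivAt_cos u).mul_const (inner ℝ b (θ : E)))).congr_deriv (by ring)
    have h2 : HasDerivAt (fun t => cos t * inner ℝ e (θ : E) - sin t * inner ℝ b (θ : E))
        (-sin u * inner ℝ e (θ : E) - cos u * inner ℝ b (θ : E)) u :=
      ((hasDerivAt_cos u).mul_const (inner ℝ e (θ : E))).sub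
        ((hasDerivAt_sin u).mul_const (inner ℝ b (θ : E)))
    exact h1.mul ((hg _ (hmem u θ)).comp u h2)
  · intro u _
    have := hgc.comp_continuous (f := fun θ : sphere (0 : E) 1 =>
      cos u * inner ℝ e (θ : E) - sin u * inner ℝ b (θ : E)) (by fun_prop) (hmem u)
    exact Continuous.mul (by fun_prop) this
  · have h1 := hgc.comp_continuous (f := fun p : ℝ × sphere (0 : E) 1 =>
      cos p.1 * inner ℝ e (p.2 : E) - sin p.1 * inner ℝ b (p.2 : E)) (by fun_prop)
      fun p => hmem p.1 p.2
    have h2 := hg'.comp_continuous (f := fun p : ℝ × sphere (0 : E) 1 =>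
      cos p.1 * inner ℝ e (p.2 : E) - sin p.1 * inner ℝ b (p.2 : E)) (by fun_prop)
      fun p => hmem p.1 p.2
    exact (((by fun_prop : Continuous _).mul h1).add ((by fun_prop : Continuous _).mul
      (h2.mul (by fun_prop)))).continuousOn

/-- Integration by parts on the sphere for zonal functions: the weight `(1 - s ^ 2) ^ ((d - 3) / 2)` of
`s = ⟪e, θ⟫` in differential form. -/
theorem integral_toSphere_zonal_by_parts {e : E} (he : ‖e‖ = 1) {g g' : ℝ → ℝ}
    (hg : ∀ u ∈ Icc (-1 : ℝ) 1, HasDerivAt g (g' u) u) (hg' : ContinuousOn g' (Icc (-1) 1)) :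
    ∫ θ, (((Module.finrank ℝ E : ℝ) - 1) * (inner ℝ e (θ : E) * g (inner ℝ e (θ : E))) -
      (1 - inner ℝ e (θ : E) ^ 2) * g' (inner ℝ e (θ : E))) ∂(volume : Measure E).toSphere = 0 := by
  classical
  have : Nontrivial E := ⟨e, 0, by rintro rfl; simp at he⟩
  let i₀ : Fin (Module.finrank ℝ E) := ⟨0, Module.finrank_pos⟩
  obtain ⟨b, hb⟩ := Orthonormal.exists_orthonormalBasis_extension_of_card_eq (𝕜 := ℝ)
    (by simp) (v := fun _ : Fin (Module.finrank ℝ E) => e) (s := {i₀})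
    ⟨fun i => by simpa using he, fun i j hij => (hij (Subsingleton.elim _ _)).elim⟩
  have hb₀ : b i₀ = e := hb i₀ rfl
  have hgc : ContinuousOn g (Icc (-1) 1) := fun u hu => (hg u hu).continuousAt.continuousWithinAt
  have h1 := hgc.comp_continuous (f := fun θ : sphere (0 : E) 1 => inner ℝ e (θ : E))
    (by fun_prop) (inner_mem_Icc_of_mem_sphere he)
  have h2 := hg'.comp_continuous (f := fun θ : sphere (0 : E) 1 => inner ℝ e (θ : E))
    (by fun_prop) (inner_mem_Icc_of_mem_sphere he)
  have hsum : ∑ i ∈ Finset.univ.erase i₀, ∫ θ, (inner ℝ e (θ : E) * g (inner ℝ e (θ : E)) -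
      inner ℝ (b i) (θ : E) ^ 2 * g' (inner ℝ e (θ : E))) ∂(volume : Measure E).toSphere = 0 := by
    refine Finset.sum_eq_zero fun i hi => ?_
    refine integral_toSphere_inner_sq_mul_deriv he (b.norm_eq_one i) ?_ hg hg'
    rw [← hb₀]
    exact b.inner_eq_zero (Finset.ne_of_mem_erase hi).symm
  rw [← integral_finsetSum] at hsum
  · rw [← hsum]
    refine integral_congr_ae (.of_forall fun θ => ?_)
    have hθ : ∑ i ∈ Finset.univ.erase i₀, inner ℝ (b i) (θ : E) ^ 2 = 1 - inner ℝ e (θ : E) ^ 2 := by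
      have h := b.sum_sq_inner_right (θ : E)
      rw [norm_eq_of_mem_sphere θ, ← Finset.add_sum_erase _ _ (Finset.mem_univ i₀), hb₀] at h
      linarith
    simp only [Finset.sum_sub_distrib, ← Finset.sum_mul, hθ, Finset.sum_const, nsmul_eq_mul,
      Finset.card_erase_of_mem (Finset.mem_univ i₀), Finset.card_univ, Fintype.card_fin]
    rw [Nat.cast_pred Module.finrank_pos, mul_assoc]
  · intro i _
    exact (((by fun_prop : Continuous _).mul h1).sub ((by fun_prop : Continuous _).mul
      h2)).integrable_of_hasCompactSupport (.of_compactSpace _)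

theorem integral_toSphere_poisson_by_parts {e : E} (he : ‖e‖ = 1) {r : ℝ}
    (hr : r ∈ Ioo (-1 : ℝ) 1) (p : ℝ) :
    ∫ θ, (((Module.finrank ℝ E : ℝ) - 1) *
        (inner ℝ e (θ : E) * (1 - 2 * r * inner ℝ e (θ : E) + r ^ 2) ^ p) -
      (1 - inner ℝ e (θ : E) ^ 2) *
        (-2 * r * p * (1 - 2 * r * inner ℝ e (θ : E) + r ^ 2) ^ (p - 1)))
      ∂(volume : Measure E).toSphere = 0 := by
  refine integral_toSphere_zonal_by_parts he (g := fun u => (1 - 2 * r * u + r ^ 2) ^ p)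
    (g' := fun u => -2 * r * p * (1 - 2 * r * u + r ^ 2) ^ (p - 1)) (fun u hu => ?_) ?_
  · have h : HasDerivAt (fun u => 1 - 2 * r * u + r ^ 2) (-(2 * r)) u := by
      have h1 := (((hasDerivAt_id u).const_mul (2 * r)).const_sub 1).add_const (r ^ 2)
      exact h1.congr_deriv (by simp)
    exact (h.rpow_const (p := p) (.inl (one_sub_two_mul_add_sq_pos hr hu).ne')).congr_deriv
      (by ring)
  · refine continuousOn_const.mul (ContinuousOn.rpow_const (by fun_prop) fun u hu => ?_)
    exact .inl (one_sub_two_mul_add_sq_pos hr hu).ne'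

/-- The radial derivative of the spherical mean of the Newton kernel vanishes inside the ball. -/
theorem integral_toSphere_sub_mul_rpow_eq_zero {e : E} (he : ‖e‖ = 1)
    (hE : 2 ≤ Module.finrank ℝ E) {r : ℝ} (hr : r ∈ Ico (0 : ℝ) 1) :
    ∫ θ, (inner ℝ e (θ : E) - r) *
      (1 - 2 * r * inner ℝ e (θ : E) + r ^ 2) ^ (-(Module.finrank ℝ E : ℝ) / 2)
      ∂(volume : Measure E).toSphere = 0 := by
  obtain ⟨m, hm⟩ := Nat.exists_eq_add_of_le' hE
  have hn : (Module.finrank ℝ E : ℝ) = m + 2 := by simp [hm]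
  rcases hr.1.eq_or_lt with rfl | hr0
  · have h := integral_toSphere_poisson_by_parts he (r := 0) (by simp) (0 : ℝ)
    simp only [mul_zero, zero_mul, sub_zero, rpow_zero, mul_one, integral_const_mul] at h
    have h' := (mul_eq_zero.1 h).resolve_left
      (by rw [hn, add_sub_assoc]; norm_num; positivity)
    simpa using h'
  have hsub : ∀ u ∈ Icc 0 r, u ∈ Ioo (-1 : ℝ) 1 := fun u hu =>
    ⟨by linarith [hu.1], hu.2.trans_lt hr.2⟩
  have hderiv : ∀ u ∈ Icc 0 r, HasDerivAt (fun u => ∫ θ, u ^ (m + 1) * ((inner ℝ e (θ : E) - u) *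
      (1 - 2 * u * inner ℝ e (θ : E) + u ^ 2) ^ (-(Module.finrank ℝ E : ℝ) / 2))
      ∂(volume : Measure E).toSphere) 0 u := by
    intro u hu
    have h0 := integral_toSphere_poisson_by_parts he (hsub u hu) (-(Module.finrank ℝ E : ℝ) / 2)
    have key := hasDerivAt_integral_of_continuousOn_prod (μ := (volume : Measure E).toSphere)
      (F := fun u θ => u ^ (m + 1) * ((inner ℝ e (θ : E) - u) *
        (1 - 2 * u * inner ℝ e (θ : E) + u ^ 2) ^ (-(Module.finrank ℝ E : ℝ) / 2)))
      (F' := fun r θ => r ^ m * (((Module.finrank ℝ E : ℝ) - 1) *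
        (inner ℝ e (θ : E) *
          (1 - 2 * r * inner ℝ e (θ : E) + r ^ 2) ^ (-(Module.finrank ℝ E : ℝ) / 2)) -
        (1 - inner ℝ e (θ : E) ^ 2) * (-2 * r * (-(Module.finrank ℝ E : ℝ) / 2) *
          (1 - 2 * r * inner ℝ e (θ : E) + r ^ 2) ^ (-(Module.finrank ℝ E : ℝ) / 2 - 1))))
      (t := u) (Ioo_mem_nhds (hsub u hu).1 (hsub u hu).2) ?_ ?_ ?_
    · rwa [integral_const_mul, h0, mul_zero] at key
    · intro v hv θ
      have hs := inner_mem_Icc_of_mem_sphere he θ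
      have h1 := (hasDerivAt_id v).pow (m + 1)
      have h2 := ((hasDerivAt_id v).const_sub (inner ℝ e (θ : E))).mul
        (hasDerivAt_one_sub_two_mul_add_sq_rpow hv hs (-(Module.finrank ℝ E : ℝ) / 2))
      refine (h1.mul h2).congr_deriv ?_
      have hD := (one_sub_two_mul_add_sq_pos hv hs)
      have hpow := rpow_sub_one hD.ne' (-(Module.finrank ℝ E : ℝ) / 2)
      rw [eq_div_iff hD.ne'] at hpow
      simp only [id, Pi.pow_apply, Pi.mul_apply, Nat.add_sub_cancel]
      rw [← hpow, hn]
      push_cast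
      ring
    · intro v hv
      exact continuous_const.mul ((by fun_prop : Continuous _).mul
        (continuous_one_sub_two_mul_add_sq_rpow he _ hv))
    · have c1 := continuousOn_one_sub_two_mul_add_sq_rpow he (-(Module.finrank ℝ E : ℝ) / 2)
      have c2 := continuousOn_one_sub_two_mul_add_sq_rpow he (-(Module.finrank ℝ E : ℝ) / 2 - 1)
      fun_prop
  have hconst := constant_of_has_deriv_right_zero
    (fun u hu => (hderiv u hu).continuousAt.continuousWithinAt)
    (fun u hu => (hderiv u (Ico_subset_Icc_self hu)).hasDerivWithinAt) r ⟨hr0.le, le_rfl⟩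
  simp only [integral_const_mul] at hconst
  rw [zero_pow (by simp), zero_mul] at hconst
  exact (mul_eq_zero.1 hconst).resolve_left (by positivity)

/-- The spherical mean of the Newton kernel `‖e - r θ‖ ^ (2 - d)` does not depend on `r ∈ [0, 1)`. -/
theorem integral_toSphere_newton_kernel {e : E} (he : ‖e‖ = 1)
    (hE : 2 ≤ Module.finrank ℝ E) {r : ℝ} (hr : r ∈ Ico (0 : ℝ) 1) :
    ∫ θ, (1 - 2 * r * inner ℝ e (θ : E) + r ^ 2) ^ (-(Module.finrank ℝ E : ℝ) / 2 + 1)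
      ∂(volume : Measure E).toSphere = (volume : Measure E).toSphere.real univ := by
  have hsub : ∀ u ∈ Icc 0 r, u ∈ Ioo (-1 : ℝ) 1 := fun u hu =>
    ⟨by linarith [hu.1], hu.2.trans_lt hr.2⟩
  have hderiv : ∀ u ∈ Icc 0 r, HasDerivAt (fun u => ∫ θ,
      (1 - 2 * u * inner ℝ e (θ : E) + u ^ 2) ^ (-(Module.finrank ℝ E : ℝ) / 2 + 1)
      ∂(volume : Measure E).toSphere) 0 u := by
    intro u hu
    have h0 := integral_toSphere_sub_mul_rpow_eq_zero he hE ⟨hu.1, (hsub u hu).2⟩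
    have key := hasDerivAt_integral_of_continuousOn_prod (μ := (volume : Measure E).toSphere)
      (F := fun u θ =>
        (1 - 2 * u * inner ℝ e (θ : E) + u ^ 2) ^ (-(Module.finrank ℝ E : ℝ) / 2 + 1))
      (F' := fun r θ => (Module.finrank ℝ E - 2 : ℝ) * ((inner ℝ e (θ : E) - r) *
          (1 - 2 * r * inner ℝ e (θ : E) + r ^ 2) ^ (-(Module.finrank ℝ E : ℝ) / 2)))
      (t := u) (Ioo_mem_nhds (hsub u hu).1 (hsub u hu).2) ?_ ?_ ?_
    · rwa [integral_const_mul, h0, mul_zero] at key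
    · intro v hv θ
      refine (hasDerivAt_one_sub_two_mul_add_sq_rpow hv (inner_mem_Icc_of_mem_sphere he θ)
        _).congr_deriv ?_
      rw [add_sub_cancel_right]
      ring
    · intro v hv
      exact continuous_one_sub_two_mul_add_sq_rpow he _ hv
    · have c1 := continuousOn_one_sub_two_mul_add_sq_rpow he (-(Module.finrank ℝ E : ℝ) / 2)
      fun_prop
  have hconst := constant_of_has_deriv_right_zero
    (fun u hu => (hderiv u hu).continuousAt.continuousWithinAt)
    (fun u hu => (hderiv u (Ico_subset_Icc_self hu)).hasDerivWithinAt) r ⟨hr.1, le_rfl⟩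
  rw [hconst]
  simp

/-- The Poisson kernel of the unit ball has spherical mean one. -/
theorem integral_toSphere_poisson_kernel {e : E} (he : ‖e‖ = 1)
    (hE : 2 ≤ Module.finrank ℝ E) {r : ℝ} (hr : r ∈ Ico (0 : ℝ) 1) :
    ∫ θ, (1 - 2 * r * inner ℝ e (θ : E) + r ^ 2) ^ (-(Module.finrank ℝ E : ℝ) / 2)
      ∂(volume : Measure E).toSphere = (volume : Measure E).toSphere.real univ / (1 - r ^ 2) := by
  have hr' : r ∈ Ioo (-1 : ℝ) 1 := ⟨by linarith [hr.1], hr.2⟩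
  have hc := continuous_one_sub_two_mul_add_sq_rpow he (-(Module.finrank ℝ E : ℝ) / 2) hr'
  have h : ∀ θ : sphere (0 : E) 1,
      (1 - 2 * r * inner ℝ e (θ : E) + r ^ 2) ^ (-(Module.finrank ℝ E : ℝ) / 2 + 1) =
      (1 - r ^ 2) * (1 - 2 * r * inner ℝ e (θ : E) + r ^ 2) ^ (-(Module.finrank ℝ E : ℝ) / 2) -
      2 * r * ((inner ℝ e (θ : E) - r) *
        (1 - 2 * r * inner ℝ e (θ : E) + r ^ 2) ^ (-(Module.finrank ℝ E : ℝ) / 2)) := fun θ => by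
    rw [rpow_add_one (one_sub_two_mul_add_sq_pos hr' (inner_mem_Icc_of_mem_sphere he θ)).ne']
    ring
  have hint := integral_toSphere_newton_kernel he hE hr
  simp only [h] at hint
  rw [integral_sub, integral_const_mul, integral_const_mul,
    integral_toSphere_sub_mul_rpow_eq_zero he hE hr, mul_zero, sub_zero] at hint
  · rw [← hint, mul_div_cancel_left₀]
    nlinarith [hr.1, hr.2]
  · exact (continuous_const.mul hc).integrable_of_hasCompactSupport (.of_compactSpace _)
  · exact (continuous_const.mul ((by fun_prop : Continuous _).mul
      hc)).integrable_of_hasCompactSupport (.of_compactSpace _)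

/-- Integration in polar coordinates. -/
theorem lintegral_eq_lintegral_Ioi_toSphere [Nontrivial E] {f : E → ENNReal} (hf : Measurable f) :
    ∫⁻ y, f y = ∫⁻ r in Ioi (0 : ℝ), ENNReal.ofReal (r ^ (Module.finrank ℝ E - 1)) *
      ∫⁻ θ, f (r • (θ : E)) ∂(volume : Measure E).toSphere := by
  have hmeas : Measurable fun q : sphere (0 : E) 1 × Ioi (0 : ℝ) => f (q.2.1 • (q.1 : E)) :=
    hf.comp (by fun_prop)
  calc ∫⁻ y, f y = ∫⁻ y : ({0}ᶜ : Set E), f y ∂((volume : Measure E).comap Subtype.val) := by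
        rw [lintegral_subtype_comap (measurableSet_singleton _).compl, restrict_compl_singleton]
    _ = ∫⁻ q, f (q.2.1 • (q.1 : E)) ∂((volume : Measure E).toSphere.prod
          (.volumeIoiPow (Module.finrank ℝ E - 1))) := by
        rw [← (volume : Measure E).measurePreserving_homeomorphUnitSphereProd.lintegral_comp hmeas]
        refine lintegral_congr fun y => congrArg f ?_
        exact (congrArg Subtype.val ((homeomorphUnitSphereProd E).symm_apply_apply y)).symm
    _ = ∫⁻ r, ∫⁻ θ, f (r.1 • (θ : E)) ∂(volume : Measure E).toSphere
          ∂(Measure.volumeIoiPow (Module.finrank ℝ E - 1)) :=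
        lintegral_prod_symm' _ hmeas
    _ = _ := by
        rw [Measure.volumeIoiPow, lintegral_withDensity_eq_lintegral_mul _ (by fun_prop)
          hmeas.lintegral_prod_left']
        exact lintegral_subtype_comap measurableSet_Ioi (fun r : ℝ =>
          ENNReal.ofReal (r ^ (Module.finrank ℝ E - 1)) *
            ∫⁻ θ, f (r • (θ : E)) ∂(volume : Measure E).toSphere)

/-- The spherical integral of `‖x - r θ‖ ^ (-d)` for `r < ‖x‖`. -/
theorem integral_toSphere_inv_norm_sub_pow {x : E} (hE : 2 ≤ Module.finrank ℝ E) {r : ℝ}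
    (hr0 : 0 ≤ r) (hr : r < ‖x‖) :
    Integrable (fun θ : sphere (0 : E) 1 => (‖x - r • (θ : E)‖ ^ Module.finrank ℝ E)⁻¹)
      (volume : Measure E).toSphere ∧
    ∫ θ, (‖x - r • (θ : E)‖ ^ Module.finrank ℝ E)⁻¹ ∂(volume : Measure E).toSphere =
      (volume : Measure E).toSphere.real univ *
        (‖x‖ ^ Module.finrank ℝ E * (1 - (r / ‖x‖) ^ 2))⁻¹ := by
  have hx : 0 < ‖x‖ := hr0.trans_lt hr
  have he : ‖‖x‖⁻¹ • x‖ = 1 := by simp [norm_smul, hx.ne']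
  have hr1 : r / ‖x‖ ∈ Ico (0 : ℝ) 1 := ⟨by positivity, (div_lt_one hx).2 hr⟩
  have hr2 : r / ‖x‖ ∈ Ioo (-1 : ℝ) 1 := ⟨by linarith [hr1.1], hr1.2⟩
  have h : ∀ θ : sphere (0 : E) 1, (‖x - r • (θ : E)‖ ^ Module.finrank ℝ E)⁻¹ =
      (‖x‖ ^ Module.finrank ℝ E)⁻¹ * (1 - 2 * (r / ‖x‖) * inner ℝ (‖x‖⁻¹ • x) (θ : E) +
        (r / ‖x‖) ^ 2) ^ (-(Module.finrank ℝ E : ℝ) / 2) := by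
    intro θ
    have hpos := one_sub_two_mul_add_sq_pos hr2 (inner_mem_Icc_of_mem_sphere he θ)
    have hsq : ‖x - r • (θ : E)‖ ^ 2 = ‖x‖ ^ 2 *
        (1 - 2 * (r / ‖x‖) * inner ℝ (‖x‖⁻¹ • x) (θ : E) + (r / ‖x‖) ^ 2) := by
      rw [norm_sub_sq_real, inner_smul_right, real_inner_smul_left, norm_smul,
        norm_eq_of_mem_sphere θ, mul_one, norm_eq_abs, sq_abs]
      field_simp
    have hnorm : ‖x - r • (θ : E)‖ = ‖x‖ *
        (1 - 2 * (r / ‖x‖) * inner ℝ (‖x‖⁻¹ • x) (θ : E) + (r / ‖x‖) ^ 2) ^ (1 / 2 : ℝ) := by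
      rw [← sq_eq_sq₀ (norm_nonneg _) (by positivity), hsq, mul_pow, ← sqrt_eq_rpow,
        sq_sqrt hpos.le]
    rw [hnorm, mul_pow, mul_inv, ← rpow_natCast ((_ : ℝ) ^ (1 / 2 : ℝ)), ← rpow_mul hpos.le,
      ← rpow_neg hpos.le]
    congr 2
    ring
  simp only [h]
  refine ⟨(continuous_const.mul (continuous_one_sub_two_mul_add_sq_rpow he _
    hr2)).integrable_of_hasCompactSupport (.of_compactSpace _), ?_⟩
  rw [integral_const_mul, integral_toSphere_poisson_kernel he hE hr1, mul_inv]
  ring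

/-- The surface area of the unit sphere. -/
theorem toSphere_real_univ_eq [Nontrivial E] : (volume : Measure E).toSphere.real univ =
    2 * π ^ ((Module.finrank ℝ E : ℝ) / 2) / Gamma ((Module.finrank ℝ E : ℝ) / 2) := by
  have hpos : (0 : ℝ) < Module.finrank ℝ E := by exact_mod_cast Module.finrank_pos
  have hG : 0 < Gamma ((Module.finrank ℝ E : ℝ) / 2) := Gamma_pos_of_pos (by positivity)
  rw [Measure.toSphere_real_apply_univ, measureReal_def, InnerProductSpace.volume_ball,
    Gamma_add_one (by positivity), sqrt_eq_rpow, ← rpow_natCast (π ^ (1 / 2 : ℝ)),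
    ← rpow_mul pi_pos.le]
  simp only [ENNReal.ofReal_one, one_pow, one_mul]
  rw [ENNReal.toReal_ofReal (by positivity), one_div_mul_eq_div]
  field_simp

/-- Integrating a radial weight against `‖x - y‖ ^ (-d)` over the punctured ball of radius `‖x‖`. -/
theorem setIntegral_radial_div_norm_sub_pow {x : E} (hE : 2 ≤ Module.finrank ℝ E)
    {w : ℝ → ℝ} (hw : Measurable w) (hw0 : ∀ r, 0 < r → r < ‖x‖ → 0 ≤ w r) :
    ∫ y in {y : E | 0 < ‖y‖ ∧ ‖y‖ < ‖x‖}, w ‖y‖ / ‖x - y‖ ^ Module.finrank ℝ E =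
      (volume : Measure E).toSphere.real univ * ∫ r in Ioo 0 ‖x‖,
        r ^ (Module.finrank ℝ E - 1) * w r *
          (‖x‖ ^ Module.finrank ℝ E * (1 - (r / ‖x‖) ^ 2))⁻¹ := by
  have : Nontrivial E := Module.nontrivial_of_finrank_pos (R := ℝ) (by lia)
  set A := {y : E | 0 < ‖y‖ ∧ ‖y‖ < ‖x‖} with hA
  have hAm : MeasurableSet A :=
    (measurableSet_lt measurable_const measurable_norm).inter
      (measurableSet_lt measurable_norm measurable_const)
  have hone : ∀ r ∈ Ioo 0 ‖x‖, 0 < 1 - (r / ‖x‖) ^ 2 := fun r hr => by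
    have h1 : r / ‖x‖ < 1 := (div_lt_one (hr.1.trans hr.2)).2 hr.2
    have h0 : 0 < r / ‖x‖ := div_pos hr.1 (hr.1.trans hr.2)
    nlinarith
  rw [← integral_const_mul, integral_eq_lintegral_of_nonneg_ae, integral_eq_lintegral_of_nonneg_ae]
  · congr 1
    rw [← lintegral_indicator hAm, lintegral_eq_lintegral_Ioi_toSphere
      (Measurable.indicator (by fun_prop) hAm), ← Ioi_inter_Iio, inter_comm,
      ← Measure.restrict_restrict measurableSet_Iio, ← lintegral_indicator measurableSet_Iio]
    refine setLIntegral_congr_fun measurableSet_Ioi fun r (hr0 : 0 < r) => ?_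
    have hnorm : ∀ θ : sphere (0 : E) 1, ‖r • (θ : E)‖ = r := fun θ => by
      rw [norm_smul, norm_eq_of_mem_sphere θ, mul_one, norm_of_nonneg hr0.le]
    by_cases hr : r < ‖x‖
    · obtain ⟨hint, hval⟩ := integral_toSphere_inv_norm_sub_pow hE hr0.le hr
      have hmem : ∀ θ : sphere (0 : E) 1, r • (θ : E) ∈ A := fun θ => by
        simp only [hA, mem_ofPred_eq, hnorm]
        exact ⟨hr0, hr⟩
      simp only [indicator_of_mem (hmem _), indicator_of_mem (mem_Iio.2 hr), hnorm, div_eq_mul_inv]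
      rw [← ofReal_integral_eq_lintegral_ofReal (hint.const_mul _)
        (.of_forall fun θ => mul_nonneg (hw0 r hr0 hr) (by positivity)), integral_const_mul, hval,
        ← ENNReal.ofReal_mul (by positivity), div_eq_mul_inv]
      congr 1
      ring
    · have hmem : ∀ θ : sphere (0 : E) 1, r • (θ : E) ∉ A := fun θ => by
        simp only [hA, mem_ofPred_eq, hnorm]
        exact fun h => hr h.2
      simp [indicator_of_notMem (hmem _), hr]
  · filter_upwards [ae_restrict_mem measurableSet_Ioo] with r hr
    have := hone r hr
    have := hw0 r hr.1 hr.2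
    have := hr.1
    simp only [Pi.zero_apply]
    positivity
  · exact Measurable.aestronglyMeasurable (by fun_prop)
  · filter_upwards [ae_restrict_mem hAm] with y hy
    exact div_nonneg (hw0 _ hy.1 hy.2) (by positivity)
  · exact Measurable.aestronglyMeasurable (by fun_prop)

end SphericalIntegrals

/-- Euler's beta integral over the reals. -/
theorem integral_Ioo_rpow_mul_one_sub_rpow {u v : ℝ} (hu : 0 < u) (hv : 0 < v) :
    ∫ t in Ioo (0 : ℝ) 1, t ^ (u - 1) * (1 - t) ^ (v - 1) =
      Gamma u * Gamma v / Gamma (u + v) := by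
  rw [← ProbabilityTheory.beta, ProbabilityTheory.beta_eq_betaIntegralReal u v hu hv,
    Complex.betaIntegral, intervalIntegral.integral_of_le zero_le_one,
    ← integral_Ioc_eq_integral_Ioo, ← RCLike.re_to_complex, ← integral_re]
  · refine setIntegral_congr_fun measurableSet_Ioc fun t ht => ?_
    norm_cast
    rw [← Complex.ofReal_cpow ht.1.le, ← Complex.ofReal_cpow (sub_nonneg.2 ht.2),
      RCLike.re_to_complex, Complex.re_mul_ofReal, Complex.ofReal_re]
  · exact (intervalIntegrable_iff_integrableOn_Ioc_of_le zero_le_one).1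
      (Complex.betaIntegral_convergent (by simpa) (by simpa))

/-- The substitution `t = (r / ρ) ^ 2`. -/
theorem setIntegral_Ioo_sq_div {ρ : ℝ} (hρ : 0 < ρ) (G : ℝ → ℝ) :
    ∫ r in Ioo 0 ρ, 2 * r / ρ ^ 2 * G ((r / ρ) ^ 2) = ∫ t in Ioo (0 : ℝ) 1, G t := by
  have himage : (fun r => (r / ρ) ^ 2) '' Ioo 0 ρ = Ioo (0 : ℝ) 1 := by
    ext t
    constructor
    · rintro ⟨r, hr, rfl⟩
      have h0 : 0 < r / ρ := div_pos hr.1 hρ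
      exact ⟨by positivity, pow_lt_one₀ h0.le ((div_lt_one hρ).2 hr.2) two_ne_zero⟩
    · intro ht
      refine ⟨ρ * √t, ⟨mul_pos hρ (sqrt_pos.2 ht.1), ?_⟩, ?_⟩
      · exact mul_lt_of_lt_one_right hρ ((sqrt_lt' one_pos).2 (by simpa using ht.2))
      · simp only
        rw [mul_div_cancel_left₀ _ hρ.ne', sq_sqrt ht.1.le]
  have hinj : InjOn (fun r => (r / ρ) ^ 2) (Ioo 0 ρ) := fun a ha b hb hab => by
    have h := (sq_eq_sq₀ (div_pos ha.1 hρ).le (div_pos hb.1 hρ).le).1 hab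
    exact (div_left_inj' hρ.ne').1 h
  rw [← himage, integral_image_eq_integral_abs_deriv_smul measurableSet_Ioo
    (f' := fun r => 2 * r / ρ ^ 2) (fun r _ => ?_) hinj]
  · refine setIntegral_congr_fun measurableSet_Ioo fun r hr => ?_
    have : 0 < r := hr.1
    simp only [smul_eq_mul]
    rw [abs_of_pos (by positivity)]
  · refine ((((hasDerivAt_id r).div_const ρ).pow 2).congr_deriv ?_).hasDerivWithinAt
    simp only [id, Nat.cast_ofNat, Nat.add_one_sub_one, pow_one]
    field_simp

theorem radial_integrand_eq_beta_integrand {d : ℕ} (hd : 1 ≤ d) (α : ℝ) {ρ r : ℝ} (hr : r ∈ Ioo 0 ρ) :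
    r ^ (d - 1) * ((ρ ^ 2 - r ^ 2) ^ (α / 2) / r ^ α) * (ρ ^ d * (1 - (r / ρ) ^ 2))⁻¹ =
      1 / 2 * (2 * r / ρ ^ 2 * (((r / ρ) ^ 2) ^ (((d : ℝ) - α) / 2 - 1) *
        (1 - (r / ρ) ^ 2) ^ (α / 2 - 1))) := by
  have hρ : 0 < ρ := hr.1.trans hr.2
  have hone : 0 < 1 - (r / ρ) ^ 2 := by
    have := pow_lt_one₀ (div_pos hr.1 hρ).le ((div_lt_one hρ).2 hr.2) two_ne_zero
    linarith
  obtain ⟨t, rfl⟩ : ∃ t, r = ρ * t := ⟨r / ρ, by field_simp⟩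
  have ht : 0 < t := pos_of_mul_pos_right hr.1 hρ.le
  obtain ⟨k, rfl⟩ := Nat.exists_eq_add_of_le' hd
  rw [mul_div_cancel_left₀ _ hρ.ne'] at *
  have hsq : ∀ a : ℝ, 0 < a → (a ^ 2) ^ (α / 2) = a ^ α := fun a ha => by
    rw [← rpow_natCast a 2, ← rpow_mul ha.le]
    congr 1
    push_cast
    ring
  have h1 : (t ^ 2) ^ ((((k + 1 : ℕ) : ℝ) - α) / 2 - 1) = t ^ k / t / t ^ α := by
    rw [← rpow_natCast t 2, ← rpow_mul ht.le, ← rpow_natCast t k, ← rpow_sub_one ht.ne',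
      ← rpow_sub ht]
    congr 1
    push_cast
    ring
  rw [h1, show ρ ^ 2 - (ρ * t) ^ 2 = ρ ^ 2 * (1 - t ^ 2) by ring, mul_rpow (by positivity) hone.le,
    hsq ρ hρ, mul_rpow hρ.le ht.le, rpow_sub_one hone.ne', Nat.add_sub_cancel]
  have hρα : 0 < ρ ^ α := rpow_pos_of_pos hρ α
  have htα : 0 < t ^ α := rpow_pos_of_pos ht α
  field_simp
  ring

theorem closest_reach_density_total_mass
    (d : ℕ) (hd : 2 ≤ d) (α : ℝ) (hα0 : 0 < α) (hα2 : α < 2)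
    (x : EuclideanSpace ℝ (Fin d)) (hx : x ≠ 0) :
    ∫ y in {y : EuclideanSpace ℝ (Fin d) | 0 < ‖y‖ ∧ ‖y‖ < ‖x‖},
        (‖x‖ ^ 2 - ‖y‖ ^ 2) ^ (α / 2) / (‖x - y‖ ^ d * ‖y‖ ^ α)
      = π ^ ((d : ℝ) / 2) * Real.Gamma (((d : ℝ) - α) / 2) * Real.Gamma (α / 2) /
          Real.Gamma ((d : ℝ) / 2) ^ 2 := by
  have hρ : 0 < ‖x‖ := norm_pos_iff.2 hx
  have hd' : (2 : ℝ) ≤ d := by exact_mod_cast hd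
  have hfin : Module.finrank ℝ (EuclideanSpace ℝ (Fin d)) = d := finrank_euclideanSpace_fin
  have : Nontrivial (EuclideanSpace ℝ (Fin d)) := ⟨x, 0, hx⟩
  have h := setIntegral_radial_div_norm_sub_pow (x := x) (hfin.symm ▸ hd)
    (w := fun r => (‖x‖ ^ 2 - r ^ 2) ^ (α / 2) / r ^ α) (by fun_prop)
    (fun r hr0 hr => div_nonneg (rpow_nonneg (by nlinarith) _) (by positivity))
  rw [toSphere_real_univ_eq, hfin, setIntegral_congr_fun measurableSet_Ioo
    (fun r hr => radial_integrand_eq_beta_integrand (one_le_two.trans hd) α hr), integral_const_mul,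
    setIntegral_Ioo_sq_div hρ
      (fun t => t ^ (((d : ℝ) - α) / 2 - 1) * (1 - t) ^ (α / 2 - 1)),
    integral_Ioo_rpow_mul_one_sub_rpow (by linarith) (by linarith),
    show ((d : ℝ) - α) / 2 + α / 2 = d / 2 by ring] at h
  have hcongr : ∀ y : EuclideanSpace ℝ (Fin d),
      (‖x‖ ^ 2 - ‖y‖ ^ 2) ^ (α / 2) / (‖x - y‖ ^ d * ‖y‖ ^ α) =
      (‖x‖ ^ 2 - ‖y‖ ^ 2) ^ (α / 2) / ‖y‖ ^ α / ‖x - y‖ ^ d := fun y => by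
    rw [div_div, mul_comm]
  simp only [hcongr]
  rw [h]
  have hG : 0 < Gamma ((d : ℝ) / 2) := Gamma_pos_of_pos (by positivity)
  field_simp
end

section
/- For every x ∈ ℝ^d and every real r with 0 < r < |x|, ∫_{r<|y|<|x|} (|x|^2 - |y|^2)^{α/2} / (|x - y|^d |y|^α) dy = (π^{d/2} / Γ(d/2)) ∫_0^{(|x|^2/r^2)-1} (u+1)^{-d/2} u^{α/2-1} du. (This identity equates the mass that the closest-reach density of Theorem 1.1 assigns to the annulus {r < |y| < |x|} with the explicit Blumenthal–Getoor–Ray formula for the probability of never entering the ball of radius r.) -/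
open MeasureTheory Real Set

section Polar

variable {E : Type*} [NormedAddCommGroup E] [NormedSpace ℝ E]
  [FiniteDimensional ℝ E] [MeasurableSpace E] [BorelSpace E]

/-- Integration in polar coordinates for `ℝ≥0∞`-valued functions. -/
theorem lintegral_eq_lintegral_toSphere [Nontrivial E] (μ : Measure E) [μ.IsAddHaarMeasure]
    {f : E → ENNReal} (hf : Measurable f) :
    ∫⁻ z, f z ∂μ = ∫⁻ v : Metric.sphere (0 : E) 1, (∫⁻ s in Ioi (0 : ℝ),
      ENNReal.ofReal (s ^ (Module.finrank ℝ E - 1)) * f (s • (v : E))) ∂μ.toSphere := by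
  have hm : Measurable fun p : Metric.sphere (0 : E) 1 × Ioi (0 : ℝ) =>
      f ((p.2 : ℝ) • (p.1 : E)) := by fun_prop
  calc ∫⁻ z, f z ∂μ = ∫⁻ z : ({0}ᶜ : Set E), f z ∂(μ.comap (↑)) := by
        rw [lintegral_subtype_comap (measurableSet_singleton _).compl, restrict_compl_singleton]
    _ = ∫⁻ p, f ((p.2 : ℝ) • (p.1 : E))
          ∂(μ.toSphere.prod (.volumeIoiPow (Module.finrank ℝ E - 1))) := by
        rw [← μ.measurePreserving_homeomorphUnitSphereProd.lintegral_comp hm]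
        refine lintegral_congr fun z => ?_
        have hz : ‖(z : E)‖ ≠ 0 := norm_ne_zero_iff.2 z.2
        simp [smul_smul, hz]
    _ = _ := by
        rw [lintegral_prod _ hm.aemeasurable]
        refine lintegral_congr fun v => ?_
        rw [Measure.volumeIoiPow, lintegral_withDensity_eq_lintegral_mul _ (by fun_prop)
          (show Measurable fun s : Ioi (0 : ℝ) => f ((s : ℝ) • (v : E)) by fun_prop)]
        exact lintegral_subtype_comap measurableSet_Ioi fun s : ℝ =>
          ENNReal.ofReal (s ^ (Module.finrank ℝ E - 1)) * f (s • (v : E))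

/-- Integration in polar coordinates over an annulus centred at the origin. -/
theorem setLIntegral_annulus_eq_lintegral_toSphere [Nontrivial E] (μ : Measure E)
    [μ.IsAddHaarMeasure] {f : E → ENNReal} (hf : Measurable f) {a b : ℝ} (ha : 0 ≤ a) :
    ∫⁻ z in {z : E | a < ‖z‖ ∧ ‖z‖ < b}, f z ∂μ =
      ∫⁻ v : Metric.sphere (0 : E) 1, (∫⁻ s in Ioo a b,
        ENNReal.ofReal (s ^ (Module.finrank ℝ E - 1)) * f (s • (v : E))) ∂μ.toSphere := by
  have hA : MeasurableSet {z : E | a < ‖z‖ ∧ ‖z‖ < b} :=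
    (measurableSet_lt measurable_const measurable_norm).inter
      (measurableSet_lt measurable_norm measurable_const)
  rw [← lintegral_indicator hA, lintegral_eq_lintegral_toSphere μ (hf.indicator hA)]
  refine lintegral_congr fun v => ?_
  rw [← lintegral_indicator measurableSet_Ioi, ← lintegral_indicator measurableSet_Ioo]
  refine lintegral_congr fun s => ?_
  have hv : ‖(v : E)‖ = 1 := by simp
  by_cases hs : 0 < s
  · simp [indicator, norm_smul, abs_of_pos hs, hs]
  · simp [indicator, hs, show ¬ a < s by grind]

/-- Centring an integral at a point and symmetrising it under the reflection in that point. -/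
theorem two_mul_lintegral_eq_lintegral_add_reflect (μ : Measure E) [μ.IsAddHaarMeasure]
    {f : E → ENNReal} (hf : Measurable f) (c : E) :
    2 * ∫⁻ z, f z ∂μ = ∫⁻ w, (f (c + w) + f (c - w)) ∂μ := by
  rw [lintegral_add_left (by fun_prop), lintegral_add_left_eq_self f c,
    lintegral_sub_left_eq_self f c, two_mul]

end Polar

theorem Real.sq_sub_sq_div_rpow {R τ : ℝ} (hR : 0 < R) (hτ : 1 < τ) (α : ℝ) :
    (R ^ 2 - (R / τ) ^ 2) ^ (α / 2) = (R / τ) ^ α * (τ ^ 2 - 1) ^ (α / 2) := by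
  have h0 : 0 < τ := by linarith
  have h1 : R ^ 2 - (R / τ) ^ 2 = (R / τ) ^ 2 * (τ ^ 2 - 1) := by field_simp
  rw [h1, mul_rpow (by positivity) (by nlinarith), ← rpow_natCast, ← rpow_mul (by positivity)]
  congr 2
  push_cast
  ring

/-- The radial substitution `s = R / τ`. -/
theorem setLIntegral_Ioo_comp_div {R r : ℝ} (hr : 0 < r) (hrR : r < R) (g : ℝ → ENNReal) :
    ∫⁻ s in Ioo r R, g s = ∫⁻ τ in Ioo 1 (R / r), ENNReal.ofReal (R / τ ^ 2) * g (R / τ) := by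
  have hR : 0 < R := hr.trans hrR
  have himg : (fun τ => R / τ) '' Ioo 1 (R / r) = Ioo r R := by
    ext s
    simp only [mem_image, mem_Ioo]
    constructor
    · rintro ⟨τ, ⟨h1, h2⟩, rfl⟩
      have h0 : 0 < τ := by linarith
      rw [lt_div_iff₀ hr] at h2
      exact ⟨by rw [lt_div_iff₀ h0]; linarith, by rw [div_lt_iff₀ h0]; nlinarith⟩
    · rintro ⟨h1, h2⟩
      have h0 : 0 < s := by linarith
      refine ⟨R / s, ⟨by rwa [lt_div_iff₀ h0, one_mul], by gcongr⟩, by field_simp⟩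
  rw [← himg, lintegral_image_eq_lintegral_abs_deriv_mul (f' := fun τ => -R / τ ^ 2)
    measurableSet_Ioo]
  · refine setLIntegral_congr_fun measurableSet_Ioo fun τ _ => ?_
    rw [abs_div, abs_neg, abs_of_pos hR, abs_of_nonneg (sq_nonneg τ)]
  · intro τ hτ
    have h0 : τ ≠ 0 := by linarith [hτ.1]
    simpa [Pi.div_def] using
      ((hasDerivAt_const τ R).div (hasDerivAt_id τ) h0).hasDerivWithinAt
  · intro a ha b hb hab
    have h0 : a ≠ 0 := by linarith [ha.1]
    have h1 : b ≠ 0 := by linarith [hb.1]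
    field_simp at hab
    exact hab.symm

/-- The substitution `u = ρ² + 2 q ρ`, inverted as `ρ = √(u + q²) - q`. -/
theorem setLIntegral_Ioi_indicator_quadratic (q U : ℝ) (g : ℝ → ENNReal) :
    ∫⁻ ρ in Ioi (0 : ℝ), {ρ : ℝ | 0 < ρ ^ 2 + 2 * q * ρ ∧ ρ ^ 2 + 2 * q * ρ < U}.indicator g ρ =
      ∫⁻ u in Ioo 0 U, ENNReal.ofReal (1 / (2 * √(u + q ^ 2))) * g (√(u + q ^ 2) - q) := by
  have hB : MeasurableSet {ρ : ℝ | 0 < ρ ^ 2 + 2 * q * ρ ∧ ρ ^ 2 + 2 * q * ρ < U} := by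
    measurability
  have himg : (fun u => √(u + q ^ 2) - q) '' Ioo 0 U =
      {ρ : ℝ | 0 < ρ ^ 2 + 2 * q * ρ ∧ ρ ^ 2 + 2 * q * ρ < U} ∩ Ioi 0 := by
    ext ρ
    simp only [mem_image, mem_Ioo, mem_inter_iff, mem_ofPred_eq, mem_Ioi]
    constructor
    · rintro ⟨u, ⟨h1, h2⟩, rfl⟩
      have hs : √(u + q ^ 2) ^ 2 = u + q ^ 2 := sq_sqrt (by positivity)
      have hq : |q| < √(u + q ^ 2) := by rw [lt_sqrt (abs_nonneg q), sq_abs]; linarith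
      have := le_abs_self q
      exact ⟨⟨by nlinarith, by nlinarith⟩, by linarith⟩
    · rintro ⟨⟨h1, h2⟩, h3⟩
      refine ⟨ρ ^ 2 + 2 * q * ρ, ⟨h1, h2⟩, ?_⟩
      have h4 : 0 < ρ + 2 * q := by
        by_contra! h
        nlinarith
      rw [show ρ ^ 2 + 2 * q * ρ + q ^ 2 = (ρ + q) ^ 2 by ring, sqrt_sq (by linarith)]
      ring
  rw [lintegral_indicator hB, Measure.restrict_restrict hB, ← himg,
    lintegral_image_eq_lintegral_abs_deriv_mul (f' := fun u => 1 / (2 * √(u + q ^ 2)))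
      measurableSet_Ioo]
  · refine setLIntegral_congr_fun measurableSet_Ioo fun u _ => ?_
    rw [abs_of_nonneg (by positivity)]
  · intro u hu
    have h0 : u + q ^ 2 ≠ 0 := by nlinarith [hu.1]
    exact ((((hasDerivAt_id u).add_const (q ^ 2)).sqrt h0).sub_const q).hasDerivWithinAt
  · intro a ha b hb hab
    have h1 : √(a + q ^ 2) = √(b + q ^ 2) := by simpa using hab
    rw [sqrt_inj (by nlinarith [ha.1]) (by nlinarith [hb.1])] at h1
    linarith

/-- The integral along a ray issued from a unit vector `e` in the unit direction `v`, in the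
variable `u = ‖e + ρ v‖² - 1`. -/
theorem lintegral_ray_annulus_kernel {F : Type*} [NormedAddCommGroup F] [InnerProductSpace ℝ F]
    {e v : F} (he : ‖e‖ = 1) (hv : ‖v‖ = 1) {d : ℕ} (hd : d ≠ 0) (α : ℝ) {T : ℝ} (hT : 0 ≤ T) :
    ∫⁻ ρ in Ioi (0 : ℝ), ENNReal.ofReal (ρ ^ (d - 1)) *
        {z : F | 1 < ‖z‖ ∧ ‖z‖ < T}.indicator
          (fun z => ENNReal.ofReal ((‖z‖ ^ 2 - 1) ^ (α / 2) / (‖z‖ ^ d * ‖z - e‖ ^ d)))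
          (e + ρ • v) =
      ∫⁻ u in Ioo 0 (T ^ 2 - 1), ENNReal.ofReal ((u + 1) ^ (-(d : ℝ) / 2) * u ^ (α / 2 - 1) *
        ((√(u + inner ℝ e v ^ 2) + inner ℝ e v) / (2 * √(u + inner ℝ e v ^ 2)))) := by
  set q : ℝ := inner ℝ e v with hq
  have hnorm (ρ : ℝ) : ‖e + ρ • v‖ ^ 2 = 1 + (ρ ^ 2 + 2 * q * ρ) := by
    rw [norm_add_sq_real, inner_smul_right, norm_smul, he, hv, mul_pow, norm_eq_abs, sq_abs, ← hq]
    ring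
  have hmem (ρ : ℝ) : e + ρ • v ∈ {z : F | 1 < ‖z‖ ∧ ‖z‖ < T} ↔
      0 < ρ ^ 2 + 2 * q * ρ ∧ ρ ^ 2 + 2 * q * ρ < T ^ 2 - 1 := by
    rw [mem_ofPred_eq, ← pow_lt_pow_iff_left₀ (norm_nonneg _) hT two_ne_zero,
      ← one_lt_sq_iff₀ (norm_nonneg _), hnorm]
    constructor <;> rintro ⟨h1, h2⟩ <;> constructor <;> linarith
  have hray : ∀ ρ ∈ Ioi (0 : ℝ), ENNReal.ofReal (ρ ^ (d - 1)) *
        {z : F | 1 < ‖z‖ ∧ ‖z‖ < T}.indicator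
          (fun z => ENNReal.ofReal ((‖z‖ ^ 2 - 1) ^ (α / 2) / (‖z‖ ^ d * ‖z - e‖ ^ d)))
          (e + ρ • v) =
      {ρ : ℝ | 0 < ρ ^ 2 + 2 * q * ρ ∧ ρ ^ 2 + 2 * q * ρ < T ^ 2 - 1}.indicator
        (fun ρ => ENNReal.ofReal ((ρ ^ 2 + 2 * q * ρ + 1) ^ (-(d : ℝ) / 2) *
          (ρ ^ 2 + 2 * q * ρ) ^ (α / 2) / ρ)) ρ := by
    intro ρ (hρ : 0 < ρ)
    by_cases h : 0 < ρ ^ 2 + 2 * q * ρ ∧ ρ ^ 2 + 2 * q * ρ < T ^ 2 - 1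
    · rw [indicator_of_mem ((hmem ρ).2 h), indicator_of_mem (by exact h),
        ← ENNReal.ofReal_mul (by positivity)]
      congr 1
      have h1 : ‖e + ρ • v‖ ^ d = (ρ ^ 2 + 2 * q * ρ + 1) ^ ((d : ℝ) / 2) := by
        rw [add_comm _ (1 : ℝ), ← hnorm, ← rpow_natCast _ 2, ← rpow_mul (norm_nonneg _),
          ← rpow_natCast]
        congr 1
        push_cast
        ring
      have h2 : ‖e + ρ • v - e‖ = ρ := by simp [norm_smul, hv, abs_of_pos hρ]
      have h3 : 0 < (ρ ^ 2 + 2 * q * ρ + 1) ^ ((d : ℝ) / 2) := rpow_pos_of_pos (by linarith) _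
      have h4 : ρ ^ d = ρ ^ (d - 1) * ρ := by rw [← pow_succ, Nat.sub_add_cancel (by lia)]
      rw [h2, h1, hnorm, neg_div, rpow_neg (by linarith), h4, add_sub_cancel_left]
      field_simp
    · rw [indicator_of_notMem (mt (hmem ρ).1 h), indicator_of_notMem (by exact h), mul_zero]
  rw [setLIntegral_congr_fun measurableSet_Ioi hray, setLIntegral_Ioi_indicator_quadratic]
  refine setLIntegral_congr_fun measurableSet_Ioo fun u hu => ?_
  have hu0 : 0 < u := hu.1
  rw [← ENNReal.ofReal_mul (by positivity)]
  congr 1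
  have hs : √(u + q ^ 2) ^ 2 = u + q ^ 2 := sq_sqrt (by positivity)
  have hw : |q| < √(u + q ^ 2) := by rw [lt_sqrt (abs_nonneg q), sq_abs]; linarith
  have hw1 : 0 < √(u + q ^ 2) - q := by linarith [le_abs_self q]
  have hw2 : 0 < √(u + q ^ 2) := by positivity
  have hu' : (√(u + q ^ 2) - q) ^ 2 + 2 * q * (√(u + q ^ 2) - q) = u := by linear_combination hs
  have hp : u ^ (α / 2) = u ^ (α / 2 - 1) * u := by
    rw [← rpow_add_one hu0.ne', sub_add_cancel]
  rw [hu', hp]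
  field_simp
  linear_combination -hs

/-- The integrals along opposite rays issued from a unit vector add up to a quantity that does not
depend on their direction. -/
theorem lintegral_opposite_rays_annulus_kernel {F : Type*} [NormedAddCommGroup F]
    [InnerProductSpace ℝ F] {e v : F} (he : ‖e‖ = 1) (hv : ‖v‖ = 1) {d : ℕ} (hd : d ≠ 0) (α : ℝ)
    {T : ℝ} (hT : 0 ≤ T) {H : F → ENNReal}
    (hH : H = {z : F | 1 < ‖z‖ ∧ ‖z‖ < T}.indicator
      fun z => ENNReal.ofReal ((‖z‖ ^ 2 - 1) ^ (α / 2) / (‖z‖ ^ d * ‖z - e‖ ^ d)))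
    (hHm : Measurable fun ρ : ℝ => H (e + ρ • v)) :
    ∫⁻ ρ in Ioi (0 : ℝ), ENNReal.ofReal (ρ ^ (d - 1)) * (H (e + ρ • v) + H (e - ρ • v)) =
      ∫⁻ u in Ioo 0 (T ^ 2 - 1), ENNReal.ofReal ((u + 1) ^ (-(d : ℝ) / 2) * u ^ (α / 2 - 1)) := by
  have hm : Measurable fun ρ : ℝ => ENNReal.ofReal (ρ ^ (d - 1)) * H (e + ρ • v) :=
    Measurable.mul (by fun_prop) hHm
  simp_rw [mul_add]
  rw [lintegral_add_left hm]
  simp_rw [sub_eq_add_neg e, ← smul_neg]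
  rw [hH, lintegral_ray_annulus_kernel he hv hd α hT,
    lintegral_ray_annulus_kernel he (by rwa [norm_neg]) hd α hT, ← lintegral_add_left (by fun_prop)]
  refine setLIntegral_congr_fun measurableSet_Ioo fun u hu => ?_
  have hu0 : 0 < u := hu.1
  rw [inner_neg_right, neg_sq]
  set q : ℝ := inner ℝ e v
  have hw : |q| < √(u + q ^ 2) := by rw [lt_sqrt (abs_nonneg q), sq_abs]; linarith
  have hw1 : 0 < √(u + q ^ 2) - q := by linarith [le_abs_self q]
  have hw2 : 0 < √(u + q ^ 2) + q := by linarith [neg_abs_le q]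
  have hw3 : 0 < √(u + q ^ 2) := by positivity
  rw [← sub_eq_add_neg, ← ENNReal.ofReal_add (by positivity) (by positivity)]
  congr 1
  field_simp
  ring

/-- The total mass of the surface measure of the unit sphere. -/
theorem EuclideanSpace.toSphere_volume_univ {d : ℕ} (hd : d ≠ 0) :
    (volume : Measure (EuclideanSpace ℝ (Fin d))).toSphere univ =
      ENNReal.ofReal (2 * (π ^ ((d : ℝ) / 2) / Real.Gamma ((d : ℝ) / 2))) := by
  have : Nonempty (Fin d) := ⟨⟨0, by lia⟩⟩
  have hd0 : (0 : ℝ) < d := by positivity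
  have hG : 0 < Real.Gamma ((d : ℝ) / 2) := Real.Gamma_pos_of_pos (by positivity)
  rw [Measure.toSphere_apply_univ, EuclideanSpace.volume_ball, finrank_euclideanSpace,
    Fintype.card_fin, ENNReal.ofReal_one, one_pow, one_mul, ← ENNReal.ofReal_natCast,
    ← ENNReal.ofReal_mul (by positivity), Real.Gamma_add_one (by positivity), sqrt_eq_rpow,
    ← rpow_natCast, ← rpow_mul pi_pos.le]
  congr 1
  rw [show 1 / 2 * (d : ℝ) = d / 2 by ring]
  field_simp

/-- Radial inversion turns the closest-reach mass into an integral over an exterior annulus, with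
the pole at a unit vector. -/
theorem setLIntegral_closest_reach_eq_exterior {d : ℕ} (hd : d ≠ 0) (α : ℝ)
    {e : EuclideanSpace ℝ (Fin d)} (he : ‖e‖ = 1) {R r : ℝ} (hr : 0 < r) (hrR : r < R) :
    ∫⁻ y in {y : EuclideanSpace ℝ (Fin d) | r < ‖y‖ ∧ ‖y‖ < R},
        ENNReal.ofReal ((R ^ 2 - ‖y‖ ^ 2) ^ (α / 2) / (‖R • e - y‖ ^ d * ‖y‖ ^ α)) =
      ∫⁻ z in {z : EuclideanSpace ℝ (Fin d) | 1 < ‖z‖ ∧ ‖z‖ < R / r},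
        ENNReal.ofReal ((‖z‖ ^ 2 - 1) ^ (α / 2) / (‖z‖ ^ d * ‖z - e‖ ^ d)) := by
  have : Nontrivial (EuclideanSpace ℝ (Fin d)) := ⟨e, 0, by rintro rfl; simp at he⟩
  have hR : 0 < R := hr.trans hrR
  rw [setLIntegral_annulus_eq_lintegral_toSphere _ (by fun_prop) hr.le,
    setLIntegral_annulus_eq_lintegral_toSphere _ (by fun_prop) zero_le_one]
  refine lintegral_congr fun v => ?_
  have hv : ‖(v : EuclideanSpace ℝ (Fin d))‖ = 1 := by simp
  rw [setLIntegral_Ioo_comp_div hr hrR]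
  refine setLIntegral_congr_fun measurableSet_Ioo fun τ hτ => ?_
  have hτ1 : 1 < τ := hτ.1
  have hτ0 : 0 < τ := by linarith
  have hs : 0 < R / τ := by positivity
  have hflip : ‖R • e - (R / τ) • (v : EuclideanSpace ℝ (Fin d))‖ =
      R / τ * ‖τ • (v : EuclideanSpace ℝ (Fin d)) - e‖ := by
    have h1 : ‖τ • e - (v : EuclideanSpace ℝ (Fin d))‖ =
        ‖τ • (v : EuclideanSpace ℝ (Fin d)) - e‖ := by
      rw [← sq_eq_sq₀ (norm_nonneg _) (norm_nonneg _), norm_sub_sq_real, norm_sub_sq_real,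
        inner_smul_left, inner_smul_left, norm_smul, norm_smul, he, hv, real_inner_comm]
    rw [← h1, ← abs_of_pos hs, ← norm_eq_abs, ← norm_smul, norm_eq_abs, abs_of_pos hs, smul_sub,
      smul_smul, div_mul_cancel₀ _ hτ0.ne']
  have hne : 0 < ‖τ • (v : EuclideanSpace ℝ (Fin d)) - e‖ := by
    have := norm_sub_norm_le (τ • (v : EuclideanSpace ℝ (Fin d))) e
    rw [norm_smul, hv, he, norm_eq_abs, abs_of_pos hτ0] at this
    linarith
  rw [finrank_euclideanSpace, Fintype.card_fin, ← ENNReal.ofReal_mul (by positivity),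
    ← ENNReal.ofReal_mul (by positivity), ← ENNReal.ofReal_mul (by positivity), hflip]
  congr 1
  rw [norm_smul, norm_smul, hv, mul_one, mul_one, norm_eq_abs, norm_eq_abs, abs_of_pos hs,
    abs_of_pos hτ0, Real.sq_sub_sq_div_rpow hR hτ1]
  have hsα : 0 < (R / τ) ^ α := rpow_pos_of_pos hs _
  have hpow (a : ℝ) : a ^ d = a ^ (d - 1) * a := by rw [← pow_succ, Nat.sub_add_cancel (by lia)]
  have hsd : 0 < (R / τ) ^ (d - 1) := by positivity
  rw [mul_pow, hpow (R / τ), hpow τ, show R / τ ^ 2 = R / τ / τ by field_simp]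
  generalize R / τ = s at *
  field_simp

theorem closest_reach_mass_of_annulus
    (d : ℕ) (hd : 2 ≤ d) (α : ℝ) (hα0 : 0 < α) (hα2 : α < 2)
    (x : EuclideanSpace ℝ (Fin d)) (r : ℝ) (hr : 0 < r) (hrx : r < ‖x‖) :
    ∫ y in {y : EuclideanSpace ℝ (Fin d) | r < ‖y‖ ∧ ‖y‖ < ‖x‖},
        (‖x‖ ^ 2 - ‖y‖ ^ 2) ^ (α / 2) / (‖x - y‖ ^ d * ‖y‖ ^ α)
      = (π ^ ((d : ℝ) / 2) / Real.Gamma ((d : ℝ) / 2)) *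
          ∫ u in Ioo (0 : ℝ) ((‖x‖ ^ 2 / r ^ 2) - 1),
            (u + 1) ^ (-(d : ℝ) / 2) * u ^ (α / 2 - 1) := by
  have hd0 : d ≠ 0 := by lia
  have hx : 0 < ‖x‖ := hr.trans hrx
  have hG : 0 < Real.Gamma ((d : ℝ) / 2) := Real.Gamma_pos_of_pos (by positivity)
  obtain ⟨e, he, hxe⟩ : ∃ e : EuclideanSpace ℝ (Fin d), ‖e‖ = 1 ∧ x = ‖x‖ • e :=
    ⟨‖x‖⁻¹ • x, by simp [norm_smul, hx.ne'], by simp [smul_smul, hx.ne']⟩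
  have : Nontrivial (EuclideanSpace ℝ (Fin d)) := ⟨e, 0, by rintro rfl; simp at he⟩
  have hannulus (a b : ℝ) :
      MeasurableSet {z : EuclideanSpace ℝ (Fin d) | a < ‖z‖ ∧ ‖z‖ < b} :=
    (measurableSet_lt measurable_const measurable_norm).inter
      (measurableSet_lt measurable_norm measurable_const)
  rw [integral_eq_lintegral_of_nonneg_ae, integral_eq_lintegral_of_nonneg_ae]
  rotate_left
  · filter_upwards [ae_restrict_mem measurableSet_Ioo] with u hu
    have := hu.1
    positivity
  · exact Measurable.aestronglyMeasurable (by fun_prop)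
  · filter_upwards [ae_restrict_mem (hannulus r ‖x‖)] with y hy
    have : 0 ≤ ‖x‖ ^ 2 - ‖y‖ ^ 2 := by nlinarith [hy.2, norm_nonneg y]
    positivity
  · exact Measurable.aestronglyMeasurable (by fun_prop)
  set H : EuclideanSpace ℝ (Fin d) → ENNReal :=
    {z : EuclideanSpace ℝ (Fin d) | 1 < ‖z‖ ∧ ‖z‖ < ‖x‖ / r}.indicator
      fun z => ENNReal.ofReal ((‖z‖ ^ 2 - 1) ^ (α / 2) / (‖z‖ ^ d * ‖z - e‖ ^ d)) with hH
  have hHm : Measurable H := Measurable.indicator (by fun_prop) (hannulus _ _)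
  have hL : ∫⁻ y in {y : EuclideanSpace ℝ (Fin d) | r < ‖y‖ ∧ ‖y‖ < ‖x‖},
      ENNReal.ofReal ((‖x‖ ^ 2 - ‖y‖ ^ 2) ^ (α / 2) / (‖x - y‖ ^ d * ‖y‖ ^ α)) = ∫⁻ z, H z := by
    rw [hH, lintegral_indicator (hannulus _ _),
      ← setLIntegral_closest_reach_eq_exterior hd0 α he hr hrx, ← hxe]
  have h2L := two_mul_lintegral_eq_lintegral_add_reflect volume hHm e
  rw [lintegral_eq_lintegral_toSphere volume (f := fun w => H (e + w) + H (e - w)) (by fun_prop),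
    finrank_euclideanSpace,
    Fintype.card_fin, lintegral_congr fun v => lintegral_opposite_rays_annulus_kernel he
      (norm_eq_of_mem_sphere v) hd0 α (by positivity) hH (by fun_prop), lintegral_const,
    EuclideanSpace.toSphere_volume_univ hd0] at h2L
  replace h2L := congrArg ENNReal.toReal h2L
  rw [ENNReal.toReal_mul, ENNReal.toReal_mul, ENNReal.toReal_ofReal (by positivity),
    div_pow] at h2L
  rw [hL]
  simp only [ENNReal.toReal_ofNat] at h2L
  linarith
end

section
/- For every t > 0 and every θ ∈ ℝ^d with |θ| = 1, π^{-d/2} Γ(d/2) ∫_{|y|<e^{-t}} (1 - |y|^2)^{-α/2} |θ - y|^{-d} dy = 2 ∫_t^∞ (1 - e^{-2v})^{-α/2-1} e^{-dv} dv; in particular the left-hand side does not depend on θ. (This identity equates the tail of the excursion-overshoot law of Proposition 5.1 with the tail of the Lévy measure ν of the descending radial ladder height subordinator.) -/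
open MeasureTheory Real Set

section BallGauge

variable {V : Type*} [NormedAddCommGroup V]

lemma one_sub_norm_sq_pos {x : V} (hx : ‖x‖ < 1) : 0 < 1 - ‖x‖ ^ 2 := by
  nlinarith [norm_nonneg x]

variable [InnerProductSpace ℝ V]

/-- The square root in the formula for the gauge of the unit ball seen from the point `x`. -/
noncomputable def ballGaugeRoot (x v : V) : ℝ :=
  √(inner ℝ x v ^ 2 + (1 - ‖x‖ ^ 2) * ‖v‖ ^ 2)

/-- The gauge of the unit ball seen from its point `x`: for `‖x‖ < 1`, the unique `N ≥ 0` such that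
`‖v + N • x‖ = N`. -/
noncomputable def ballGauge (x v : V) : ℝ :=
  (1 - ‖x‖ ^ 2)⁻¹ * (inner ℝ x v + ballGaugeRoot x v)

variable {x : V}

lemma ballGaugeRoot_sq (hx : ‖x‖ < 1) (v : V) :
    ballGaugeRoot x v ^ 2 = inner ℝ x v ^ 2 + (1 - ‖x‖ ^ 2) * ‖v‖ ^ 2 := by
  have := one_sub_norm_sq_pos hx
  exact Real.sq_sqrt (by positivity)

lemma abs_inner_le_ballGaugeRoot (hx : ‖x‖ < 1) (v : V) :
    |inner ℝ x v| ≤ ballGaugeRoot x v := by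
  have := one_sub_norm_sq_pos hx
  refine Real.abs_le_sqrt ?_
  have : 0 ≤ (1 - ‖x‖ ^ 2) * ‖v‖ ^ 2 := by positivity
  linarith

lemma ballGauge_nonneg (hx : ‖x‖ < 1) (v : V) : 0 ≤ ballGauge x v := by
  have h := one_sub_norm_sq_pos hx
  have := (abs_le.1 (abs_inner_le_ballGaugeRoot hx v)).1
  exact mul_nonneg (inv_nonneg.2 h.le) (by linarith)

lemma norm_add_ballGauge_smul (hx : ‖x‖ < 1) (v : V) :
    ‖v + ballGauge x v • x‖ = ballGauge x v := by
  have h := one_sub_norm_sq_pos hx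
  refine (sq_eq_sq₀ (norm_nonneg _) (ballGauge_nonneg hx v)).1 ?_
  have hq := ballGaugeRoot_sq hx v
  have hN : (1 - ‖x‖ ^ 2) * ballGauge x v = inner ℝ x v + ballGaugeRoot x v := by
    rw [ballGauge, mul_inv_cancel_left₀ h.ne']
  rw [norm_add_sq_real, norm_smul, inner_smul_right, real_inner_comm, mul_pow, Real.norm_eq_abs,
    sq_abs]
  have hq' : ballGaugeRoot x v = (1 - ‖x‖ ^ 2) * ballGauge x v - inner ℝ x v := by linarith
  rw [hq'] at hq
  refine mul_left_cancel₀ h.ne' ?_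
  linear_combination -hq

lemma ballGauge_sub_norm_smul (hx : ‖x‖ < 1) (z : V) : ballGauge x (z - ‖z‖ • x) = ‖z‖ := by
  have h := one_sub_norm_sq_pos hx
  have hxz : inner ℝ x z ≤ ‖z‖ :=
    (real_inner_le_norm x z).trans (mul_le_of_le_one_left (norm_nonneg z) hx.le)
  have hi : inner ℝ x (z - ‖z‖ • x) = inner ℝ x z - ‖z‖ * ‖x‖ ^ 2 := by
    rw [inner_sub_right, inner_smul_right, real_inner_self_eq_norm_sq]
  have hroot : ballGaugeRoot x (z - ‖z‖ • x) = ‖z‖ - inner ℝ x z := by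
    rw [ballGaugeRoot, hi, norm_sub_sq_real, norm_smul, inner_smul_right,
      real_inner_comm x z, norm_norm, ← Real.sqrt_sq (sub_nonneg.2 hxz)]
    congr 1
    ring
  rw [ballGauge, hi, hroot, inv_mul_eq_iff_eq_mul₀ h.ne']
  ring

lemma ballGaugeRoot_pos (hx : ‖x‖ < 1) {v : V} (hv : v ≠ 0) : 0 < ballGaugeRoot x v := by
  have := one_sub_norm_sq_pos hx
  have := norm_pos_iff.2 hv
  exact Real.sqrt_pos.2 (by positivity)

lemma ballGaugeRoot_neg (v : V) : ballGaugeRoot x (-v) = ballGaugeRoot x v := by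
  simp [ballGaugeRoot]

lemma exists_hasFDerivAt_ballGauge (hx : ‖x‖ < 1) {v : V} (hv : v ≠ 0) :
    ∃ L : V →L[ℝ] ℝ, HasFDerivAt (ballGauge x) L v ∧
      1 + L x = (1 - ‖x‖ ^ 2)⁻¹ * (1 + inner ℝ x v / ballGaugeRoot x v) := by
  have h := one_sub_norm_sq_pos hx
  have hq := ballGaugeRoot_pos hx hv
  have hi : HasFDerivAt (fun w : V => inner ℝ x w) (innerSL ℝ x) v := (innerSL ℝ x).hasFDerivAt
  have hn := (hasStrictFDerivAt_norm_sq v).hasFDerivAt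
  have hD := ((hi.pow 2).add (hn.const_mul (1 - ‖x‖ ^ 2))).sqrt (Real.sqrt_pos.1 hq).ne'
  refine ⟨_, (hi.add hD).const_mul (1 - ‖x‖ ^ 2)⁻¹, ?_⟩
  change 1 + (1 - ‖x‖ ^ 2)⁻¹ * (inner ℝ x x + 1 / (2 * ballGaugeRoot x v) * _) = _
  simp [real_inner_comm x v]
  field_simp
  ring

lemma measurable_ballGaugeRoot [MeasurableSpace V] [BorelSpace V] :
    Measurable (ballGaugeRoot x) := by
  unfold ballGaugeRoot
  exact Continuous.measurable (by fun_prop)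

variable [FiniteDimensional ℝ V]

lemma ContinuousLinearMap.det_id_add_smulRight (L : V →L[ℝ] ℝ) (x : V) :
    (ContinuousLinearMap.id ℝ V + L.smulRight x).det = 1 + L x :=
  LinearMap.transvection.det (L : V →ₗ[ℝ] ℝ) x

variable [MeasurableSpace V] [BorelSpace V]

lemma setLIntegral_ofReal_one_add_odd {s : Set V} (hs : MeasurableSet s) (hneg : -s = s)
    {g : V → ℝ} (hg : Measurable g) (hodd : ∀ v, g (-v) = -g v) (hbound : ∀ v, |g v| ≤ 1) :
    ∫⁻ v in s, ENNReal.ofReal (1 + g v) = volume s := by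
  have hsymm : ∫⁻ v in s, ENNReal.ofReal (1 - g v) = ∫⁻ v in s, ENNReal.ofReal (1 + g v) := by
    have := (Measure.measurePreserving_neg (volume : Measure V)).setLIntegral_comp_preimage hs
      (f := fun v => ENNReal.ofReal (1 + g v)) (by fun_prop)
    rw [Set.neg_preimage, hneg] at this
    simpa only [hodd, ← sub_eq_add_neg] using this
  have hsum : (∫⁻ v in s, ENNReal.ofReal (1 + g v)) + ∫⁻ v in s, ENNReal.ofReal (1 - g v)
      = 2 * volume s := by
    rw [← lintegral_add_left (by fun_prop)]
    have (v : V) : ENNReal.ofReal (1 + g v) + ENNReal.ofReal (1 - g v) = 2 := by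
      have := abs_le.1 (hbound v)
      rw [← ENNReal.ofReal_add (by linarith) (by linarith)]
      norm_num
    simp [this]
  rw [hsymm, ← two_mul] at hsum
  exact (ENNReal.mul_right_inj two_ne_zero ENNReal.ofNat_ne_top).1 hsum

/-- The region `‖z - ‖z‖ • x‖ < 1` has volume `(1 - ‖x‖ ^ 2)⁻¹` times that of the unit ball: it is
the image of the ball under `v ↦ v + ballGauge x v • x`, whose Jacobian is a constant plus an odd
function. -/
theorem volume_norm_sub_norm_smul_lt_one [Nontrivial V] (hx : ‖x‖ < 1) :
    volume {z : V | ‖z - ‖z‖ • x‖ < 1}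
      = ENNReal.ofReal (1 - ‖x‖ ^ 2)⁻¹ * volume (Metric.ball (0 : V) 1) := by
  have h := one_sub_norm_sq_pos hx
  set s : Set V := Metric.ball 0 1 \ {0} with hs_def
  have hs : MeasurableSet s := measurableSet_ball.diff (measurableSet_singleton 0)
  have hleft (v : V) : (v + ballGauge x v • x) - ‖v + ballGauge x v • x‖ • x = v := by
    rw [norm_add_ballGauge_smul hx, add_sub_cancel_right]
  have hright (z : V) : (z - ‖z‖ • x) + ballGauge x (z - ‖z‖ • x) • x = z := by
    rw [ballGauge_sub_norm_smul hx, sub_add_cancel]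
  have himage : (fun v => v + ballGauge x v • x) '' s = {z : V | ‖z - ‖z‖ • x‖ < 1} \ {0} := by
    ext z
    constructor
    · rintro ⟨v, hv, rfl⟩
      refine ⟨?_, fun h0 => hv.2 ?_⟩
      · simpa [hleft] using hv.1
      · have h0 : v + ballGauge x v • x = 0 := h0
        have := hleft v
        rw [h0] at this
        simpa using this.symm
    · rintro ⟨hz, hz0⟩
      refine ⟨z - ‖z‖ • x, ⟨by simpa using hz, fun h0 => hz0 ?_⟩, hright z⟩
      have hnorm : ‖z‖ = ‖z‖ * ‖x‖ := by
        conv_lhs => rw [sub_eq_zero.1 h0, norm_smul, norm_norm]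
      have : ‖z‖ = 0 := by
        by_contra hne
        have := norm_nonneg z
        have : 0 < ‖z‖ := lt_of_le_of_ne this (Ne.symm hne)
        nlinarith
      exact norm_eq_zero.1 this
  choose! L hL hLx using fun v (hv : v ≠ 0) => exists_hasFDerivAt_ballGauge hx hv
  have hvol := lintegral_abs_det_fderiv_eq_addHaar_image volume hs
    (f := fun v => v + ballGauge x v • x)
    (f' := fun v => ContinuousLinearMap.id ℝ V + (L v).smulRight x)
    (fun v hv => ((hasFDerivAt_id v).add ((hL v hv.2).smul_const x)).hasFDerivWithinAt)
    (Function.LeftInverse.injective (g := fun z => z - ‖z‖ • x) hleft).injOn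
  rw [himage, measure_sdiff_null (measure_singleton 0)] at hvol
  have hbound (v : V) : |inner ℝ x v / ballGaugeRoot x v| ≤ 1 := by
    have hle := abs_inner_le_ballGaugeRoot hx v
    have hq : 0 ≤ ballGaugeRoot x v := (abs_nonneg _).trans hle
    rw [abs_div, abs_of_nonneg hq]
    exact div_le_one_of_le₀ hle hq
  have hg : Measurable fun v : V => inner ℝ x v / ballGaugeRoot x v :=
    (by fun_prop : Measurable fun v : V => inner ℝ x v).div measurable_ballGaugeRoot
  rw [← hvol, setLIntegral_congr_fun (g := fun v => ENNReal.ofReal (1 - ‖x‖ ^ 2)⁻¹ *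
    ENNReal.ofReal (1 + inner ℝ x v / ballGaugeRoot x v)) hs, lintegral_const_mul _ (by fun_prop),
    setLIntegral_ofReal_one_add_odd hs _ hg _ hbound, measure_sdiff_null (measure_singleton 0)]
  · rw [hs_def]
    ext v
    simp
  · intro v
    simp [ballGaugeRoot_neg, neg_div]
  · intro v hv
    have := (abs_le.1 (hbound v)).1
    dsimp only
    rw [ContinuousLinearMap.det_id_add_smulRight, hLx v hv.2, ← ENNReal.ofReal_mul (by positivity),
      abs_of_nonneg (mul_nonneg (by positivity) (by linarith))]

end BallGauge

section Poisson

variable {V : Type*} [NormedAddCommGroup V] [InnerProductSpace ℝ V] [FiniteDimensional ℝ V]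
  [MeasurableSpace V] [BorelSpace V]

lemma lintegral_radial_mul_indicator_eq {G : ℝ → ENNReal} (hG : Measurable G) {θ : V}
    (hθ : ‖θ‖ = 1) (z : V) :
    ∫⁻ y : V, G ‖y‖ * {y : V | ‖z - ‖z‖ • y‖ < 1}.indicator 1 y
      = ∫⁻ y : V, G ‖y‖ * {y : V | ‖z‖ * ‖θ - y‖ < 1}.indicator 1 y := by
  set R := Submodule.reflection (ℝ ∙ (z - ‖z‖ • θ))ᗮ
  have hRz : R z = ‖z‖ • θ := Submodule.reflection_sub (by simp [norm_smul, hθ])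
  have hmeas : Measurable fun y : V => G ‖y‖ * {y : V | ‖z‖ * ‖θ - y‖ < 1}.indicator 1 y :=
    (hG.comp measurable_norm).mul (measurable_one.indicator
      (isOpen_lt (by fun_prop) continuous_const).measurableSet)
  rw [← R.measurePreserving.lintegral_comp hmeas]
  refine lintegral_congr fun y => ?_
  have : ‖z - ‖z‖ • y‖ = ‖z‖ * ‖θ - R y‖ := by
    rw [← R.norm_map, map_sub, map_smul, hRz, ← smul_sub, norm_smul, norm_norm]
  simp only [indicator, mem_ofPred_eq, this, R.norm_map, Pi.one_apply]

/-- Radial integrals against the kernel `‖θ - y‖ ^ (-dim)` see only its spherical means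
`(1 - ‖y‖ ^ 2)⁻¹`. -/
theorem lintegral_radial_mul_norm_sub_rpow [Nontrivial V] {G : ℝ → ENNReal} (hG : Measurable G)
    (hG1 : ∀ r, 1 ≤ r → G r = 0) {θ : V} (hθ : ‖θ‖ = 1) :
    ∫⁻ y : V, G ‖y‖ * ENNReal.ofReal (‖θ - y‖ ^ (-(Module.finrank ℝ V : ℝ)))
      = ∫⁻ y : V, G ‖y‖ * ENNReal.ofReal (1 - ‖y‖ ^ 2)⁻¹ := by
  set B := volume (Metric.ball (0 : V) 1)
  have hB0 : B ≠ 0 := (Metric.measure_ball_pos volume 0 one_pos).ne'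
  have hBtop : B ≠ ⊤ := measure_ball_lt_top.ne
  have swap (S : Set (V × V)) (hS : IsOpen S) :
      ∫⁻ z : V, ∫⁻ y : V, G ‖y‖ * {y : V | (z, y) ∈ S}.indicator 1 y
        = ∫⁻ y : V, G ‖y‖ * volume {z : V | (z, y) ∈ S} := by
    have hmeas : Measurable fun p : V × V => G ‖p.2‖ * S.indicator 1 p :=
      (hG.comp (by fun_prop)).mul (measurable_one.indicator hS.measurableSet)
    have := lintegral_lintegral_swap (μ := (volume : Measure V)) (ν := (volume : Measure V))
      (f := fun z y => G ‖y‖ * S.indicator 1 (z, y)) hmeas.aemeasurable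
    refine this.trans (lintegral_congr fun y => ?_)
    have hSy : MeasurableSet {z : V | (z, y) ∈ S} := measurable_prodMk_right hS.measurableSet
    rw [← lintegral_indicator_one hSy]
    exact lintegral_const_mul _ (measurable_one.indicator hSy)
  have h1 := swap {p : V × V | ‖p.1 - ‖p.1‖ • p.2‖ < 1} (isOpen_lt (by fun_prop) continuous_const)
  have h2 := swap {p : V × V | ‖p.1‖ * ‖θ - p.2‖ < 1} (isOpen_lt (by fun_prop) continuous_const)
  simp only [mem_ofPred_eq] at h1 h2
  simp only [lintegral_radial_mul_indicator_eq hG hθ] at h1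
  rw [h1] at h2
  have hl : ∀ y : V, G ‖y‖ * volume {z : V | ‖z‖ * ‖θ - y‖ < 1}
      = B * (G ‖y‖ * ENNReal.ofReal (‖θ - y‖ ^ (-(Module.finrank ℝ V : ℝ)))) := by
    intro y
    rcases le_or_gt 1 ‖y‖ with hy | hy
    · simp [hG1 _ hy]
    have hpos : 0 < ‖θ - y‖ := by
      refine norm_pos_iff.2 (sub_ne_zero.2 ?_)
      rintro rfl
      exact hy.ne hθ
    have hball : {z : V | ‖z‖ * ‖θ - y‖ < 1} = Metric.ball 0 ‖θ - y‖⁻¹ := by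
      ext z
      simp [← lt_div_iff₀ hpos]
    rw [hball, Measure.addHaar_ball_of_pos _ _ (inv_pos.2 hpos), Real.rpow_neg hpos.le,
      Real.rpow_natCast, inv_pow]
    ring
  have hr : ∀ y : V, G ‖y‖ * volume {z : V | ‖z - ‖z‖ • y‖ < 1}
      = B * (G ‖y‖ * ENNReal.ofReal (1 - ‖y‖ ^ 2)⁻¹) := by
    intro y
    rcases le_or_gt 1 ‖y‖ with hy | hy
    · simp [hG1 _ hy]
    rw [volume_norm_sub_norm_smul_lt_one hy]
    ring
  simp only [hl, hr] at h2
  rw [lintegral_const_mul' _ _ hBtop, lintegral_const_mul' _ _ hBtop] at h2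
  exact ((ENNReal.mul_right_inj hB0 hBtop).1 h2).symm

end Poisson

theorem excursion_overshoot_tail_eq_levy_tail
    (d : ℕ) (hd : 2 ≤ d) (α : ℝ) (hα0 : 0 < α) (hα2 : α < 2)
    (t : ℝ) (ht : 0 < t)
    (θ : EuclideanSpace ℝ (Fin d)) (hθ : ‖θ‖ = 1) :
    π ^ (-(d : ℝ) / 2) * Real.Gamma ((d : ℝ) / 2) *
        ∫ y in {y : EuclideanSpace ℝ (Fin d) | ‖y‖ < Real.exp (-t)},
          (1 - ‖y‖ ^ 2) ^ (-(α / 2)) * ‖θ - y‖ ^ (-(d : ℝ))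
      = 2 * ∫ v in Ioi t, (1 - Real.exp (-2 * v)) ^ (-(α / 2) - 1) * Real.exp (-(d : ℝ) * v) := by
  have : NeZero d := ⟨by omega⟩
  have hρ : Real.exp (-t) < 1 := Real.exp_lt_one_iff.2 (by linarith)
  have hfin : Module.finrank ℝ (EuclideanSpace ℝ (Fin d)) = d := by simp
  have hset : MeasurableSet {y : EuclideanSpace ℝ (Fin d) | ‖y‖ < Real.exp (-t)} :=
    (isOpen_lt continuous_norm continuous_const).measurableSet
  have hkernel : ∫ y in {y : EuclideanSpace ℝ (Fin d) | ‖y‖ < Real.exp (-t)},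
        (1 - ‖y‖ ^ 2) ^ (-(α / 2)) * ‖θ - y‖ ^ (-(d : ℝ))
      = ∫ y in {y : EuclideanSpace ℝ (Fin d) | ‖y‖ < Real.exp (-t)},
        (1 - ‖y‖ ^ 2) ^ (-(α / 2) - 1) := by
    have hpos {y : EuclideanSpace ℝ (Fin d)} (hy : ‖y‖ < Real.exp (-t)) : 0 < 1 - ‖y‖ ^ 2 :=
      one_sub_norm_sq_pos (hy.trans hρ)
    have hG : Measurable ((Iio (Real.exp (-t))).indicator
        fun r : ℝ => ENNReal.ofReal ((1 - r ^ 2) ^ (-(α / 2)))) :=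
      Measurable.indicator (by fun_prop) measurableSet_Iio
    have key := lintegral_radial_mul_norm_sub_rpow hG
      (fun r hr => indicator_of_notMem (by simp [hρ.le.trans hr]) _) hθ
    rw [hfin] at key
    rw [integral_eq_lintegral_of_nonneg_ae, integral_eq_lintegral_of_nonneg_ae,
      ← lintegral_indicator hset, ← lintegral_indicator hset]
    · congr 1
      refine Eq.trans (lintegral_congr fun y => ?_) (key.trans (lintegral_congr fun y => ?_))
      · by_cases hy : ‖y‖ < Real.exp (-t)
        · have := (hpos hy).le
          simp [hy, ENNReal.ofReal_mul (Real.rpow_nonneg this _)]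
        · simp [hy]
      · by_cases hy : ‖y‖ < Real.exp (-t)
        · have := hpos hy
          rw [indicator_of_mem (mem_Iio.2 hy), indicator_of_mem (a := y) (by exact hy),
            ← ENNReal.ofReal_mul (Real.rpow_nonneg this.le _), ← div_eq_mul_inv,
            ← Real.rpow_sub_one this.ne']
        · simp [hy]
    · filter_upwards [ae_restrict_mem hset] with y hy
      exact Real.rpow_nonneg (hpos hy).le _
    · exact (by fun_prop : Measurable _).aestronglyMeasurable
    · filter_upwards [ae_restrict_mem hset] with y hy
      exact mul_nonneg (Real.rpow_nonneg (hpos hy).le _) (by positivity)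
    · exact (by fun_prop : Measurable _).aestronglyMeasurable
  have hpolar : ∫ y in {y : EuclideanSpace ℝ (Fin d) | ‖y‖ < Real.exp (-t)},
        (1 - ‖y‖ ^ 2) ^ (-(α / 2) - 1)
      = d * (√π ^ d / Real.Gamma (d / 2 + 1)) *
        ∫ r in Ioo 0 (Real.exp (-t)), r ^ (d - 1) * (1 - r ^ 2) ^ (-(α / 2) - 1) := by
    have h := integral_fun_norm_addHaar (volume : Measure (EuclideanSpace ℝ (Fin d)))
      ((Iio (Real.exp (-t))).indicator fun r : ℝ => (1 - r ^ 2) ^ (-(α / 2) - 1))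
    rw [hfin] at h
    have hv : volume.real (Metric.ball (0 : EuclideanSpace ℝ (Fin d)) 1)
        = √π ^ d / Real.Gamma (d / 2 + 1) := by
      rw [Measure.real, EuclideanSpace.volume_ball]
      simp
      positivity
    rw [hv, nsmul_eq_mul, smul_eq_mul, ← mul_assoc] at h
    rw [← integral_indicator hset]
    refine Eq.trans ?_ (h.trans ?_)
    · rfl
    · rw [← Ioi_inter_Iio, ← setIntegral_indicator measurableSet_Iio]
      congr 2 with r
      by_cases hr : r < Real.exp (-t) <;> simp [hr]
  have hsubst : ∫ r in Ioo 0 (Real.exp (-t)), r ^ (d - 1) * (1 - r ^ 2) ^ (-(α / 2) - 1)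
      = ∫ v in Ioi t, (1 - Real.exp (-2 * v)) ^ (-(α / 2) - 1) * Real.exp (-(d : ℝ) * v) := by
    have himage : (fun v : ℝ => Real.exp (-v)) '' Ioi t = Ioo 0 (Real.exp (-t)) := by
      ext r
      constructor
      · rintro ⟨v, hv, rfl⟩
        exact ⟨Real.exp_pos _, Real.exp_lt_exp.2 (neg_lt_neg hv)⟩
      · rintro ⟨h0, h1⟩
        refine ⟨-Real.log r, ?_, by simp [Real.exp_log h0]⟩
        have := (Real.log_lt_iff_lt_exp h0).2 h1
        simp only [mem_Ioi]
        linarith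
    rw [← himage, integral_image_eq_integral_abs_deriv_smul (f' := fun v => -Real.exp (-v))
      measurableSet_Ioi]
    · refine setIntegral_congr_fun measurableSet_Ioi fun v _ => ?_
      have h1 : Real.exp (-v) ^ 2 = Real.exp (-2 * v) := by
        rw [← Real.exp_nat_mul]
        congr 1
        push_cast
        ring
      have h2 : Real.exp (-v) * Real.exp (-v) ^ (d - 1) = Real.exp (-(d : ℝ) * v) := by
        rw [mul_pow_sub_one (by omega), ← Real.exp_nat_mul]
        congr 1
        ring
      simp only [abs_neg, abs_of_pos (Real.exp_pos _), smul_eq_mul]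
      rw [← mul_assoc, h1, h2, mul_comm]
    · intro v _
      simpa using ((hasDerivAt_id v).neg.exp).hasDerivWithinAt
    · exact fun v _ w _ h => neg_injective (Real.exp_injective h)
  have hconst : π ^ (-(d : ℝ) / 2) * Real.Gamma ((d : ℝ) / 2) *
      (d * (√π ^ d / Real.Gamma (d / 2 + 1))) = 2 := by
    have hd0 : (0 : ℝ) < d := by positivity
    have hΓ := Real.Gamma_pos_of_pos (half_pos hd0)
    have hπ : π ^ (-(d : ℝ) / 2) * √π ^ d = 1 := by
      rw [Real.sqrt_eq_rpow, ← Real.rpow_natCast, ← Real.rpow_mul pi_pos.le,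
        ← Real.rpow_add pi_pos]
      ring_nf
      simp
    rw [Real.Gamma_add_one (half_pos hd0).ne']
    generalize π ^ (-(d : ℝ) / 2) = P at hπ ⊢
    field_simp
    linear_combination hπ
  rw [hkernel, hpolar, hsubst, ← mul_assoc, hconst]
end

section
/- One has lim_{η→1+} (α / (Γ(α/2) Γ(1-α/2))) · (∫_{log η}^∞ (1 - e^{-2v})^{-α/2-1} e^{-dv} dv) · (∫_0^{η^2-1} (u+1)^{-d/2} u^{α/2-1} du) = 1 / (Γ(1+α/2) Γ(1-α/2)). -/
open MeasureTheory Real Set Filter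

lemma one_sub_exp_neg_two_mul_pos {v : ℝ} (hv : 0 < v) : 0 < 1 - exp (-2 * v) := by
  have : exp (-2 * v) < 1 := exp_lt_one_iff.2 (by linarith)
  linarith

lemma hasDerivAt_one_sub_exp_rpow {p v : ℝ} (hp : p ≠ 0) (hv : 0 < v) :
    HasDerivAt (fun v => (1 - exp (-2 * v)) ^ p / (2 * p))
      ((1 - exp (-2 * v)) ^ (p - 1) * exp (-2 * v)) v := by
  have h1 : HasDerivAt (fun v : ℝ => 1 - exp (-2 * v)) (-(exp (-2 * v) * (-2 * 1))) v :=
    (((hasDerivAt_id v).const_mul (-2)).exp).const_sub 1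
  have h2 := (h1.rpow_const (p := p)
    (Or.inl (one_sub_exp_neg_two_mul_pos hv).ne')).div_const (2 * p)
  refine h2.congr_deriv ?_
  field_simp

lemma tendsto_one_sub_exp_rpow_atTop (p : ℝ) :
    Tendsto (fun v => (1 - exp (-2 * v)) ^ p / (2 * p)) atTop (nhds (1 / (2 * p))) := by
  have h0 : Tendsto (fun v : ℝ => exp (-2 * v)) atTop (nhds 0) :=
    tendsto_exp_atBot.comp (tendsto_id.const_mul_atTop_of_neg (by norm_num))
  have h1 : Tendsto (fun v : ℝ => 1 - exp (-2 * v)) atTop (nhds 1) := by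
    simpa using h0.const_sub 1
  have h2 := (h1.rpow_const (p := p) (Or.inl one_ne_zero)).div_const (2 * p)
  simpa using h2

lemma integrableOn_one_sub_exp_rpow {p ε : ℝ} (hp : p ≠ 0) (hε : 0 < ε) :
    IntegrableOn (fun v => (1 - exp (-2 * v)) ^ (p - 1) * exp (-2 * v)) (Ioi ε) :=
  integrableOn_Ioi_deriv_of_nonneg'
    (fun _ hv => hasDerivAt_one_sub_exp_rpow hp (hε.trans_le hv))
    (fun _ hv => mul_nonneg
      (rpow_nonneg (one_sub_exp_neg_two_mul_pos (hε.trans hv)).le _) (exp_pos _).le)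
    (tendsto_one_sub_exp_rpow_atTop p)

lemma integral_one_sub_exp_rpow {p ε : ℝ} (hp : p ≠ 0) (hε : 0 < ε) :
    ∫ v in Ioi ε, (1 - exp (-2 * v)) ^ (p - 1) * exp (-2 * v) =
      (1 - (1 - exp (-2 * ε)) ^ p) / (2 * p) := by
  rw [integral_Ioi_of_hasDerivAt_of_nonneg'
    (fun _ hv => hasDerivAt_one_sub_exp_rpow hp (hε.trans_le hv))
    (fun _ hv => mul_nonneg
      (rpow_nonneg (one_sub_exp_neg_two_mul_pos (hε.trans hv)).le _) (exp_pos _).le)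
    (tendsto_one_sub_exp_rpow_atTop p)]
  ring

lemma exp_neg_natCast_mul_le {d : ℕ} (hd : 2 ≤ d) {v : ℝ} (hv : 0 < v) :
    exp (-(d : ℝ) * v) ≤ exp (-2 * v) := by
  have : (2 : ℝ) ≤ d := by exact_mod_cast hd
  exact exp_le_exp.2 (by nlinarith)

lemma le_exp_neg_natCast_mul {d : ℕ} (hd : 2 ≤ d) {v : ℝ} (hv : 0 < v) :
    (1 - d * (1 - exp (-2 * v))) * exp (-2 * v) ≤ exp (-(d : ℝ) * v) := by
  obtain ⟨k, rfl⟩ := Nat.exists_eq_add_of_le hd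
  have hx := one_sub_exp_neg_two_mul_pos hv
  have he := exp_pos (-2 * v)
  have hb : 1 + (k : ℝ) * (exp (-2 * v) - 1) ≤ exp (-2 * v) ^ k := by
    have := one_add_mul_le_pow (a := exp (-2 * v) - 1) (by linarith) k
    simpa using this
  have hle : exp (-2 * v) ^ k ≤ exp (-(k : ℝ) * v) := by
    rw [← exp_nat_mul]
    have : (0 : ℝ) ≤ k := k.cast_nonneg
    exact exp_le_exp.2 (by nlinarith)
  have hsplit : exp (-((2 + k : ℕ) : ℝ) * v) = exp (-(k : ℝ) * v) * exp (-2 * v) := by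
    rw [← exp_add]; push_cast; ring_nf
  rw [hsplit]
  refine mul_le_mul_of_nonneg_right ?_ he.le
  push_cast
  nlinarith

/-- Two-sided bounds for the tail integral, sharp to leading order as `ε → 0`. -/
lemma tail_integral_bounds {d : ℕ} (hd : 2 ≤ d) {a ε : ℝ} (ha0 : 0 < a) (ha1 : a < 1)
    (hε : 0 < ε) :
    (1 - (1 - exp (-2 * ε)) ^ (-a)) / (2 * (-a)) - d / (2 * (1 - a)) ≤
        ∫ v in Ioi ε, (1 - exp (-2 * v)) ^ (-a - 1) * exp (-(d : ℝ) * v) ∧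
      ∫ v in Ioi ε, (1 - exp (-2 * v)) ^ (-a - 1) * exp (-(d : ℝ) * v) ≤
        (1 - (1 - exp (-2 * ε)) ^ (-a)) / (2 * (-a)) := by
  have hna : -a ≠ 0 := neg_ne_zero.2 ha0.ne'
  have h1a : 1 - a ≠ 0 := by linarith
  have i1 := integrableOn_one_sub_exp_rpow hna hε
  have i2 := integrableOn_one_sub_exp_rpow h1a hε
  have hpw : ∀ v ∈ Ioi ε, (1 - exp (-2 * v)) ^ (-a - 1) * exp (-(d : ℝ) * v) ≤
      (1 - exp (-2 * v)) ^ (-a - 1) * exp (-2 * v) := fun v hv =>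
    mul_le_mul_of_nonneg_left (exp_neg_natCast_mul_le hd (hε.trans hv))
      (rpow_nonneg (one_sub_exp_neg_two_mul_pos (hε.trans hv)).le _)
  have i3 : IntegrableOn (fun v => (1 - exp (-2 * v)) ^ (-a - 1) * exp (-(d : ℝ) * v))
      (Ioi ε) := by
    refine Integrable.mono' i1 (by fun_prop) ?_
    filter_upwards [ae_restrict_mem measurableSet_Ioi] with v hv
    rw [norm_of_nonneg (mul_nonneg
      (rpow_nonneg (one_sub_exp_neg_two_mul_pos (hε.trans hv)).le _) (exp_pos _).le)]
    exact hpw v hv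
  constructor
  · have hlow : ∫ v in Ioi ε, ((1 - exp (-2 * v)) ^ (-a - 1) * exp (-2 * v) -
        d * ((1 - exp (-2 * v)) ^ (1 - a - 1) * exp (-2 * v))) ≤
        ∫ v in Ioi ε, (1 - exp (-2 * v)) ^ (-a - 1) * exp (-(d : ℝ) * v) := by
      refine setIntegral_mono_on (i1.sub (i2.const_mul _)) i3 measurableSet_Ioi fun v hv => ?_
      have hx := one_sub_exp_neg_two_mul_pos (hε.trans hv)
      have hpow : (1 - exp (-2 * v)) ^ (1 - a - 1) =
          (1 - exp (-2 * v)) ^ (-a - 1) * (1 - exp (-2 * v)) := by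
        rw [← rpow_add_one hx.ne']; ring_nf
      have := mul_le_mul_of_nonneg_left (le_exp_neg_natCast_mul hd (hε.trans hv))
        (rpow_nonneg hx.le (-a - 1))
      rw [hpow]
      linarith
    rw [integral_sub i1 (i2.const_mul _), integral_const_mul, integral_one_sub_exp_rpow hna hε,
      integral_one_sub_exp_rpow h1a hε] at hlow
    refine le_trans (sub_le_sub_left ?_ _) hlow
    rw [← mul_div_assoc]
    refine div_le_div_of_nonneg_right ?_ (by linarith)
    have := rpow_nonneg (one_sub_exp_neg_two_mul_pos hε).le (1 - a)
    have hd0 : (0 : ℝ) ≤ d := d.cast_nonneg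
    nlinarith
  · rw [← integral_one_sub_exp_rpow hna hε]
    exact setIntegral_mono_on i3 i1 measurableSet_Ioi hpw

lemma integral_Ioo_rpow_sub_one {a s : ℝ} (ha : 0 < a) (hs : 0 < s) :
    IntegrableOn (fun u : ℝ => u ^ (a - 1)) (Ioo 0 s) ∧
      ∫ u in Ioo (0 : ℝ) s, u ^ (a - 1) = s ^ a / a := by
  constructor
  · rw [← integrableOn_Ioc_iff_integrableOn_Ioo,
      ← intervalIntegrable_iff_integrableOn_Ioc_of_le hs.le]
    exact intervalIntegral.intervalIntegrable_rpow' (by linarith)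
  · rw [← integral_Ioc_eq_integral_Ioo, ← intervalIntegral.integral_of_le hs.le,
      integral_rpow (Or.inl (by linarith))]
    simp [ha.ne']

/-- Two-sided bounds for the escape integral, sharp to leading order as `s → 0`. -/
lemma escape_integral_bounds {a b s : ℝ} (ha : 0 < a) (hb : b ≤ 0) (hs : 0 < s) :
    (s + 1) ^ b * (s ^ a / a) ≤ ∫ u in Ioo (0 : ℝ) s, (u + 1) ^ b * u ^ (a - 1) ∧
      ∫ u in Ioo (0 : ℝ) s, (u + 1) ^ b * u ^ (a - 1) ≤ s ^ a / a := by
  obtain ⟨hi, hint⟩ := integral_Ioo_rpow_sub_one ha hs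
  have hle : ∀ u ∈ Ioo 0 s, (u + 1) ^ b * u ^ (a - 1) ≤ u ^ (a - 1) := fun u hu =>
    mul_le_of_le_one_left (rpow_nonneg hu.1.le _)
      (rpow_le_one_of_one_le_of_nonpos (by linarith [hu.1]) hb)
  have hi' : IntegrableOn (fun u : ℝ => (u + 1) ^ b * u ^ (a - 1)) (Ioo 0 s) := by
    refine Integrable.mono' hi (by fun_prop) ?_
    filter_upwards [ae_restrict_mem measurableSet_Ioo] with u hu
    rw [norm_of_nonneg (mul_nonneg (rpow_nonneg (by linarith [hu.1]) _)
      (rpow_nonneg hu.1.le _))]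
    exact hle u hu
  rw [← hint]
  refine ⟨?_, setIntegral_mono_on hi' hi measurableSet_Ioo hle⟩
  rw [← integral_const_mul]
  refine setIntegral_mono_on (hi.const_mul _) hi' measurableSet_Ioo fun u hu => ?_
  exact mul_le_mul_of_nonneg_right
    (rpow_le_rpow_of_nonpos (by linarith [hu.1]) (by linarith [hu.2]) hb)
    (rpow_nonneg hu.1.le _)

lemma one_sub_exp_neg_two_mul_log {η : ℝ} (hη : 0 < η) :
    1 - exp (-2 * log η) = (η ^ 2 - 1) / η ^ 2 := by
  have : exp (-2 * log η) = (η ^ 2)⁻¹ := by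
    rw [neg_mul, exp_neg, show 2 * log η = log (η ^ 2) by simp, exp_log (by positivity)]
  rw [this]
  field_simp

lemma tendsto_sq_sub_one_rpow {a : ℝ} (ha : 0 < a) :
    Tendsto (fun η : ℝ => (η ^ 2 - 1) ^ a) (nhdsWithin 1 (Ioi 1)) (nhds 0) := by
  have h : Continuous fun η : ℝ => (η ^ 2 - 1) ^ a :=
    (by fun_prop : Continuous fun η : ℝ => η ^ 2 - 1).rpow_const fun _ => Or.inr ha.le
  have := h.tendsto 1
  norm_num [zero_rpow ha.ne'] at this
  exact this.mono_left nhdsWithin_le_nhds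

lemma tendsto_sq_rpow (a : ℝ) :
    Tendsto (fun η : ℝ => (η ^ 2) ^ a) (nhdsWithin 1 (Ioi 1)) (nhds 1) := by
  have h : ContinuousAt (fun η : ℝ => (η ^ 2) ^ a) 1 :=
    ContinuousAt.rpow_const (by fun_prop) (Or.inl (by norm_num))
  have := h.tendsto
  norm_num at this
  exact this.mono_left nhdsWithin_le_nhds

lemma tendsto_rpow_mul_tail_integral {d : ℕ} (hd : 2 ≤ d) {a : ℝ} (ha0 : 0 < a) (ha1 : a < 1) :
    Tendsto (fun η : ℝ => (η ^ 2 - 1) ^ a *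
        ∫ v in Ioi (log η), (1 - exp (-2 * v)) ^ (-a - 1) * exp (-(d : ℝ) * v))
      (nhdsWithin 1 (Ioi 1)) (nhds (1 / (2 * a))) := by
  have hs := tendsto_sq_sub_one_rpow ha0
  have hη := tendsto_sq_rpow a
  have hup : Tendsto (fun η : ℝ => ((η ^ 2 - 1) ^ a - (η ^ 2) ^ a) / (2 * (-a)))
      (nhdsWithin 1 (Ioi 1)) (nhds (1 / (2 * a))) := by
    convert (hs.sub hη).div_const (2 * (-a)) using 2
    field_simp
    norm_num
  have hlow : Tendsto (fun η : ℝ => ((η ^ 2 - 1) ^ a - (η ^ 2) ^ a) / (2 * (-a)) -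
      (η ^ 2 - 1) ^ a * (d / (2 * (1 - a)))) (nhdsWithin 1 (Ioi 1)) (nhds (1 / (2 * a))) := by
    simpa using hup.sub (hs.mul_const (d / (2 * (1 - a))))
  have key : ∀ η : ℝ, 1 < η → (η ^ 2 - 1) ^ a *
      ((1 - (1 - exp (-2 * log η)) ^ (-a)) / (2 * (-a))) =
      ((η ^ 2 - 1) ^ a - (η ^ 2) ^ a) / (2 * (-a)) := fun η hη1 => by
    have hpos : 0 < η ^ 2 - 1 := by nlinarith
    have hne := (rpow_pos_of_pos hpos a).ne'
    rw [one_sub_exp_neg_two_mul_log (by linarith), rpow_neg (by positivity),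
      div_rpow hpos.le (by positivity)]
    field_simp
  refine tendsto_of_tendsto_of_tendsto_of_le_of_le' hlow hup ?_ ?_ <;>
    filter_upwards [self_mem_nhdsWithin] with η hη1 <;>
    have hnn := rpow_nonneg (by nlinarith [mem_Ioi.1 hη1] : 0 ≤ η ^ 2 - 1) a <;>
    have hb := tail_integral_bounds hd ha0 ha1 (log_pos hη1)
  · rw [← key η hη1, ← mul_sub]
    exact mul_le_mul_of_nonneg_left hb.1 hnn
  · rw [← key η hη1]
    exact mul_le_mul_of_nonneg_left hb.2 hnn

lemma tendsto_escape_integral_div_rpow {a b : ℝ} (ha : 0 < a) (hb : b ≤ 0) :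
    Tendsto (fun η : ℝ => (∫ u in Ioo (0 : ℝ) (η ^ 2 - 1), (u + 1) ^ b * u ^ (a - 1)) /
        (η ^ 2 - 1) ^ a)
      (nhdsWithin 1 (Ioi 1)) (nhds (1 / a)) := by
  have hlow : Tendsto (fun η : ℝ => (η ^ 2) ^ b * (1 / a)) (nhdsWithin 1 (Ioi 1))
      (nhds (1 / a)) := by
    simpa using (tendsto_sq_rpow b).mul_const (1 / a)
  refine tendsto_of_tendsto_of_tendsto_of_le_of_le' hlow tendsto_const_nhds ?_ ?_ <;>
    filter_upwards [self_mem_nhdsWithin] with η hη1 <;>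
    have hs : 0 < η ^ 2 - 1 := by nlinarith [mem_Ioi.1 hη1]
  · rw [le_div_iff₀ (rpow_pos_of_pos hs a)]
    refine le_trans (le_of_eq ?_) (escape_integral_bounds ha hb hs).1
    rw [sub_add_cancel]
    ring
  · rw [div_le_iff₀ (rpow_pos_of_pos hs a)]
    refine (escape_integral_bounds ha hb hs).2.trans (le_of_eq ?_)
    ring

theorem levy_tail_times_escape_prob_limit
    (d : ℕ) (hd : 2 ≤ d) (α : ℝ) (hα0 : 0 < α) (hα2 : α < 2) :
    Tendsto (fun η : ℝ =>
        (α / (Real.Gamma (α / 2) * Real.Gamma (1 - α / 2))) *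
          (∫ v in Ioi (Real.log η), (1 - Real.exp (-2 * v)) ^ (-(α / 2) - 1) * Real.exp (-(d : ℝ) * v)) *
          (∫ u in Ioo (0 : ℝ) (η ^ 2 - 1), (u + 1) ^ (-(d : ℝ) / 2) * u ^ (α / 2 - 1)))
      (nhdsWithin 1 (Ioi 1))
      (nhds (1 / (Real.Gamma (1 + α / 2) * Real.Gamma (1 - α / 2)))) := by
  have ha : 0 < α / 2 := by linarith
  have ha1 : α / 2 < 1 := by linarith
  have hb : -(d : ℝ) / 2 ≤ 0 := by
    have : (0 : ℝ) ≤ d := d.cast_nonneg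
    linarith
  have h := ((tendsto_rpow_mul_tail_integral hd ha ha1).mul
    (tendsto_escape_integral_div_rpow ha hb)).const_mul
      (α / (Real.Gamma (α / 2) * Real.Gamma (1 - α / 2)))
  have hlim : 1 / (Real.Gamma (1 + α / 2) * Real.Gamma (1 - α / 2)) =
      α / (Real.Gamma (α / 2) * Real.Gamma (1 - α / 2)) *
        (1 / (2 * (α / 2)) * (1 / (α / 2))) := by
    have h1 := (Real.Gamma_pos_of_pos ha).ne'
    have h2 := (Real.Gamma_pos_of_pos (by linarith : 0 < 1 - α / 2)).ne'
    rw [add_comm 1, Real.Gamma_add_one ha.ne']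
    field_simp
  rw [hlim]
  refine h.congr' ?_
  filter_upwards [self_mem_nhdsWithin] with η hη
  have hne := (rpow_pos_of_pos (by nlinarith [mem_Ioi.1 hη] : 0 < η ^ 2 - 1) (α / 2)).ne'
  have hcancel : ∀ A B C c : ℝ, c ≠ 0 → A * (c * B * (C / c)) = A * B * C := by
    intro A B C c hc
    field_simp
  exact hcancel _ _ _ _ hne
end

section
/- Let r > 0 and set D = Γ(d/2) / (Γ((d-α)/2) Γ(α/2)). For 0 < s ≤ ρ put P(ρ,s) = D ∫_0^{(ρ^2/s^2)-1} (u+1)^{-d/2} u^{α/2-1} du. Then lim_{δ→0+} sup_{ρ ∈ (r-δ, r]} | (ρ^2 - (r-δ)^2)^{-α/2} r^α P(ρ, r-δ) − 2D/α | = 0. (This is Lemma 5.2, with P(ρ,s) being the Blumenthal–Getoor–Ray expression for the probability, starting from radius ρ, of never entering the ball of radius s.) -/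
open MeasureTheory Real Set Filter

/-- The power `u ^ (a - 1)` is integrable near the origin, with the expected integral. -/
lemma integrableOn_and_integral_Ioo_rpow_sub_one {a T : ℝ} (ha : 0 < a) (hT : 0 ≤ T) :
    IntegrableOn (fun u : ℝ => u ^ (a - 1)) (Ioo 0 T) ∧
      ∫ u in Ioo (0 : ℝ) T, u ^ (a - 1) = T ^ a / a := by
  constructor
  · have h := intervalIntegral.intervalIntegrable_rpow' (a := 0) (b := T)
      (r := a - 1) (by linarith)
    rw [intervalIntegrable_iff_integrableOn_Ioc_of_le hT] at h
    exact h.mono_set Ioo_subset_Ioc_self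
  · rw [← integral_Ioc_eq_integral_Ioo, ← intervalIntegral.integral_of_le hT,
      integral_rpow (Or.inl (by linarith))]
    simp [ha.ne']

/-- Two-sided bounds for the incomplete beta-type integral
`∫₀ᵀ (u + 1) ^ (-b) * u ^ (a - 1)`. -/
lemma integral_Ioo_add_one_rpow_mul_rpow_mem_Icc {a b T : ℝ} (ha : 0 < a) (hb : 0 ≤ b)
    (hT : 0 ≤ T) :
    ∫ u in Ioo (0 : ℝ) T, (u + 1) ^ (-b) * u ^ (a - 1) ∈
      Icc ((T + 1) ^ (-b) * (T ^ a / a)) (T ^ a / a) := by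
  obtain ⟨hint, hval⟩ := integrableOn_and_integral_Ioo_rpow_sub_one ha hT
  have hupper : ∀ u ∈ Ioo (0 : ℝ) T, (u + 1) ^ (-b) * u ^ (a - 1) ≤ u ^ (a - 1) := by
    intro u hu
    exact mul_le_of_le_one_left (rpow_nonneg hu.1.le _)
      (rpow_le_one_of_one_le_of_nonpos (by linarith [hu.1]) (by linarith))
  have hlower : ∀ u ∈ Ioo (0 : ℝ) T,
      (T + 1) ^ (-b) * u ^ (a - 1) ≤ (u + 1) ^ (-b) * u ^ (a - 1) := by
    intro u hu
    exact mul_le_mul_of_nonneg_right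
      (rpow_le_rpow_of_nonpos (by linarith [hu.1]) (by linarith [hu.2]) (by linarith))
      (rpow_nonneg hu.1.le _)
  have hint' : IntegrableOn (fun u : ℝ => (u + 1) ^ (-b) * u ^ (a - 1)) (Ioo 0 T) := by
    refine Integrable.mono' hint (by fun_prop) ?_
    filter_upwards [ae_restrict_mem measurableSet_Ioo] with u hu
    rw [norm_of_nonneg (mul_nonneg (rpow_nonneg (by linarith [hu.1]) _)
      (rpow_nonneg hu.1.le _))]
    exact hupper u hu
  constructor
  · rw [← hval, ← integral_const_mul]
    exact setIntegral_mono_on (hint.const_mul _) hint' measurableSet_Ioo hlower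
  · rw [← hval]
    exact setIntegral_mono_on hint' hint measurableSet_Ioo hupper

/-- The normalised escape integral from radius `ρ ∈ (s, r]` differs from its limit `1 / a` by a
quantity depending only on the ratio `r / s`. -/
lemma abs_normalized_integral_sub_le {a b r s ρ : ℝ} (ha : 0 < a) (hab : a ≤ b)
    (hs : 0 < s) (hsρ : s < ρ) (hρr : ρ ≤ r) :
    |(ρ ^ 2 - s ^ 2) ^ (-a) * r ^ (2 * a) *
        (∫ u in Ioo (0 : ℝ) (ρ ^ 2 / s ^ 2 - 1), (u + 1) ^ (-b) * u ^ (a - 1)) - 1 / a| ≤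
      ((r / s) ^ (2 * a) - (r / s) ^ (2 * a - 2 * b)) / a := by
  have hρ : 0 < ρ := hs.trans hsρ
  have hr : 0 < r := hρ.trans_le hρr
  have hX : 0 < ρ ^ 2 - s ^ 2 := by nlinarith
  have hT : ρ ^ 2 / s ^ 2 - 1 = (ρ ^ 2 - s ^ 2) / s ^ 2 := by field_simp
  have hT0 : 0 ≤ ρ ^ 2 / s ^ 2 - 1 := by rw [hT]; positivity
  obtain ⟨hl, hu⟩ := integral_Ioo_add_one_rpow_mul_rpow_mem_Icc ha (ha.le.trans hab) hT0
  set J := ∫ u in Ioo (0 : ℝ) (ρ ^ 2 / s ^ 2 - 1), (u + 1) ^ (-b) * u ^ (a - 1)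
  have hq : 1 ≤ r / s := by rw [one_le_div hs]; linarith
  set C := (ρ ^ 2 - s ^ 2) ^ (-a) * r ^ (2 * a) with hC
  have hC0 : 0 ≤ C := by positivity
  have hscale : C * ((ρ ^ 2 / s ^ 2 - 1) ^ a / a) = (r / s) ^ (2 * a) / a := by
    have hsq : (s ^ 2) ^ a = s ^ (2 * a) := by
      rw [← rpow_natCast s 2, ← rpow_mul hs.le, Nat.cast_ofNat]
    have hXa := (rpow_pos_of_pos hX a).ne'
    rw [hC, hT, div_rpow hX.le (by positivity), div_rpow hr.le hs.le, rpow_neg hX.le, hsq]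
    generalize (ρ ^ 2 - s ^ 2) ^ a = x at hXa
    field_simp
  have hratio : (r / s) ^ (-(2 * b)) ≤ (ρ ^ 2 / s ^ 2 - 1 + 1) ^ (-b) := by
    rw [sub_add_cancel, ← div_pow, ← rpow_natCast (ρ / s) 2, ← rpow_mul (by positivity)]
    have : ((2 : ℕ) : ℝ) * -b = -(2 * b) := by push_cast; ring
    rw [this]
    exact rpow_le_rpow_of_nonpos (by positivity) (by gcongr) (by linarith)
  have hupper : C * J ≤ (r / s) ^ (2 * a) / a :=
    (mul_le_mul_of_nonneg_left hu hC0).trans_eq hscale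
  have hlower : (r / s) ^ (2 * a - 2 * b) / a ≤ C * J := by
    calc (r / s) ^ (2 * a - 2 * b) / a
        = (r / s) ^ (-(2 * b)) * ((r / s) ^ (2 * a) / a) := by
          rw [sub_eq_neg_add, rpow_add (by positivity)]; ring
      _ ≤ (ρ ^ 2 / s ^ 2 - 1 + 1) ^ (-b) * ((r / s) ^ (2 * a) / a) := by gcongr
      _ = C * ((ρ ^ 2 / s ^ 2 - 1 + 1) ^ (-b) * ((ρ ^ 2 / s ^ 2 - 1) ^ a / a)) := by
          rw [← hscale]; ring
      _ ≤ C * J := mul_le_mul_of_nonneg_left hl hC0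
  have hone : 1 / a ≤ (r / s) ^ (2 * a) / a := by
    gcongr; exact one_le_rpow hq (by linarith)
  have hone' : (r / s) ^ (2 * a - 2 * b) / a ≤ 1 / a := by
    gcongr; exact rpow_le_one_of_one_le_of_nonpos hq (by linarith)
  rw [abs_le, sub_div]
  constructor <;> linarith

theorem escape_probability_asymptotics
    (d : ℕ) (hd : 2 ≤ d) (α : ℝ) (hα0 : 0 < α) (hα2 : α < 2)
    (r : ℝ) (hr : 0 < r)
    (D : ℝ) (hD : D = Real.Gamma ((d : ℝ) / 2) /
      (Real.Gamma (((d : ℝ) - α) / 2) * Real.Gamma (α / 2)))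
    (P : ℝ → ℝ → ℝ)
    (hP : ∀ ρ s : ℝ, 0 < s → s ≤ ρ →
      P ρ s = D * ∫ u in Ioo (0 : ℝ) ((ρ ^ 2 / s ^ 2) - 1),
        (u + 1) ^ (-(d : ℝ) / 2) * u ^ (α / 2 - 1)) :
    Tendsto (fun δ : ℝ =>
        ⨆ ρ : Ioc (r - δ) r,
          |((ρ : ℝ) ^ 2 - (r - δ) ^ 2) ^ (-(α / 2)) * r ^ α * P (ρ : ℝ) (r - δ) - 2 * D / α|)
      (nhdsWithin 0 (Ioi 0)) (nhds 0) := by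
  have hd' : (2 : ℝ) ≤ d := by exact_mod_cast hd
  set B : ℝ → ℝ := fun δ =>
    |D| * (((r / (r - δ)) ^ (2 * (α / 2)) -
      (r / (r - δ)) ^ (2 * (α / 2) - 2 * ((d : ℝ) / 2))) / (α / 2)) with hB
  have hlim : Tendsto B (nhdsWithin 0 (Ioi 0)) (nhds 0) := by
    have hquot : ContinuousAt (fun δ : ℝ => r / (r - δ)) 0 :=
      continuousAt_const.div (by fun_prop) (by simpa using hr.ne')
    have hne : r / (r - 0) ≠ 0 := by simp [hr.ne']
    have hcont : ContinuousAt B 0 :=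
      continuousAt_const.mul (((hquot.rpow_const (Or.inl hne)).sub
        (hquot.rpow_const (Or.inl hne))).div_const _)
    have hzero : B 0 = 0 := by simp [hB, hr.ne']
    simpa only [hzero] using hcont.tendsto.mono_left nhdsWithin_le_nhds
  refine squeeze_zero' (Eventually.of_forall fun δ => Real.iSup_nonneg fun _ => abs_nonneg _)
    ?_ hlim
  filter_upwards [Ioo_mem_nhdsGT hr] with δ hδ
  have : Nonempty (Ioc (r - δ) r) := ⟨⟨r, by linarith [hδ.1], le_rfl⟩⟩
  refine ciSup_le fun ρ => ?_
  have hs : 0 < r - δ := by linarith [hδ.2]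
  have hbound := abs_normalized_integral_sub_le (a := α / 2) (b := (d : ℝ) / 2) (by linarith)
    (by linarith) hs ρ.2.1 ρ.2.2
  rw [hP ρ (r - δ) hs ρ.2.1.le]
  refine le_trans (le_of_eq ?_) (mul_le_mul_of_nonneg_left hbound (abs_nonneg D))
  rw [← abs_mul, mul_div_cancel₀ α (two_ne_zero), neg_div]
  congr 1
  field_simp
end

section
/- For all real numbers s, ρ with 0 < s ≤ ρ, ∫_0^{(ρ^2/s^2)-1} (1 - (1+u)^{-d/2}) u^{α/2-1} du ≤ (1 - s^d/ρ^d) · (2/α) · (ρ^2 - s^2)^{α/2} · s^{-α}. (This is the key estimate, inequality (5.4) in the proof of Lemma 5.2.) -/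
open MeasureTheory Real Set

/-- At the endpoint `u = ρ ^ 2 / s ^ 2 - 1` the factor `(1 + u) ^ (-d / 2)` equals `s ^ d / ρ ^ d`. -/
lemma sq_div_sq_rpow_neg_half (d : ℕ) {s ρ : ℝ} (hs : 0 < s) (hρ : 0 < ρ) :
    (ρ ^ 2 / s ^ 2) ^ (-(d : ℝ) / 2) = s ^ d / ρ ^ d := by
  have h : (0 : ℝ) ≤ ρ / s := (div_pos hρ hs).le
  rw [← div_pow, ← rpow_natCast (ρ / s) 2, ← rpow_mul h,
    show ((2 : ℕ) : ℝ) * (-(d : ℝ) / 2) = -(d : ℝ) by push_cast; ring, rpow_neg h, rpow_natCast,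
    div_pow, inv_div]

lemma sq_div_sq_sub_one_rpow_half (α : ℝ) {s ρ : ℝ} (hs : 0 < s) (hsρ : s ≤ ρ) :
    (ρ ^ 2 / s ^ 2 - 1) ^ (α / 2) = (ρ ^ 2 - s ^ 2) ^ (α / 2) * s ^ (-α) := by
  have h : 0 ≤ ρ ^ 2 - s ^ 2 := sub_nonneg.2 (pow_le_pow_left₀ hs.le hsρ 2)
  rw [show ρ ^ 2 / s ^ 2 - 1 = (ρ ^ 2 - s ^ 2) / s ^ 2 by field_simp, div_rpow h (by positivity),
    ← rpow_natCast s 2, ← rpow_mul hs.le, show ((2 : ℕ) : ℝ) * (α / 2) = α by push_cast; ring,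
    rpow_neg hs.le, div_eq_mul_inv]

theorem key_estimate_escape_probability
    (d : ℕ) (hd : 2 ≤ d) (α : ℝ) (hα0 : 0 < α) (hα2 : α < 2)
    (s ρ : ℝ) (hs : 0 < s) (hsρ : s ≤ ρ) :
    ∫ u in Ioo (0 : ℝ) ((ρ ^ 2 / s ^ 2) - 1),
        (1 - (1 + u) ^ (-(d : ℝ) / 2)) * u ^ (α / 2 - 1)
      ≤ (1 - s ^ d / ρ ^ d) * (2 / α) * (ρ ^ 2 - s ^ 2) ^ (α / 2) * s ^ (-α) := by
  have hρ : 0 < ρ := hs.trans_le hsρ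
  set T : ℝ := ρ ^ 2 / s ^ 2 - 1 with hT
  have hT0 : 0 ≤ T := by
    rw [hT, sub_nonneg, one_le_div (by positivity)]
    exact pow_le_pow_left₀ hs.le hsρ 2
  have hend : (1 + T) ^ (-(d : ℝ) / 2) = s ^ d / ρ ^ d := by
    rw [hT, add_sub_cancel, sq_div_sq_rpow_neg_half d hs hρ]
  have hd0 : -(d : ℝ) / 2 ≤ 0 := by
    have : (0 : ℝ) ≤ d := d.cast_nonneg
    linarith
  have hint : IntegrableOn (fun u : ℝ => u ^ (α / 2 - 1)) (Ioo 0 T) :=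
    (intervalIntegrable_iff_integrableOn_Ioo_of_le hT0).1
      (intervalIntegral.intervalIntegrable_rpow' (by linarith))
  have hval : ∫ u in Ioo 0 T, u ^ (α / 2 - 1) = 2 / α * T ^ (α / 2) := by
    rw [← integral_Ioc_eq_integral_Ioo, ← intervalIntegral.integral_of_le hT0,
      integral_rpow (Or.inl (by linarith)), sub_add_cancel, zero_rpow (by positivity)]
    field_simp
    ring
  calc ∫ u in Ioo 0 T, (1 - (1 + u) ^ (-(d : ℝ) / 2)) * u ^ (α / 2 - 1)
      ≤ ∫ u in Ioo 0 T, (1 - s ^ d / ρ ^ d) * u ^ (α / 2 - 1) := by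
        refine integral_mono_of_nonneg ?_ (hint.const_mul _) ?_ <;>
          filter_upwards [ae_restrict_mem measurableSet_Ioo] with u hu
        · exact mul_nonneg (sub_nonneg.2 (rpow_le_one_of_one_le_of_nonpos
            (by linarith [hu.1]) hd0)) (rpow_nonneg hu.1.le _)
        · refine mul_le_mul_of_nonneg_right ?_ (rpow_nonneg hu.1.le _)
          rw [← hend]
          exact sub_le_sub_left (rpow_le_rpow_of_nonpos (by linarith [hu.1])
            (by linarith [hu.2]) hd0) _
    _ = (1 - s ^ d / ρ ^ d) * (2 / α) * (ρ ^ 2 - s ^ 2) ^ (α / 2) * s ^ (-α) := by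
        rw [integral_const_mul, hval, hT, sq_div_sq_sub_one_rpow_half α hs hsρ]
        ring
end

section
/- For every r > 0, lim_{δ→0+} (1/δ) ∫_{r-δ}^{r} ( (ρ^2 - (r-δ)^2) / (r^2 - ρ^2) )^{α/2} dρ = Γ(1-α/2) Γ(1+α/2). -/
open MeasureTheory Real Set Filter

/-- The function `t ↦ (t / (1 - t)) ^ a` is integrable on `(0, 1)` for `-1 < a < 1`, and its
integral is a product of values of the Gamma function. -/
lemma integral_div_one_sub_rpow {a : ℝ} (ha0 : -1 < a) (ha1 : a < 1) :
    IntervalIntegrable (fun t : ℝ => (t / (1 - t)) ^ a) volume 0 1 ∧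
      ∫ t in (0 : ℝ)..1, (t / (1 - t)) ^ a = Gamma (1 - a) * Gamma (1 + a) := by
  have hu : 0 < ((1 + a : ℝ) : ℂ).re := by rw [Complex.ofReal_re]; linarith
  have hv : 0 < ((1 - a : ℝ) : ℂ).re := by rw [Complex.ofReal_re]; linarith
  have heq : ∀ t ∈ Ioc (0 : ℝ) 1,
      (t : ℂ) ^ (((1 + a : ℝ) : ℂ) - 1) * (1 - (t : ℂ)) ^ (((1 - a : ℝ) : ℂ) - 1) =
        (((t / (1 - t)) ^ a : ℝ) : ℂ) := by
    intro t ht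
    have h1 : 0 ≤ 1 - t := sub_nonneg.2 ht.2
    rw [div_eq_mul_inv, Real.mul_rpow ht.1.le (inv_nonneg.2 h1), Real.inv_rpow h1,
      ← Real.rpow_neg h1, Complex.ofReal_mul, Complex.ofReal_cpow ht.1.le,
      Complex.ofReal_cpow h1]
    push_cast
    congr 2 <;> ring
  have hconv := Complex.betaIntegral_convergent hu hv
  have hbeta := Complex.Gamma_mul_Gamma_eq_betaIntegral hu hv
  constructor
  · rw [intervalIntegrable_iff_integrableOn_Ioc_of_le zero_le_one] at hconv ⊢
    have h := ((integrableOn_congr_fun heq measurableSet_Ioc).1 hconv).re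
    simpa only [IntegrableOn, RCLike.re_to_complex, Complex.ofReal_re] using h
  · have hI : Complex.betaIntegral ((1 + a : ℝ) : ℂ) ((1 - a : ℝ) : ℂ) =
        ((∫ t in (0 : ℝ)..1, (t / (1 - t)) ^ a : ℝ) : ℂ) := by
      rw [Complex.betaIntegral, ← intervalIntegral.integral_ofReal]
      refine intervalIntegral.integral_congr_ae (Eventually.of_forall fun t ht => heq t ?_)
      rwa [uIoc_of_le zero_le_one] at ht
    have hsum : ((1 + a : ℝ) : ℂ) + ((1 - a : ℝ) : ℂ) = 1 + 1 := by push_cast; ring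
    rw [hI, hsum, Complex.Gamma_add_one _ one_ne_zero, Complex.Gamma_one, Complex.Gamma_ofReal,
      Complex.Gamma_ofReal, one_mul, one_mul] at hbeta
    rw [mul_comm]
    exact_mod_cast hbeta.symm

/-- Rescaling `(r - δ, r)` to the unit interval. -/
lemma inv_mul_integral_Ioo_rescale (f : ℝ → ℝ) (r : ℝ) {δ : ℝ} (hδ : 0 < δ) :
    (1 / δ) * ∫ ρ in Ioo (r - δ) r, f ρ = ∫ t in (0 : ℝ)..1, f (r - δ + δ * t) := by
  have h := intervalIntegral.mul_integral_comp_add_mul (a := 0) (b := 1) (f := f) δ (r - δ)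
  rw [mul_zero, add_zero, mul_one, sub_add_cancel] at h
  rw [← integral_Ioc_eq_integral_Ioo, ← intervalIntegral.integral_of_le (by linarith), ← h]
  field_simp

/-- The rescaled ratio is the Beta kernel times a factor tending to `1`. -/
lemma rescaled_ratio_eq {r δ : ℝ} (hδ : 0 < δ) (t : ℝ) :
    ((r - δ + δ * t) ^ 2 - (r - δ) ^ 2) / (r ^ 2 - (r - δ + δ * t) ^ 2) =
      t / (1 - t) * ((2 * r - 2 * δ + δ * t) / (2 * r - δ + δ * t)) := by
  have hn : (r - δ + δ * t) ^ 2 - (r - δ) ^ 2 = δ * (t * (2 * r - 2 * δ + δ * t)) := by ring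
  have hd : r ^ 2 - (r - δ + δ * t) ^ 2 = δ * ((1 - t) * (2 * r - δ + δ * t)) := by ring
  rw [hn, hd, mul_div_mul_left _ _ hδ.ne', mul_div_mul_comm]

theorem ratio_integral_limit_beta
    (α : ℝ) (hα0 : 0 < α) (hα2 : α < 2) (r : ℝ) (hr : 0 < r) :
    Tendsto (fun δ : ℝ =>
        (1 / δ) * ∫ ρ in Ioo (r - δ) r,
          ((ρ ^ 2 - (r - δ) ^ 2) / (r ^ 2 - ρ ^ 2)) ^ (α / 2))
      (nhdsWithin 0 (Ioi 0))
      (nhds (Real.Gamma (1 - α / 2) * Real.Gamma (1 + α / 2))) := by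
  have ha0 : 0 < α / 2 := by linarith
  obtain ⟨hint, hval⟩ :=
    integral_div_one_sub_rpow (a := α / 2) (by linarith) (by linarith)
  rw [← hval]
  have hresc : (fun δ : ℝ => ∫ t in (0 : ℝ)..1,
      (t / (1 - t) * ((2 * r - 2 * δ + δ * t) / (2 * r - δ + δ * t))) ^ (α / 2))
      =ᶠ[nhdsWithin 0 (Ioi 0)] fun δ : ℝ =>
        (1 / δ) * ∫ ρ in Ioo (r - δ) r,
          ((ρ ^ 2 - (r - δ) ^ 2) / (r ^ 2 - ρ ^ 2)) ^ (α / 2) := by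
    filter_upwards [self_mem_nhdsWithin] with δ hδ
    rw [inv_mul_integral_Ioo_rescale
      (fun ρ => ((ρ ^ 2 - (r - δ) ^ 2) / (r ^ 2 - ρ ^ 2)) ^ (α / 2)) r hδ]
    simp only [rescaled_ratio_eq (mem_Ioi.1 hδ)]
  refine Tendsto.congr' hresc ?_
  refine intervalIntegral.tendsto_integral_filter_of_dominated_convergence
    (fun t => (t / (1 - t)) ^ (α / 2)) ?_ ?_ hint ?_
  · exact Eventually.of_forall fun δ => Measurable.aestronglyMeasurable (by fun_prop)
  · filter_upwards [Ioo_mem_nhdsGT hr] with δ hδ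
    refine Eventually.of_forall fun t ht => ?_
    rw [uIoc_of_le zero_le_one] at ht
    have hδt : 0 < δ * t := mul_pos hδ.1 ht.1
    have hk : 0 ≤ t / (1 - t) := div_nonneg ht.1.le (sub_nonneg.2 ht.2)
    have hd : 0 < 2 * r - δ + δ * t := by linarith [hδ.2]
    have hq0 : 0 ≤ (2 * r - 2 * δ + δ * t) / (2 * r - δ + δ * t) :=
      div_nonneg (by linarith [hδ.2]) hd.le
    have hq1 : (2 * r - 2 * δ + δ * t) / (2 * r - δ + δ * t) ≤ 1 :=
      (div_le_one hd).2 (by linarith [hδ.1])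
    rw [Real.norm_of_nonneg (Real.rpow_nonneg (mul_nonneg hk hq0) _)]
    exact Real.rpow_le_rpow (mul_nonneg hk hq0) (mul_le_of_le_one_right hk hq1) ha0.le
  · refine Eventually.of_forall fun t _ => ?_
    have hq : ContinuousAt
        (fun δ : ℝ => (t / (1 - t) * ((2 * r - 2 * δ + δ * t) / (2 * r - δ + δ * t))) ^ (α / 2))
        0 := by
      refine ContinuousAt.rpow_const (ContinuousAt.mul continuousAt_const
        (ContinuousAt.div (by fun_prop) (by fun_prop) ?_)) (Or.inr ha0.le)
      simpa using hr.ne'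
    have h := hq.tendsto.mono_left (nhdsWithin_le_nhds (s := Ioi 0))
    simpa [hr.ne'] using h
end

section
/- Let r > 0, set D = Γ(d/2) / (Γ((d-α)/2) Γ(α/2)) and, for 0 < s ≤ ρ, P(ρ,s) = D ∫_0^{(ρ^2/s^2)-1} (u+1)^{-d/2} u^{α/2-1} du. Then lim_{δ→0+} (1/δ) ∫_{r-δ}^{r} P(ρ, r-δ) · (r^2 - ρ^2)^{-α/2} dρ = (2/α) D Γ(1-α/2) Γ(1+α/2) r^{-α}. (This is the limit (5.7) computed in the proof of Theorem 1.1.) -/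
open MeasureTheory Real Set Filter

/-- The Euler beta integral `B(1 + a, 1 - a)` transported to the interval `(s, r)`. -/
lemma setIntegral_sub_rpow_mul_sub_rpow_neg {a s r : ℝ} (ha0 : 0 < a) (ha1 : a < 1)
    (hsr : s < r) :
    ∫ x in Ioo s r, (x - s) ^ a * (r - x) ^ (-a) =
      (r - s) * (Real.Gamma (1 + a) * Real.Gamma (1 - a)) := by
  have hpos : 0 < r - s := sub_pos.mpr hsr
  have hscaled := Complex.betaIntegral_scaled ((1 + a : ℝ) : ℂ) ((1 - a : ℝ) : ℂ) hpos
  have hgamma := Complex.Gamma_mul_Gamma_eq_betaIntegral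
    (s := ((1 + a : ℝ) : ℂ)) (t := ((1 - a : ℝ) : ℂ))
    (by rw [Complex.ofReal_re]; linarith) (by rw [Complex.ofReal_re]; linarith)
  have htwo : ((1 + a : ℝ) : ℂ) + ((1 - a : ℝ) : ℂ) = ((2 : ℝ) : ℂ) := by push_cast; ring
  rw [htwo, Complex.Gamma_ofReal, Complex.Gamma_ofReal, Complex.Gamma_ofReal, Real.Gamma_two,
    Complex.ofReal_one, one_mul] at hgamma
  rw [htwo, ← hgamma] at hscaled
  have hcast : ∫ x in (0 : ℝ)..(r - s),
      (x : ℂ) ^ (((1 + a : ℝ) : ℂ) - 1) * (((r - s : ℝ) : ℂ) - x) ^ (((1 - a : ℝ) : ℂ) - 1) =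
      ((∫ x in (0 : ℝ)..(r - s), x ^ a * (r - s - x) ^ (-a) : ℝ) : ℂ) := by
    rw [← intervalIntegral.integral_ofReal]
    refine intervalIntegral.integral_congr fun x hx => ?_
    rw [uIcc_of_le hpos.le] at hx
    rw [Complex.ofReal_mul, Complex.ofReal_cpow hx.1, Complex.ofReal_cpow (sub_nonneg.mpr hx.2)]
    push_cast
    congr 2 <;> ring
  rw [hcast] at hscaled
  have hexp : ((2 : ℝ) : ℂ) - 1 = 1 := by push_cast; norm_num
  rw [hexp, Complex.cpow_one] at hscaled
  have hreal : ∫ x in (0 : ℝ)..(r - s), x ^ a * (r - s - x) ^ (-a) =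
      (r - s) * (Real.Gamma (1 + a) * Real.Gamma (1 - a)) := by exact_mod_cast hscaled
  rw [← hreal, ← integral_Ioc_eq_integral_Ioo, ← intervalIntegral.integral_of_le hsr.le]
  have hshift := intervalIntegral.integral_comp_sub_right (a := s) (b := r)
    (fun x : ℝ => x ^ a * (r - s - x) ^ (-a)) s
  rw [sub_self] at hshift
  rw [← hshift]
  refine intervalIntegral.integral_congr fun x _ => ?_
  simp only [sub_sub_sub_cancel_right]

lemma integrableOn_sub_rpow_mul_sub_rpow_neg {a s r : ℝ} (ha0 : 0 < a) (ha1 : a < 1)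
    (hsr : s < r) :
    IntegrableOn (fun x => (x - s) ^ a * (r - x) ^ (-a)) (Ioo s r) := by
  rw [← integrableOn_Ioc_iff_integrableOn_Ioo,
    ← intervalIntegrable_iff_integrableOn_Ioc_of_le hsr.le]
  have h : IntervalIntegrable (fun x : ℝ => x ^ (-a)) volume (r - s) (r - r) :=
    intervalIntegral.intervalIntegrable_rpow' (by linarith)
  have h' : IntervalIntegrable (fun x : ℝ => (r - x) ^ (-a)) volume s r := by
    simpa using h.comp_sub_left r
  refine h'.continuousOn_mul (Continuous.continuousOn ?_)
  exact (continuous_id.sub continuous_const).rpow_const fun _ => Or.inr ha0.le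

section Truncated

variable {a p : ℝ}

lemma integrableOn_rpow_sub_one (ha : 0 < a) (M : ℝ) :
    IntegrableOn (fun u : ℝ => u ^ (a - 1)) (Ioo 0 M) := by
  rcases le_or_gt 0 M with hM | hM
  · rw [← integrableOn_Ioc_iff_integrableOn_Ioo,
      ← intervalIntegrable_iff_integrableOn_Ioc_of_le hM]
    exact intervalIntegral.intervalIntegrable_rpow' (by linarith)
  · simp [Ioo_eq_empty_of_le hM.le]

lemma setIntegral_rpow_sub_one (ha : 0 < a) {M : ℝ} (hM : 0 ≤ M) :
    ∫ u in Ioo 0 M, u ^ (a - 1) = M ^ a / a := by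
  rw [← integral_Ioc_eq_integral_Ioo, ← intervalIntegral.integral_of_le hM,
    integral_rpow (Or.inl (by linarith))]
  simp [Real.zero_rpow ha.ne']

lemma integrableOn_add_one_rpow_mul_rpow (ha : 0 < a) (hp : 0 ≤ p) (M : ℝ) :
    IntegrableOn (fun u : ℝ => (u + 1) ^ (-p) * u ^ (a - 1)) (Ioo 0 M) := by
  refine (integrableOn_rpow_sub_one ha M).mono' (by fun_prop) ?_
  refine (ae_restrict_iff' measurableSet_Ioo).mpr (Eventually.of_forall fun u hu => ?_)
  have h1 : 0 < u ^ (a - 1) := Real.rpow_pos_of_pos hu.1 _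
  have h2 : 0 < (u + 1) ^ (-p) := Real.rpow_pos_of_pos (by linarith [hu.1]) _
  rw [Real.norm_of_nonneg (by positivity)]
  exact mul_le_of_le_one_left h1.le
    (Real.rpow_le_one_of_one_le_of_nonpos (by linarith [hu.1]) (by linarith))

lemma setIntegral_add_one_rpow_mul_rpow_le (ha : 0 < a) (hp : 0 ≤ p) {M : ℝ} (hM : 0 ≤ M) :
    ∫ u in Ioo 0 M, (u + 1) ^ (-p) * u ^ (a - 1) ≤ M ^ a / a := by
  rw [← setIntegral_rpow_sub_one ha hM]
  refine setIntegral_mono_on (integrableOn_add_one_rpow_mul_rpow ha hp M)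
    (integrableOn_rpow_sub_one ha M) measurableSet_Ioo fun u hu => ?_
  exact mul_le_of_le_one_left (Real.rpow_nonneg hu.1.le _)
    (Real.rpow_le_one_of_one_le_of_nonpos (by linarith [hu.1]) (by linarith))

lemma le_setIntegral_add_one_rpow_mul_rpow (ha : 0 < a) (hp : 0 ≤ p) {M : ℝ} (hM : 0 ≤ M) :
    (M + 1) ^ (-p) * (M ^ a / a) ≤ ∫ u in Ioo 0 M, (u + 1) ^ (-p) * u ^ (a - 1) := by
  rw [← setIntegral_rpow_sub_one ha hM, ← integral_const_mul]
  refine setIntegral_mono_on ((integrableOn_rpow_sub_one ha M).const_mul _)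
    (integrableOn_add_one_rpow_mul_rpow ha hp M) measurableSet_Ioo fun u hu => ?_
  exact mul_le_mul_of_nonneg_right (Real.rpow_le_rpow_of_nonpos (by linarith [hu.1])
    (by linarith [hu.2]) (by linarith)) (Real.rpow_nonneg hu.1.le _)

lemma monotone_setIntegral_add_one_rpow_mul_rpow (ha : 0 < a) (hp : 0 ≤ p) :
    Monotone fun M : ℝ => ∫ u in Ioo 0 M, (u + 1) ^ (-p) * u ^ (a - 1) := by
  intro M N hMN
  refine setIntegral_mono_set (integrableOn_add_one_rpow_mul_rpow ha hp N) ?_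
    (Ioo_subset_Ioo_right hMN).eventuallyLE
  refine (ae_restrict_iff' measurableSet_Ioo).mpr (Eventually.of_forall fun u hu => ?_)
  exact mul_nonneg (Real.rpow_nonneg (by linarith [hu.1]) _) (Real.rpow_nonneg hu.1.le _)

/-- Upper bound for the radial integrand near the boundary. -/
lemma radial_integrand_le (ha : 0 < a) (hp : 0 ≤ p) {s r x : ℝ} (hs : 0 < s)
    (hx : x ∈ Ioo s r) :
    (∫ u in Ioo 0 (x ^ 2 / s ^ 2 - 1), (u + 1) ^ (-p) * u ^ (a - 1)) * (r ^ 2 - x ^ 2) ^ (-a) ≤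
      1 / a * (2 * r / s ^ 2) ^ a * (2 * s) ^ (-a) * ((x - s) ^ a * (r - x) ^ (-a)) := by
  obtain ⟨h1, h2⟩ := hx
  have hxs : 0 < x - s := sub_pos.mpr h1
  have hrx : 0 < r - x := sub_pos.mpr h2
  have hr : 0 < r := by linarith
  have hM : x ^ 2 / s ^ 2 - 1 = (x - s) * ((x + s) / s ^ 2) := by field_simp; ring
  have hM0 : 0 ≤ x ^ 2 / s ^ 2 - 1 := by
    rw [hM]; have : 0 < x + s := by linarith
    positivity
  have hinner : ∫ u in Ioo 0 (x ^ 2 / s ^ 2 - 1), (u + 1) ^ (-p) * u ^ (a - 1) ≤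
      ((x - s) ^ a * (2 * r / s ^ 2) ^ a) / a := by
    refine (setIntegral_add_one_rpow_mul_rpow_le ha hp hM0).trans ?_
    rw [← Real.mul_rpow hxs.le (by positivity)]
    refine div_le_div_of_nonneg_right (Real.rpow_le_rpow hM0 ?_ ha.le) ha.le
    rw [hM]
    gcongr
    linarith
  have houter : (r ^ 2 - x ^ 2) ^ (-a) ≤ (r - x) ^ (-a) * (2 * s) ^ (-a) := by
    rw [← Real.mul_rpow hrx.le (by positivity)]
    refine Real.rpow_le_rpow_of_nonpos (by positivity) ?_ (by linarith)
    nlinarith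
  calc _ ≤ ((x - s) ^ a * (2 * r / s ^ 2) ^ a) / a * ((r - x) ^ (-a) * (2 * s) ^ (-a)) :=
        mul_le_mul hinner houter (Real.rpow_nonneg (by nlinarith) _) (by positivity)
    _ = _ := by ring

/-- Lower bound for the radial integrand near the boundary. -/
lemma le_radial_integrand (ha : 0 < a) (hp : 0 ≤ p) {s r x : ℝ} (hs : 0 < s)
    (hx : x ∈ Ioo s r) :
    (r ^ 2 / s ^ 2) ^ (-p) * (1 / a * (2 * s / s ^ 2) ^ a * (2 * r) ^ (-a)) *
        ((x - s) ^ a * (r - x) ^ (-a)) ≤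
      (∫ u in Ioo 0 (x ^ 2 / s ^ 2 - 1), (u + 1) ^ (-p) * u ^ (a - 1)) *
        (r ^ 2 - x ^ 2) ^ (-a) := by
  obtain ⟨h1, h2⟩ := hx
  have hxs : 0 < x - s := sub_pos.mpr h1
  have hrx : 0 < r - x := sub_pos.mpr h2
  have hx0 : 0 < x := by linarith
  have hr : 0 < r := by linarith
  have hM : x ^ 2 / s ^ 2 - 1 = (x - s) * ((x + s) / s ^ 2) := by field_simp; ring
  have hM0 : 0 ≤ x ^ 2 / s ^ 2 - 1 := by rw [hM]; positivity
  have hinner : (r ^ 2 / s ^ 2) ^ (-p) * (((x - s) ^ a * (2 * s / s ^ 2) ^ a) / a) ≤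
      ∫ u in Ioo 0 (x ^ 2 / s ^ 2 - 1), (u + 1) ^ (-p) * u ^ (a - 1) := by
    refine le_trans ?_ (le_setIntegral_add_one_rpow_mul_rpow ha hp hM0)
    rw [← Real.mul_rpow hxs.le (by positivity), sub_add_cancel]
    refine mul_le_mul (Real.rpow_le_rpow_of_nonpos (by positivity) ?_ (by linarith))
      (div_le_div_of_nonneg_right (Real.rpow_le_rpow (by positivity) ?_ ha.le) ha.le)
      (by positivity) (by positivity)
    · gcongr
    · rw [hM]
      gcongr
      linarith
  have houter : (r - x) ^ (-a) * (2 * r) ^ (-a) ≤ (r ^ 2 - x ^ 2) ^ (-a) := by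
    rw [← Real.mul_rpow hrx.le (by positivity)]
    refine Real.rpow_le_rpow_of_nonpos (by nlinarith) ?_ (by linarith)
    nlinarith
  calc _ = (r ^ 2 / s ^ 2) ^ (-p) * (((x - s) ^ a * (2 * s / s ^ 2) ^ a) / a) *
        ((r - x) ^ (-a) * (2 * r) ^ (-a)) := by ring
    _ ≤ _ := mul_le_mul hinner houter (by positivity) (le_trans (by positivity) hinner)

lemma integrableOn_radial_integrand (ha0 : 0 < a) (ha1 : a < 1) (hp : 0 ≤ p) {s r : ℝ}
    (hs : 0 < s) (hsr : s < r) :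
    IntegrableOn (fun x => (∫ u in Ioo 0 (x ^ 2 / s ^ 2 - 1), (u + 1) ^ (-p) * u ^ (a - 1)) *
      (r ^ 2 - x ^ 2) ^ (-a)) (Ioo s r) := by
  refine ((integrableOn_sub_rpow_mul_sub_rpow_neg ha0 ha1 hsr).const_mul
    (1 / a * (2 * r / s ^ 2) ^ a * (2 * s) ^ (-a))).mono' ?_ ?_
  · have h := (monotone_setIntegral_add_one_rpow_mul_rpow ha0 hp).measurable
    have h' : Measurable fun x : ℝ => x ^ 2 / s ^ 2 - 1 := by fun_prop
    exact ((h.comp h').mul (by fun_prop)).aestronglyMeasurable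
  · refine (ae_restrict_iff' measurableSet_Ioo).mpr (Eventually.of_forall fun x hx => ?_)
    rw [Real.norm_of_nonneg]
    · exact radial_integrand_le ha0 hp hs hx
    · refine le_trans ?_ (le_radial_integrand ha0 hp hs hx)
      have h1 : 0 < x - s := sub_pos.mpr hx.1
      have h2 : 0 < r - x := sub_pos.mpr hx.2
      have h3 : 0 < r := hs.trans hsr
      positivity

/-- The normalized radial integral converges as the inner radius `r - δ` tends to `r`. -/
lemma tendsto_radial_integral (ha0 : 0 < a) (ha1 : a < 1) (hp : 0 ≤ p) {r : ℝ} (hr : 0 < r) :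
    Tendsto (fun δ : ℝ => (1 / δ) * ∫ x in Ioo (r - δ) r,
        (∫ u in Ioo 0 (x ^ 2 / (r - δ) ^ 2 - 1), (u + 1) ^ (-p) * u ^ (a - 1)) *
          (r ^ 2 - x ^ 2) ^ (-a))
      (nhdsWithin 0 (Ioi 0))
      (nhds (1 / a * r ^ (-(2 * a)) * (Real.Gamma (1 + a) * Real.Gamma (1 - a)))) := by
  set B := Real.Gamma (1 + a) * Real.Gamma (1 - a)
  have hval : (2 * r / r ^ 2) ^ a * (2 * r) ^ (-a) = r ^ (-(2 * a)) := by
    rw [show 2 * r / r ^ 2 = 2 * r * r ^ (-2 : ℝ) by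
      rw [Real.rpow_neg hr.le, Real.rpow_two, div_eq_mul_inv],
      Real.mul_rpow (by positivity) (by positivity), mul_right_comm,
      ← Real.rpow_add (by positivity), add_neg_cancel, Real.rpow_zero, one_mul,
      ← Real.rpow_mul hr.le, neg_mul]
  have hlower : Tendsto (fun δ : ℝ => (r ^ 2 / (r - δ) ^ 2) ^ (-p) *
      (1 / a * (2 * (r - δ) / (r - δ) ^ 2) ^ a * (2 * r) ^ (-a)) * B)
      (nhdsWithin 0 (Ioi 0)) (nhds (1 / a * r ^ (-(2 * a)) * B)) := by
    have hc : ContinuousAt (fun δ : ℝ => (r ^ 2 / (r - δ) ^ 2) ^ (-p) *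
        (1 / a * (2 * (r - δ) / (r - δ) ^ 2) ^ a * (2 * r) ^ (-a)) * B) 0 := by
      have h0 : (r - 0) ^ 2 ≠ 0 := by rw [sub_zero]; positivity
      have h1 : r ^ 2 / (r - 0) ^ 2 ≠ 0 := by rw [sub_zero]; positivity
      have h2 : ContinuousAt (fun δ : ℝ => (r ^ 2 / (r - δ) ^ 2) ^ (-p)) 0 :=
        ContinuousAt.rpow_const (ContinuousAt.div₀ (by fun_prop) (by fun_prop) h0) (Or.inl h1)
      have h3 : ContinuousAt (fun δ : ℝ => (2 * (r - δ) / (r - δ) ^ 2) ^ a) 0 :=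
        ContinuousAt.rpow_const (ContinuousAt.div₀ (by fun_prop) (by fun_prop) h0) (Or.inr ha0.le)
      exact (h2.mul ((continuousAt_const.mul h3).mul continuousAt_const)).mul continuousAt_const
    have ht := hc.tendsto.mono_left (nhdsWithin_le_nhds (s := Ioi 0))
    rwa [sub_zero, div_self (by positivity), Real.one_rpow, one_mul, mul_assoc (1 / a), hval] at ht
  have hupper : Tendsto (fun δ : ℝ =>
      1 / a * (2 * r / (r - δ) ^ 2) ^ a * (2 * (r - δ)) ^ (-a) * B)
      (nhdsWithin 0 (Ioi 0)) (nhds (1 / a * r ^ (-(2 * a)) * B)) := by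
    have hc : ContinuousAt (fun δ : ℝ =>
        1 / a * (2 * r / (r - δ) ^ 2) ^ a * (2 * (r - δ)) ^ (-a) * B) 0 := by
      have h0 : (r - 0) ^ 2 ≠ 0 := by rw [sub_zero]; positivity
      have h1 : 2 * (r - 0) ≠ 0 := by rw [sub_zero]; positivity
      have h2 : ContinuousAt (fun δ : ℝ => (2 * r / (r - δ) ^ 2) ^ a) 0 :=
        ContinuousAt.rpow_const (ContinuousAt.div₀ (by fun_prop) (by fun_prop) h0) (Or.inr ha0.le)
      have h3 : ContinuousAt (fun δ : ℝ => (2 * (r - δ)) ^ (-a)) 0 :=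
        ContinuousAt.rpow_const (by fun_prop) (Or.inl h1)
      exact ((continuousAt_const.mul h2).mul h3).mul continuousAt_const
    have ht := hc.tendsto.mono_left (nhdsWithin_le_nhds (s := Ioi 0))
    rwa [sub_zero, mul_assoc (1 / a), hval] at ht
  have hnear : ∀ᶠ δ in nhdsWithin (0 : ℝ) (Ioi 0), δ ∈ Ioo 0 r := Ioo_mem_nhdsGT hr
  have hscale : ∀ δ ∈ Ioo 0 r, ∀ C : ℝ,
      C * B = 1 / δ * ∫ x in Ioo (r - δ) r, C * ((x - (r - δ)) ^ a * (r - x) ^ (-a)) := by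
    intro δ hδ C
    rw [integral_const_mul, setIntegral_sub_rpow_mul_sub_rpow_neg ha0 ha1 (by linarith [hδ.1]),
      sub_sub_cancel]
    rw [mul_left_comm C δ, ← mul_assoc (1 / δ), one_div_mul_cancel hδ.1.ne', one_mul]
  refine tendsto_of_tendsto_of_tendsto_of_le_of_le' hlower hupper ?_ ?_
  · filter_upwards [hnear] with δ hδ
    have hs : 0 < r - δ := sub_pos.mpr hδ.2
    have hsr : r - δ < r := by linarith [hδ.1]
    rw [hscale δ hδ]
    exact mul_le_mul_of_nonneg_left (setIntegral_mono_on
      ((integrableOn_sub_rpow_mul_sub_rpow_neg ha0 ha1 hsr).const_mul _)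
      (integrableOn_radial_integrand ha0 ha1 hp hs hsr) measurableSet_Ioo
      fun x hx => le_radial_integrand ha0 hp hs hx) (one_div_nonneg.mpr hδ.1.le)
  · filter_upwards [hnear] with δ hδ
    have hs : 0 < r - δ := sub_pos.mpr hδ.2
    have hsr : r - δ < r := by linarith [hδ.1]
    rw [hscale δ hδ]
    exact mul_le_mul_of_nonneg_left (setIntegral_mono_on
      (integrableOn_radial_integrand ha0 ha1 hp hs hsr)
      ((integrableOn_sub_rpow_mul_sub_rpow_neg ha0 ha1 hsr).const_mul _) measurableSet_Ioo
      fun x hx => radial_integrand_le ha0 hp hs hx) (one_div_nonneg.mpr hδ.1.le)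

end Truncated

theorem escape_probability_boundary_limit
    (d : ℕ) (hd : 2 ≤ d) (α : ℝ) (hα0 : 0 < α) (hα2 : α < 2)
    (r : ℝ) (hr : 0 < r)
    (D : ℝ) (hD : D = Real.Gamma ((d : ℝ) / 2) /
      (Real.Gamma (((d : ℝ) - α) / 2) * Real.Gamma (α / 2)))
    (P : ℝ → ℝ → ℝ)
    (hP : ∀ ρ s : ℝ, 0 < s → s ≤ ρ →
      P ρ s = D * ∫ u in Ioo (0 : ℝ) ((ρ ^ 2 / s ^ 2) - 1),
        (u + 1) ^ (-(d : ℝ) / 2) * u ^ (α / 2 - 1)) :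
    Tendsto (fun δ : ℝ =>
        (1 / δ) * ∫ ρ in Ioo (r - δ) r, P ρ (r - δ) * (r ^ 2 - ρ ^ 2) ^ (-(α / 2)))
      (nhdsWithin 0 (Ioi 0))
      (nhds ((2 / α) * D * Real.Gamma (1 - α / 2) * Real.Gamma (1 + α / 2) * r ^ (-α))) := by
  have h := (tendsto_radial_integral (a := α / 2) (p := (d : ℝ) / 2) (by linarith) (by linarith)
    (by positivity) hr).const_mul D
  rw [show D * (1 / (α / 2) * r ^ (-(2 * (α / 2))) *
      (Real.Gamma (1 + α / 2) * Real.Gamma (1 - α / 2))) =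
      (2 / α) * D * Real.Gamma (1 - α / 2) * Real.Gamma (1 + α / 2) * r ^ (-α) by
    rw [mul_div_cancel₀ α two_ne_zero, one_div_div]; ring] at h
  refine h.congr' ?_
  filter_upwards [Ioo_mem_nhdsGT hr] with δ hδ
  rw [mul_left_comm, ← integral_const_mul]
  congr 1
  refine setIntegral_congr_fun measurableSet_Ioo fun x hx => ?_
  rw [hP x (r - δ) (sub_pos.mpr hδ.2) hx.1.le, mul_assoc, neg_div]
end

section
/- Let K denote inversion through the unit sphere, Kx = x/|x|^2 for x ∈ ℝ^d \ {0}, and for a, b ∈ ℝ^d with a ≠ b define h(a,b) = 2^{-α} π^{-d/2} (Γ(d/2)/Γ(α/2)^2) |a-b|^{α-d} ∫_0^{(1-|a|^2)(1-|b|^2)/|a-b|^2} (u+1)^{-d/2} u^{α/2-1} du. Then for all x, z ∈ ℝ^d with |x| > 1, |z| > 1 and x ≠ z, one has (|x|^{α-d}/|z|^{α-d}) · (|z|^{2α}/|z|^{2d}) · h(Kx, Kz) = 2^{-α} π^{-d/2} (Γ(d/2)/Γ(α/2)^2) |x-z|^{α-d} ∫_0^{(|x|^2-1)(|z|^2-1)/|x-z|^2}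 (u+1)^{-d/2} u^{α/2-1} du; in particular |Kx - Kz| = |x-z|/(|x||z|) and (1-|Kx|^2)(1-|Kz|^2)/|Kx-Kz|^2 = (|x|^2-1)(|z|^2-1)/|x-z|^2. (This is the content of Lemma 6.1, transforming the resolvent density inside the unit ball into the resolvent density outside it via the Riesz–Bogdan–Żak transform.) -/
open MeasureTheory Real Set

/-- Inversion through the unit sphere: `K x = x / |x|²`. -/
noncomputable def sphereInversion {d : ℕ} (x : EuclideanSpace ℝ (Fin d)) :
    EuclideanSpace ℝ (Fin d) :=
  (‖x‖ ^ 2)⁻¹ • x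

/-- The resolvent density `h(a,b)` of the stable process killed on exiting the unit ball. -/
noncomputable def ballResolvent (d : ℕ) (α : ℝ) (a b : EuclideanSpace ℝ (Fin d)) : ℝ :=
  2 ^ (-α) * π ^ (-(d : ℝ) / 2) * (Real.Gamma ((d : ℝ) / 2) / Real.Gamma (α / 2) ^ 2) *
    ‖a - b‖ ^ (α - (d : ℝ)) *
    ∫ u in Ioo (0 : ℝ) ((1 - ‖a‖ ^ 2) * (1 - ‖b‖ ^ 2) / ‖a - b‖ ^ 2),
      (u + 1) ^ (-(d : ℝ) / 2) * u ^ (α / 2 - 1)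

theorem norm_sphereInversion {d : ℕ} (x : EuclideanSpace ℝ (Fin d)) :
    ‖sphereInversion x‖ = ‖x‖⁻¹ := by
  rcases eq_or_ne x 0 with rfl | hx
  · simp [sphereInversion]
  · have hx' : ‖x‖ ≠ 0 := norm_ne_zero_iff.2 hx
    rw [sphereInversion, norm_smul, norm_inv, norm_pow, norm_norm]
    field_simp

theorem norm_sphereInversion_sub {d : ℕ} {x z : EuclideanSpace ℝ (Fin d)}
    (hx : x ≠ 0) (hz : z ≠ 0) :
    ‖sphereInversion x - sphereInversion z‖ = ‖x - z‖ / (‖x‖ * ‖z‖) := by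
  have h := dist_div_norm_sq_smul hx hz 1
  simpa [sphereInversion, dist_eq_norm, div_eq_inv_mul] using h

/-- The quantity `(1 - |x|²)(1 - |z|²) / |x - z|²` is invariant under inversion. -/
theorem sphereInversion_ratio {d : ℕ} {x z : EuclideanSpace ℝ (Fin d)}
    (hx : x ≠ 0) (hz : z ≠ 0) :
    (1 - ‖sphereInversion x‖ ^ 2) * (1 - ‖sphereInversion z‖ ^ 2) /
        ‖sphereInversion x - sphereInversion z‖ ^ 2
      = (‖x‖ ^ 2 - 1) * (‖z‖ ^ 2 - 1) / ‖x - z‖ ^ 2 := by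
  have hx' : ‖x‖ ≠ 0 := norm_ne_zero_iff.2 hx
  have hz' : ‖z‖ ≠ 0 := norm_ne_zero_iff.2 hz
  rw [norm_sphereInversion, norm_sphereInversion, norm_sphereInversion_sub hx hz]
  field_simp

theorem rpow_inversion_factor {r s t : ℝ} (hr : 0 < r) (hs : 0 < s) (ht : 0 ≤ t)
    (α : ℝ) (d : ℕ) :
    r ^ (α - (d : ℝ)) / s ^ (α - (d : ℝ)) * (s ^ (2 * α) / s ^ (2 * d)) *
        (t / (r * s)) ^ (α - (d : ℝ))
      = t ^ (α - (d : ℝ)) := by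
  have hsq : s ^ (2 * α) / s ^ (2 * d) = s ^ (α - (d : ℝ)) * s ^ (α - (d : ℝ)) := by
    rw [← rpow_natCast s (2 * d), ← rpow_sub hs, ← rpow_add hs]
    congr 1
    push_cast
    ring
  have hr' : r ^ (α - (d : ℝ)) ≠ 0 := (rpow_pos_of_pos hr _).ne'
  have hs' : s ^ (α - (d : ℝ)) ≠ 0 := (rpow_pos_of_pos hs _).ne'
  rw [hsq, div_rpow ht (mul_pos hr hs).le, mul_rpow hr.le hs.le]
  field_simp

theorem riesz_bogdan_zak_resolvent_transform
    (d : ℕ) (hd : 2 ≤ d) (α : ℝ) (hα0 : 0 < α) (hα2 : α < 2)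
    (x z : EuclideanSpace ℝ (Fin d)) (hx : 1 < ‖x‖) (hz : 1 < ‖z‖) (hxz : x ≠ z) :
    (‖x‖ ^ (α - (d : ℝ)) / ‖z‖ ^ (α - (d : ℝ))) * (‖z‖ ^ (2 * α) / ‖z‖ ^ (2 * d)) *
        ballResolvent d α (sphereInversion x) (sphereInversion z)
      = 2 ^ (-α) * π ^ (-(d : ℝ) / 2) *
          (Real.Gamma ((d : ℝ) / 2) / Real.Gamma (α / 2) ^ 2) * ‖x - z‖ ^ (α - (d : ℝ)) *
          ∫ u in Ioo (0 : ℝ) ((‖x‖ ^ 2 - 1) * (‖z‖ ^ 2 - 1) / ‖x - z‖ ^ 2),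
            (u + 1) ^ (-(d : ℝ) / 2) * u ^ (α / 2 - 1)
    ∧ ‖sphereInversion x - sphereInversion z‖ = ‖x - z‖ / (‖x‖ * ‖z‖)
    ∧ (1 - ‖sphereInversion x‖ ^ 2) * (1 - ‖sphereInversion z‖ ^ 2) /
          ‖sphereInversion x - sphereInversion z‖ ^ 2
        = (‖x‖ ^ 2 - 1) * (‖z‖ ^ 2 - 1) / ‖x - z‖ ^ 2 := by
  have hx0 : 0 < ‖x‖ := one_pos.trans hx
  have hz0 : 0 < ‖z‖ := one_pos.trans hz
  have hsub := norm_sphereInversion_sub (norm_pos_iff.1 hx0) (norm_pos_iff.1 hz0)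
  have hratio := sphereInversion_ratio (norm_pos_iff.1 hx0) (norm_pos_iff.1 hz0)
  refine ⟨?_, hsub, hratio⟩
  rw [ballResolvent, hratio, hsub,
    ← rpow_inversion_factor hx0 hz0 (norm_nonneg (x - z)) α d]
  ring
end

section
/- For all x, v ∈ ℝ^d and r > 0 with |v| < r < |x|, (Γ(d/2)^2 / (π^d |Γ(-α/2)| Γ(α/2))) ∫_{r<|z|<|x|} (|x|^2 - |z|^2)^{α/2} / ( (|z|^2 - |v|^2)^{α/2} |z - v|^d |z - x|^d ) dz = π^{-(d/2+1)} Γ(d/2) sin(πα/2) · (|x|^2 - r^2)^{α/2} / ( (r^2 - |v|^2)^{α/2} |x - v|^d ). (This identity expresses that integrating out the point-of-closest-reach variable in Corollary 1.4(i) recovers the Blumenthal–Getoor–Ray first-entrance density of the ball of radius r.) -/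
open MeasureTheory Real Set

/-- Cauchy–Schlömilch substitution. -/
theorem lintegral_Ioi_deriv_mul_comp_sub_div {p s : ℝ} (hp : 0 < p) (hs : 0 < s)
    (F : ℝ → ENNReal) :
    ∫⁻ y in Ioi (0 : ℝ), ENNReal.ofReal (s + p / y ^ 2) * F (s * y - p / y) = ∫⁻ w, F w := by
  have hmono : StrictMonoOn (fun y : ℝ ↦ s * y - p / y) (Ioi 0) := by
    intro a ha b hb hab
    have ha' : 0 < a := ha
    have : p / b < p / a := div_lt_div_of_pos_left hp ha' hab
    have : s * a < s * b := mul_lt_mul_of_pos_left hab hs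
    dsimp only
    linarith
  have himage : (fun y : ℝ ↦ s * y - p / y) '' Ioi 0 = univ := by
    refine eq_univ_of_forall fun w ↦ ?_
    have hlt : |w| < √(w ^ 2 + 4 * p * s) := by
      rw [← sqrt_sq_eq_abs]
      exact sqrt_lt_sqrt (sq_nonneg w) (by nlinarith [mul_pos hp hs])
    have hsq : √(w ^ 2 + 4 * p * s) ^ 2 = w ^ 2 + 4 * p * s := sq_sqrt (by positivity)
    have hpos : 0 < w + √(w ^ 2 + 4 * p * s) := by linarith [neg_abs_le w]
    refine ⟨(w + √(w ^ 2 + 4 * p * s)) / (2 * s), div_pos hpos (by positivity), ?_⟩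
    have := hpos.ne'
    generalize √(w ^ 2 + 4 * p * s) = R at *
    dsimp only
    rw [sub_eq_iff_eq_add, eq_comm, ← eq_sub_iff_add_eq', div_eq_iff (by positivity)]
    field_simp
    linarith
  have hderiv : ∀ y ∈ Ioi (0 : ℝ),
      HasDerivWithinAt (fun y : ℝ ↦ s * y - p / y) (s + p / y ^ 2) (Ioi 0) y := by
    intro y hy
    have hy' : y ≠ 0 := (mem_Ioi.1 hy).ne'
    refine HasDerivAt.hasDerivWithinAt ?_
    exact (((hasDerivAt_id y).const_mul s).sub ((hasDerivAt_inv hy').const_mul p)).congr_deriv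
      (by ring)
  have h := lintegral_image_eq_lintegral_deriv_mul_of_monotoneOn measurableSet_Ioi hderiv
    hmono.monotoneOn F
  rw [himage, Measure.restrict_univ] at h
  exact h.symm

/-- Invariance of `|s y - p / y|` under `y ↦ p / (s y)`. -/
theorem lintegral_Ioi_comp_sub_div_reflect {p s : ℝ} (hp : 0 < p) (hs : 0 < s)
    {F : ℝ → ENNReal} (hF : ∀ w, F (-w) = F w) :
    ∫⁻ y in Ioi (0 : ℝ), ENNReal.ofReal (p / y ^ 2) * F (s * y - p / y) =
      ∫⁻ y in Ioi (0 : ℝ), ENNReal.ofReal s * F (s * y - p / y) := by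
  have hinj : InjOn (fun y : ℝ ↦ p / s / y) (Ioi 0) := by
    intro a ha b hb hab
    have ha' : a ≠ 0 := (mem_Ioi.1 ha).ne'
    have hb' : b ≠ 0 := (mem_Ioi.1 hb).ne'
    have := hp.ne'
    have := hs.ne'
    field_simp at hab
    exact hab.symm
  have himage : (fun y : ℝ ↦ p / s / y) '' Ioi 0 = Ioi 0 := by
    ext w
    refine ⟨?_, fun hw ↦ ⟨p / s / w, ?_, ?_⟩⟩
    · rintro ⟨y, hy, rfl⟩
      have : 0 < y := hy
      exact mem_Ioi.2 (by positivity)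
    · have : 0 < w := hw
      exact mem_Ioi.2 (by positivity)
    · have : w ≠ 0 := (mem_Ioi.1 hw).ne'
      field_simp
  have hderiv : ∀ y ∈ Ioi (0 : ℝ),
      HasDerivWithinAt (fun y : ℝ ↦ p / s / y) (-(p / s / y ^ 2)) (Ioi 0) y := by
    intro y hy
    have hy' : y ≠ 0 := (mem_Ioi.1 hy).ne'
    refine HasDerivAt.hasDerivWithinAt ?_
    exact ((hasDerivAt_inv hy').const_mul (p / s)).congr_deriv (by ring)
  have h := lintegral_image_eq_lintegral_abs_deriv_mul measurableSet_Ioi hderiv hinj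
    (fun y ↦ ENNReal.ofReal s * F (s * y - p / y))
  rw [himage] at h
  rw [h]
  refine setLIntegral_congr_fun measurableSet_Ioi fun y hy ↦ ?_
  have hy' : 0 < y := hy
  rw [← mul_assoc, ← ENNReal.ofReal_mul (abs_nonneg _), abs_neg, abs_of_pos (by positivity),
    ← hF]
  congr 2 <;> field_simp
  ring

theorem lintegral_Ioi_comp_sub_div {p s a b : ℝ} (hp : 0 < p) (hs : 0 < s) (ha : 0 ≤ a)
    (hb : 0 ≤ b) {F : ℝ → ENNReal} (hFm : Measurable F) (hF : ∀ w, F (-w) = F w) :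
    ∫⁻ y in Ioi (0 : ℝ), ENNReal.ofReal (a / y ^ 2 + b) * F (s * y - p / y) =
      ENNReal.ofReal ((a / p + b / s) / 2) * ∫⁻ w, F w := by
  set G : ENNReal := ∫⁻ y in Ioi (0 : ℝ), F (s * y - p / y) with hG
  have hmeas : Measurable fun y : ℝ ↦ F (s * y - p / y) := hFm.comp (by fun_prop)
  have hconst : ∀ k : ℝ, ∫⁻ y in Ioi (0 : ℝ), ENNReal.ofReal k * F (s * y - p / y) =
      ENNReal.ofReal k * G := fun k ↦ lintegral_const_mul _ hmeas
  have hinv : ∀ k : ℝ, 0 ≤ k → ∫⁻ y in Ioi (0 : ℝ), ENNReal.ofReal (k / y ^ 2) *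
      F (s * y - p / y) = ENNReal.ofReal (k / p * s) * G := by
    intro k hk
    rw [ENNReal.ofReal_mul (by positivity), mul_assoc, ← hconst,
      ← lintegral_Ioi_comp_sub_div_reflect hp hs hF, ← lintegral_const_mul _ (by fun_prop)]
    refine lintegral_congr fun y ↦ ?_
    rw [← mul_assoc, ← ENNReal.ofReal_mul (by positivity)]
    congr 2
    field_simp
  have hsum : ∀ k l : ℝ, 0 ≤ k → 0 ≤ l →
      ∫⁻ y in Ioi (0 : ℝ), ENNReal.ofReal (k / y ^ 2 + l) * F (s * y - p / y) =
        ENNReal.ofReal (k / p * s + l) * G := by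
    intro k l hk hl
    rw [ENNReal.ofReal_add (by positivity) hl, add_mul, ← hinv k hk, ← hconst,
      ← lintegral_add_left (by fun_prop)]
    refine lintegral_congr fun y ↦ ?_
    rw [ENNReal.ofReal_add (by positivity) hl, add_mul]
  have htotal : ∫⁻ w, F w = ENNReal.ofReal (2 * s) * G := by
    rw [← lintegral_Ioi_deriv_mul_comp_sub_div hp hs F]
    simp_rw [add_comm s]
    rw [hsum p s hp.le hs.le]
    congr 2
    field_simp
    norm_num
  rw [hsum a b ha hb, htotal, ← mul_assoc, ← ENNReal.ofReal_mul (by positivity)]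
  congr 2
  field_simp

theorem lintegral_Ioi_pow_mul_div_sqrt_pow (n : ℕ) {p s a b L : ℝ} (hp : 0 < p) (hs : 0 < s)
    (ha : 0 ≤ a) (hb : 0 ≤ b) (hL : 0 < L) :
    ∫⁻ y in Ioi (0 : ℝ), ENNReal.ofReal (y ^ n * (a + b * y ^ 2) /
        √((p - s * y ^ 2) ^ 2 + 4 * L ^ 2 * y ^ 2) ^ (n + 2)) =
      ENNReal.ofReal ((a / p + b / s) / 2 / L ^ (n + 1)) *
        ∫⁻ w : ℝ, ENNReal.ofReal (1 / √(w ^ 2 + 4) ^ (n + 2)) := by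
  have hF := lintegral_Ioi_comp_sub_div (p := p / L) (s := s / L) (a := a / L ^ (n + 2))
    (b := b / L ^ (n + 2)) (F := fun w ↦ ENNReal.ofReal (1 / √(w ^ 2 + 4) ^ (n + 2)))
    (by positivity) (by positivity) (by positivity) (by positivity) (by fun_prop) (by simp)
  rw [show (a / p + b / s) / 2 / L ^ (n + 1) =
    (a / L ^ (n + 2) / (p / L) + b / L ^ (n + 2) / (s / L)) / 2 by field_simp; ring, ← hF]
  refine setLIntegral_congr_fun measurableSet_Ioi fun y hy ↦ ?_
  have hy' : 0 < y := hy
  rw [← ENNReal.ofReal_mul (by positivity)]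
  congr 1
  have hroot : √((p - s * y ^ 2) ^ 2 + 4 * L ^ 2 * y ^ 2) =
      L * y * √((s / L * y - p / L / y) ^ 2 + 4) := by
    rw [← sqrt_sq (by positivity : 0 ≤ L * y), ← sqrt_mul (by positivity)]
    congr 1
    field_simp
    ring
  rw [hroot]
  have : 0 < √((s / L * y - p / L / y) ^ 2 + 4) := by positivity
  generalize √((s / L * y - p / L / y) ^ 2 + 4) = R at *
  field_simp
  ring

theorem lintegral_one_div_sqrt_pow_ne_top (n : ℕ) :
    ∫⁻ w : ℝ, ENNReal.ofReal (1 / √(w ^ 2 + 4) ^ (n + 2)) ≠ ⊤ := by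
  refine ((lintegral_mono fun w ↦ ENNReal.ofReal_le_ofReal ?_).trans_lt
    integrable_inv_one_add_sq.lintegral_lt_top).ne
  have h : √(w ^ 2 + 4) ^ 2 = w ^ 2 + 4 := sq_sqrt (by positivity)
  have h1 : 1 ≤ √(w ^ 2 + 4) := by
    rw [one_le_sqrt]; nlinarith
  rw [one_div]
  refine inv_anti₀ (by positivity) ?_
  calc 1 + w ^ 2 ≤ √(w ^ 2 + 4) ^ 2 := by rw [h]; linarith
    _ ≤ √(w ^ 2 + 4) ^ (n + 2) := pow_le_pow_right₀ h1 (by omega)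

theorem lintegral_one_div_sqrt_pow_ne_zero (n : ℕ) :
    ∫⁻ w : ℝ, ENNReal.ofReal (1 / √(w ^ 2 + 4) ^ (n + 2)) ≠ 0 := by
  rw [Ne, lintegral_eq_zero_iff (by fun_prop)]
  intro h
  obtain ⟨w, hw⟩ := h.exists
  have : 0 < 1 / √(w ^ 2 + 4) ^ (n + 2) := by positivity
  simp only [Pi.zero_apply, ENNReal.ofReal_eq_zero] at hw
  linarith

/-- A Feynman parametrisation. -/
theorem lintegral_Ioi_pow_div_add_pow (n : ℕ) {a b : ℝ} (ha : 0 < a) (hb : 0 < b) :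
    ∫⁻ y in Ioi (0 : ℝ), ENNReal.ofReal (y ^ n / (a ^ 2 + b ^ 2 * y ^ 2) ^ (n + 1)) =
      ENNReal.ofReal (1 / (a ^ (n + 1) * b ^ (n + 1))) *
        ∫⁻ w : ℝ, ENNReal.ofReal (1 / √(w ^ 2 + 4) ^ (n + 2)) := by
  have h := lintegral_Ioi_pow_mul_div_sqrt_pow n (p := a ^ 2) (s := b ^ 2) (a := a ^ 2)
    (b := b ^ 2) (L := a * b) (by positivity) (by positivity) (by positivity) (by positivity)
    (by positivity)
  rw [show (a ^ 2 / a ^ 2 + b ^ 2 / b ^ 2) / 2 / (a * b) ^ (n + 1) =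
    1 / (a ^ (n + 1) * b ^ (n + 1)) by rw [mul_pow]; field_simp; norm_num] at h
  rw [← h]
  refine lintegral_congr fun y ↦ ?_
  rw [show (a ^ 2 - b ^ 2 * y ^ 2) ^ 2 + 4 * (a * b) ^ 2 * y ^ 2 = (a ^ 2 + b ^ 2 * y ^ 2) ^ 2
    by ring, sqrt_sq (by positivity)]
  congr 1
  field_simp
  ring

/-- Integration in polar coordinates. -/
theorem lintegral_eq_lintegral_toSphere_s12 {E : Type*} [NormedAddCommGroup E] [NormedSpace ℝ E]
    [MeasurableSpace E] [BorelSpace E] [FiniteDimensional ℝ E] [Nontrivial E]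
    (μ : Measure E) [μ.IsAddHaarMeasure] {f : E → ENNReal} (hf : Measurable f) :
    ∫⁻ z, f z ∂μ = ∫⁻ ω, ∫⁻ ρ, f ((ρ : ℝ) • (ω : E))
      ∂(Measure.volumeIoiPow (Module.finrank ℝ E - 1)) ∂μ.toSphere := by
  have hpres := μ.measurePreserving_homeomorphUnitSphereProd
  have hg : Measurable fun q : Metric.sphere (0 : E) 1 × Ioi (0 : ℝ) ↦
      f ((q.2 : ℝ) • (q.1 : E)) :=
    hf.comp (by fun_prop)
  rw [← lintegral_prod (μ := μ.toSphere)
      (ν := Measure.volumeIoiPow (Module.finrank ℝ E - 1)) _ hg.aemeasurable,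
    ← hpres.lintegral_comp hg]
  conv_lhs => rw [← restrict_compl_singleton (μ := μ) 0,
    ← lintegral_subtype_comap (measurableSet_singleton _).compl]
  refine lintegral_congr fun z ↦ ?_
  have hz : ‖(z : E)‖ ≠ 0 := norm_ne_zero_iff.2 z.2
  simp [smul_smul, hz]

theorem lintegral_volumeIoiPow (n : ℕ) {g : ℝ → ENNReal} (hg : Measurable g) :
    ∫⁻ ρ, g ρ ∂(Measure.volumeIoiPow n) = ∫⁻ ρ in Ioi (0 : ℝ), ENNReal.ofReal (ρ ^ n) * g ρ := by
  rw [Measure.volumeIoiPow, lintegral_withDensity_eq_lintegral_mul _ (by fun_prop) (by fun_prop),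
    ← lintegral_subtype_comap measurableSet_Ioi]
  rfl

section InnerProductSpace

variable {E : Type*} [NormedAddCommGroup E] [InnerProductSpace ℝ E]

/-- An ellipsoid with a focus at the origin, as a linear preimage of a ball. -/
theorem setOf_mul_norm_sub_inner_lt_one {c : ℝ} (m : E) (hm : ‖m‖ < c) :
    {z : E | c * ‖z‖ - inner ℝ m z < 1} =
      (c • LinearMap.transvection
        ((-(1 / (c * (c + √(c ^ 2 - ‖m‖ ^ 2)))) • innerₛₗ ℝ m)) m) ⁻¹'
        Metric.ball ((1 / √(c ^ 2 - ‖m‖ ^ 2)) • m) (c / √(c ^ 2 - ‖m‖ ^ 2)) := by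
  have hm0 := norm_nonneg m
  have hc : 0 < c := hm0.trans_lt hm
  have hD : 0 < c ^ 2 - ‖m‖ ^ 2 := by nlinarith
  have he : 0 < √(c ^ 2 - ‖m‖ ^ 2) := sqrt_pos.2 hD
  have he2 : √(c ^ 2 - ‖m‖ ^ 2) ^ 2 = c ^ 2 - ‖m‖ ^ 2 := sq_sqrt hD.le
  generalize √(c ^ 2 - ‖m‖ ^ 2) = e at he he2 ⊢
  ext z
  have hcs : |inner ℝ m z| ≤ ‖m‖ * ‖z‖ := abs_real_inner_le_norm m z
  rw [mem_ofPred_eq, mem_preimage, mem_ball_iff_norm,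
    ← sq_lt_sq₀ (norm_nonneg _) (by positivity : 0 ≤ c / e), ← real_inner_self_eq_norm_sq]
  have hT : (c • LinearMap.transvection ((-(1 / (c * (c + e))) • innerₛₗ ℝ m)) m) z =
      c • z - (inner ℝ m z / (c + e)) • m := by
    simp [LinearMap.transvection.apply, smul_smul, sub_eq_add_neg]
    congr 1
    field_simp
  rw [hT]
  have hexpand : inner ℝ (c • z - (inner ℝ m z / (c + e)) • m - (1 / e) • m)
      (c • z - (inner ℝ m z / (c + e)) • m - (1 / e) • m) =
      (c * ‖z‖) ^ 2 - (1 + inner ℝ m z) ^ 2 + (c / e) ^ 2 := by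
    simp only [inner_sub_left, inner_sub_right, inner_smul_left, inner_smul_right,
      real_inner_self_eq_norm_sq, real_inner_comm m z, conj_trivial]
    rw [show ‖m‖ ^ 2 = c ^ 2 - e ^ 2 by linarith]
    field_simp
    ring
  rw [hexpand]
  have hcz : ‖m‖ * ‖z‖ ≤ c * ‖z‖ := by gcongr
  have h0 : 0 ≤ c * ‖z‖ := by positivity
  have h1 := neg_abs_le (inner ℝ m z)
  constructor
  · intro h
    nlinarith
  · intro h
    have := abs_lt_of_sq_lt_sq (by linarith : (c * ‖z‖) ^ 2 < (1 + inner ℝ m z) ^ 2)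
    nlinarith

variable [MeasurableSpace E] [BorelSpace E] [FiniteDimensional ℝ E] [Nontrivial E]

theorem volume_setOf_mul_norm_sub_inner_lt_one {c : ℝ} (m : E) (hm : ‖m‖ < c) :
    volume {z : E | c * ‖z‖ - inner ℝ m z < 1} =
      ENNReal.ofReal (c / √(c ^ 2 - ‖m‖ ^ 2) ^ (Module.finrank ℝ E + 1)) *
        volume (Metric.ball (0 : E) 1) := by
  have hm0 := norm_nonneg m
  have hc : 0 < c := hm0.trans_lt hm
  have hD : 0 < c ^ 2 - ‖m‖ ^ 2 := by nlinarith
  have he : 0 < √(c ^ 2 - ‖m‖ ^ 2) := sqrt_pos.2 hD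
  have he2 : √(c ^ 2 - ‖m‖ ^ 2) ^ 2 = c ^ 2 - ‖m‖ ^ 2 := sq_sqrt hD.le
  rw [setOf_mul_norm_sub_inner_lt_one m hm]
  generalize √(c ^ 2 - ‖m‖ ^ 2) = e at he he2 ⊢
  have hdet : LinearMap.det (c • LinearMap.transvection
      ((-(1 / (c * (c + e))) • innerₛₗ ℝ m)) m) = c ^ Module.finrank ℝ E * (e / c) := by
    rw [LinearMap.det_smul, LinearMap.transvection.det]
    congr 1
    simp only [LinearMap.smul_apply, innerₛₗ_apply_apply, real_inner_self_eq_norm_sq, smul_eq_mul]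
    rw [show ‖m‖ ^ 2 = c ^ 2 - e ^ 2 by linarith]
    field_simp
    ring
  rw [Measure.addHaar_preimage_linearMap _ (by rw [hdet]; positivity), hdet,
    Measure.addHaar_ball _ _ (by positivity), ← mul_assoc, ← ENNReal.ofReal_mul (by positivity),
    abs_of_pos (by positivity)]
  congr 2
  rw [div_pow]
  field_simp
  ring

theorem lintegral_toSphere_one_div_sub_inner_pow {c : ℝ} (m : E) (hm : ‖m‖ < c) :
    ∫⁻ ω : Metric.sphere (0 : E) 1,
        ENNReal.ofReal (1 / (c - inner ℝ m (ω : E)) ^ Module.finrank ℝ E)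
          ∂(volume : Measure E).toSphere =
      ENNReal.ofReal (c / √(c ^ 2 - ‖m‖ ^ 2) ^ (Module.finrank ℝ E + 1)) *
        (volume : Measure E).toSphere univ := by
  have hdim : 0 < Module.finrank ℝ E := Module.finrank_pos
  have hset : MeasurableSet {z : E | c * ‖z‖ - inner ℝ m z < 1} :=
    measurableSet_lt (by fun_prop) measurable_const
  rw [Measure.toSphere_apply_univ, mul_left_comm, ← volume_setOf_mul_norm_sub_inner_lt_one m hm,
    ← lintegral_indicator_one hset,
    lintegral_eq_lintegral_toSphere_s12 _ (measurable_one.indicator hset),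
    ← lintegral_const_mul' _ _ (by simp)]
  refine lintegral_congr fun ω ↦ ?_
  have hω : ‖(ω : E)‖ = 1 := mem_sphere_zero_iff_norm.1 ω.2
  have hpos : 0 < c - inner ℝ m (ω : E) := by
    have := real_inner_le_norm m (ω : E)
    rw [hω] at this
    linarith
  have hind : ∀ ρ : Ioi (0 : ℝ), {z : E | c * ‖z‖ - inner ℝ m z < 1}.indicator
      (1 : E → ENNReal) ((ρ : ℝ) • (ω : E)) =
      (Iio (⟨1 / (c - inner ℝ m (ω : E)), by simpa using hpos⟩ : Ioi (0 : ℝ))).indicator 1 ρ := by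
    intro ρ
    have hρ : 0 < (ρ : ℝ) := ρ.2
    simp only [indicator_apply, mem_ofPred_eq, mem_Iio, norm_smul, inner_smul_right, hω,
      Real.norm_of_nonneg hρ.le, ← Subtype.coe_lt_coe, lt_div_iff₀ hpos]
    congr 2
    ring
  simp_rw [hind]
  rw [lintegral_indicator_one measurableSet_Iio, Measure.volumeIoiPow_apply_Iio,
    ← ENNReal.ofReal_natCast, ← ENNReal.ofReal_mul (by positivity), Nat.sub_add_cancel hdim,
    Nat.cast_pred hdim, sub_add_cancel]
  congr 1
  have : (Module.finrank ℝ E : ℝ) ≠ 0 := by positivity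
  rw [one_div_pow]
  field_simp

/-- The integral of a product of two Poisson-type kernels, with poles inside and outside, over the
sphere of radius `ρ`. -/
theorem lintegral_toSphere_one_div_norm_sub_pow {v x : E} {ρ : ℝ} (hv : ‖v‖ < ρ) (hx : ρ < ‖x‖) :
    ∫⁻ ω : Metric.sphere (0 : E) 1, ENNReal.ofReal (1 / (‖ρ • (ω : E) - v‖ ^ Module.finrank ℝ E *
        ‖ρ • (ω : E) - x‖ ^ Module.finrank ℝ E)) ∂(volume : Measure E).toSphere =
      ENNReal.ofReal (ρ ^ 2 * (‖x‖ ^ 2 - ‖v‖ ^ 2) / ((ρ ^ 2 - ‖v‖ ^ 2) * (‖x‖ ^ 2 - ρ ^ 2) *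
        (ρ * ‖x - v‖) ^ Module.finrank ℝ E)) * (volume : Measure E).toSphere univ := by
  obtain ⟨n, hn⟩ : ∃ n, Module.finrank ℝ E = n + 1 :=
    Nat.exists_eq_succ_of_ne_zero Module.finrank_pos.ne'
  have hv0 := norm_nonneg v
  have hρ : 0 < ρ := hv0.trans_lt hv
  have hp : 0 < ρ ^ 2 - ‖v‖ ^ 2 := by nlinarith
  have hs : 0 < ‖x‖ ^ 2 - ρ ^ 2 := by nlinarith
  have hL : 0 < ‖x - v‖ := by linarith [norm_sub_norm_le x v]
  have hinner : ∀ y : ℝ, ∫⁻ ω : Metric.sphere (0 : E) 1, ENNReal.ofReal (y ^ n /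
      (‖ρ • (ω : E) - v‖ ^ 2 + ‖ρ • (ω : E) - x‖ ^ 2 * y ^ 2) ^ (n + 1))
        ∂(volume : Measure E).toSphere =
      ENNReal.ofReal (y ^ n * ((ρ ^ 2 + ‖v‖ ^ 2) + (ρ ^ 2 + ‖x‖ ^ 2) * y ^ 2) /
        √(((ρ ^ 2 - ‖v‖ ^ 2) - (‖x‖ ^ 2 - ρ ^ 2) * y ^ 2) ^ 2 +
          4 * (ρ * ‖x - v‖) ^ 2 * y ^ 2) ^ (n + 2)) * (volume : Measure E).toSphere univ := by
    intro y
    have hm : ‖(2 * ρ) • (v + y ^ 2 • x)‖ < (ρ ^ 2 + ‖v‖ ^ 2) + (ρ ^ 2 + ‖x‖ ^ 2) * y ^ 2 := by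
      have hle := norm_add_le v (y ^ 2 • x)
      rw [norm_smul, Real.norm_of_nonneg (sq_nonneg y)] at hle
      rw [norm_smul, Real.norm_of_nonneg (by positivity)]
      have h1 : 2 * ρ * ‖v + y ^ 2 • x‖ ≤ 2 * ρ * (‖v‖ + y ^ 2 * ‖x‖) := by gcongr
      nlinarith [mul_pos (sub_pos.2 hv) (sub_pos.2 hv),
        mul_nonneg (sq_nonneg y) (sq_nonneg (‖x‖ - ρ))]
    have hsphere := lintegral_toSphere_one_div_sub_inner_pow _ hm
    have hD : ((ρ ^ 2 + ‖v‖ ^ 2) + (ρ ^ 2 + ‖x‖ ^ 2) * y ^ 2) ^ 2 -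
        ‖(2 * ρ) • (v + y ^ 2 • x)‖ ^ 2 =
        ((ρ ^ 2 - ‖v‖ ^ 2) - (‖x‖ ^ 2 - ρ ^ 2) * y ^ 2) ^ 2 +
          4 * (ρ * ‖x - v‖) ^ 2 * y ^ 2 := by
      rw [norm_smul, mul_pow, mul_pow ρ, norm_add_sq_real, norm_sub_sq_real, norm_smul,
        inner_smul_right, real_inner_comm, Real.norm_of_nonneg (sq_nonneg y),
        Real.norm_of_nonneg (by positivity)]
      ring
    rw [hD, hn] at hsphere
    rw [mul_div_assoc, ENNReal.ofReal_mul' (by positivity), mul_assoc, ← hsphere,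
      ← lintegral_const_mul _ (by fun_prop)]
    refine lintegral_congr fun ω ↦ ?_
    have hω : ‖(ω : E)‖ = 1 := mem_sphere_zero_iff_norm.1 ω.2
    have hden : ‖ρ • (ω : E) - v‖ ^ 2 + ‖ρ • (ω : E) - x‖ ^ 2 * y ^ 2 =
        (ρ ^ 2 + ‖v‖ ^ 2) + (ρ ^ 2 + ‖x‖ ^ 2) * y ^ 2 -
          inner ℝ ((2 * ρ) • (v + y ^ 2 • x)) (ω : E) := by
      simp only [norm_sub_sq_real, norm_smul, inner_smul_left, inner_smul_right,
        inner_add_left, hω, conj_trivial, Real.norm_of_nonneg hρ.le, real_inner_comm v, real_inner_comm x]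
      ring
    rw [← hden, ← ENNReal.ofReal_mul' (by positivity), mul_one_div]
  have hM0 := lintegral_one_div_sqrt_pow_ne_zero n
  have hMtop := lintegral_one_div_sqrt_pow_ne_top n
  have hT := lintegral_Ioi_pow_mul_div_sqrt_pow n hp hs (by positivity : 0 ≤ ρ ^ 2 + ‖v‖ ^ 2)
    (by positivity : 0 ≤ ρ ^ 2 + ‖x‖ ^ 2) (by positivity : 0 < ρ * ‖x - v‖)
  rw [show ((ρ ^ 2 + ‖v‖ ^ 2) / (ρ ^ 2 - ‖v‖ ^ 2) + (ρ ^ 2 + ‖x‖ ^ 2) / (‖x‖ ^ 2 - ρ ^ 2)) / 2 /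
      (ρ * ‖x - v‖) ^ (n + 1) = ρ ^ 2 * (‖x‖ ^ 2 - ‖v‖ ^ 2) / ((ρ ^ 2 - ‖v‖ ^ 2) *
      (‖x‖ ^ 2 - ρ ^ 2) * (ρ * ‖x - v‖) ^ (n + 1)) by field_simp; ring] at hT
  rw [hn, ← ENNReal.mul_left_inj hM0 hMtop, mul_right_comm, ← hT,
    ← lintegral_mul_const _ (by fun_prop), ← lintegral_mul_const _ (by fun_prop)]
  simp_rw [← hinner]
  rw [lintegral_lintegral_swap (by fun_prop)]
  refine lintegral_congr fun ω ↦ ?_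
  have hω : ‖(ω : E)‖ = 1 := mem_sphere_zero_iff_norm.1 ω.2
  have hnorm : ‖ρ • (ω : E)‖ = ρ := by rw [norm_smul, hω, Real.norm_of_nonneg hρ.le, mul_one]
  have ha : 0 < ‖ρ • (ω : E) - v‖ := by linarith [norm_sub_norm_le (ρ • (ω : E)) v]
  have hb : 0 < ‖ρ • (ω : E) - x‖ := by
    linarith [norm_sub_norm_le x (ρ • (ω : E)), norm_sub_rev x (ρ • (ω : E))]
  rw [lintegral_Ioi_pow_div_add_pow n ha hb]

theorem lintegral_Ioo_radial {V R r a L : ℝ} (n : ℕ) (hV : 0 ≤ V) (hr : 0 < r) (hVr : V < r)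
    (hrR : r < R) (ha : 0 < a) (hL : 0 < L) :
    ∫⁻ ρ in Ioo r R, ENNReal.ofReal (ρ ^ n * ((R ^ 2 - ρ ^ 2) ^ a / (ρ ^ 2 - V ^ 2) ^ a *
        (ρ ^ 2 * (R ^ 2 - V ^ 2) / ((ρ ^ 2 - V ^ 2) * (R ^ 2 - ρ ^ 2) * (ρ * L) ^ (n + 1))))) =
      ENNReal.ofReal ((R ^ 2 - r ^ 2) ^ a / ((r ^ 2 - V ^ 2) ^ a * L ^ (n + 1)) / (2 * a)) := by
  have hpos : ∀ ρ ∈ Ioo r R, 0 < ρ ∧ 0 < ρ ^ 2 - V ^ 2 ∧ 0 < R ^ 2 - ρ ^ 2 := fun ρ hρ ↦ by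
    have h1 := hρ.1
    have h2 := hρ.2
    exact ⟨by linarith, by nlinarith, by nlinarith⟩
  have hRV : 0 < R ^ 2 - V ^ 2 := by nlinarith
  set g : ℝ → ℝ := fun ρ ↦ -(((R ^ 2 - ρ ^ 2) / (ρ ^ 2 - V ^ 2)) ^ a / (2 * a * L ^ (n + 1)))
    with hg
  set g' : ℝ → ℝ := fun ρ ↦ ρ ^ n * ((R ^ 2 - ρ ^ 2) ^ a / (ρ ^ 2 - V ^ 2) ^ a *
        (ρ ^ 2 * (R ^ 2 - V ^ 2) / ((ρ ^ 2 - V ^ 2) * (R ^ 2 - ρ ^ 2) * (ρ * L) ^ (n + 1))))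
    with hg'
  have hcont : ContinuousOn g (Icc r R) := by
    refine ContinuousOn.neg (ContinuousOn.div_const (ContinuousOn.rpow_const ?_ ?_) _)
    · refine ContinuousOn.div (by fun_prop) (by fun_prop) fun ρ hρ ↦ ?_
      have : V < ρ := hVr.trans_le hρ.1
      exact ne_of_gt (by nlinarith)
    · exact fun ρ _ ↦ Or.inr ha.le
  have hderiv : ∀ ρ ∈ Ioo r R, HasDerivAt g (g' ρ) ρ := by
    intro ρ hρ
    obtain ⟨h0, h1, h2⟩ := hpos ρ hρ
    have hN : HasDerivAt (fun ρ : ℝ ↦ R ^ 2 - ρ ^ 2) (-(2 * ρ)) ρ :=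
      ((hasDerivAt_pow 2 ρ).const_sub (R ^ 2)).congr_deriv (by simp)
    have hD : HasDerivAt (fun ρ : ℝ ↦ ρ ^ 2 - V ^ 2) (2 * ρ) ρ :=
      ((hasDerivAt_pow 2 ρ).sub_const (V ^ 2)).congr_deriv (by simp)
    have hu : 0 < (R ^ 2 - ρ ^ 2) / (ρ ^ 2 - V ^ 2) := by positivity
    refine ((((hN.div hD h1.ne').rpow_const (p := a) (Or.inl hu.ne')).div_const
      (2 * a * L ^ (n + 1))).neg).congr_deriv ?_
    simp only [Pi.div_apply, hg']
    rw [rpow_sub_one hu.ne', div_rpow h2.le h1.le, mul_pow]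
    field_simp
    ring
  have hnonneg : ∀ ρ ∈ Ioo r R, 0 ≤ g' ρ := by
    intro ρ hρ
    obtain ⟨h0, h1, h2⟩ := hpos ρ hρ
    simp only [hg']
    positivity
  have hint : IntegrableOn g' (Ioc r R) :=
    intervalIntegral.integrableOn_deriv_of_nonneg hcont hderiv hnonneg
  have hint' : IntegrableOn g' (Ioo r R) := hint.mono_set Ioo_subset_Ioc_self
  rw [← ofReal_integral_eq_lintegral_ofReal hint'
      ((ae_restrict_mem measurableSet_Ioo).mono hnonneg), ← integral_Ioc_eq_integral_Ioo,
    ← intervalIntegral.integral_of_le hrR.le,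
    intervalIntegral.integral_eq_sub_of_hasDerivAt_of_le hrR.le hcont hderiv
      ((intervalIntegrable_iff_integrableOn_Ioc_of_le hrR.le).2 hint)]
  congr 1
  simp only [hg, sub_self, zero_div, zero_rpow ha.ne']
  rw [div_rpow (by nlinarith) (by nlinarith)]
  field_simp
  ring

theorem lintegral_annulus_radial_mul {W : ℝ → ℝ} (hWm : Measurable W) {v x : E} {r : ℝ}
    (hv : ‖v‖ < r) (hW : ∀ ρ ∈ Ioo r ‖x‖, 0 ≤ W ρ) :
    ∫⁻ z in {z : E | r < ‖z‖ ∧ ‖z‖ < ‖x‖}, ENNReal.ofReal (W ‖z‖ *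
        (1 / (‖z - v‖ ^ Module.finrank ℝ E * ‖z - x‖ ^ Module.finrank ℝ E))) =
      (∫⁻ ρ in Ioo r ‖x‖, ENNReal.ofReal (ρ ^ (Module.finrank ℝ E - 1) * (W ρ *
        (ρ ^ 2 * (‖x‖ ^ 2 - ‖v‖ ^ 2) / ((ρ ^ 2 - ‖v‖ ^ 2) * (‖x‖ ^ 2 - ρ ^ 2) *
          (ρ * ‖x - v‖) ^ Module.finrank ℝ E))))) * (volume : Measure E).toSphere univ := by
  have hr : 0 < r := (norm_nonneg v).trans_lt hv
  have hset : MeasurableSet {z : E | r < ‖z‖ ∧ ‖z‖ < ‖x‖} :=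
    (measurableSet_lt measurable_const measurable_norm).inter
      (measurableSet_lt measurable_norm measurable_const)
  have hfm : Measurable fun z : E ↦ ENNReal.ofReal (W ‖z‖ *
      (1 / (‖z - v‖ ^ Module.finrank ℝ E * ‖z - x‖ ^ Module.finrank ℝ E))) := by fun_prop
  have hind := hfm.indicator hset
  have hjoint : Measurable fun q : Metric.sphere (0 : E) 1 × Ioi (0 : ℝ) ↦
      {z : E | r < ‖z‖ ∧ ‖z‖ < ‖x‖}.indicator (fun z : E ↦ ENNReal.ofReal (W ‖z‖ *
        (1 / (‖z - v‖ ^ Module.finrank ℝ E * ‖z - x‖ ^ Module.finrank ℝ E))))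
          ((q.2 : ℝ) • (q.1 : E)) :=
    hind.comp (by fun_prop)
  rw [← lintegral_indicator hset, lintegral_eq_lintegral_toSphere_s12 _ hind,
    lintegral_lintegral_swap hjoint.aemeasurable]
  have hinner : ∀ ρ : Ioi (0 : ℝ), ∫⁻ ω : Metric.sphere (0 : E) 1,
      {z : E | r < ‖z‖ ∧ ‖z‖ < ‖x‖}.indicator (fun z : E ↦ ENNReal.ofReal (W ‖z‖ *
        (1 / (‖z - v‖ ^ Module.finrank ℝ E * ‖z - x‖ ^ Module.finrank ℝ E))))
          ((ρ : ℝ) • (ω : E)) ∂(volume : Measure E).toSphere =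
      (Ioo r ‖x‖).indicator (fun ρ ↦ ENNReal.ofReal (W ρ *
        (ρ ^ 2 * (‖x‖ ^ 2 - ‖v‖ ^ 2) / ((ρ ^ 2 - ‖v‖ ^ 2) * (‖x‖ ^ 2 - ρ ^ 2) *
          (ρ * ‖x - v‖) ^ Module.finrank ℝ E)))) ρ * (volume : Measure E).toSphere univ := by
    intro ρ
    have hnorm : ∀ ω : Metric.sphere (0 : E) 1, ‖(ρ : ℝ) • (ω : E)‖ = ρ := fun ω ↦ by
      have hρ : 0 < (ρ : ℝ) := ρ.2
      rw [norm_smul, mem_sphere_zero_iff_norm.1 ω.2, Real.norm_of_nonneg hρ.le, mul_one]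
    by_cases hρ : (ρ : ℝ) ∈ Ioo r ‖x‖
    · have hmem : ∀ ω : Metric.sphere (0 : E) 1,
          (ρ : ℝ) • (ω : E) ∈ {z : E | r < ‖z‖ ∧ ‖z‖ < ‖x‖} := fun ω ↦ by
        rw [mem_ofPred_eq, hnorm]
        exact hρ
      simp_rw [indicator_of_mem (hmem _), indicator_of_mem hρ, hnorm,
        ENNReal.ofReal_mul (hW _ hρ)]
      rw [lintegral_const_mul _ (by fun_prop),
        lintegral_toSphere_one_div_norm_sub_pow (hv.trans hρ.1) hρ.2, ← mul_assoc]
    · have hmem : ∀ ω : Metric.sphere (0 : E) 1,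
          (ρ : ℝ) • (ω : E) ∉ {z : E | r < ‖z‖ ∧ ‖z‖ < ‖x‖} := fun ω ↦ by
        rw [mem_ofPred_eq, hnorm]
        exact hρ
      simp_rw [indicator_of_notMem (hmem _), indicator_of_notMem hρ]
      simp
  simp_rw [hinner]
  have hgm : Measurable ((Ioo r ‖x‖).indicator (fun ρ ↦ ENNReal.ofReal (W ρ *
        (ρ ^ 2 * (‖x‖ ^ 2 - ‖v‖ ^ 2) / ((ρ ^ 2 - ‖v‖ ^ 2) * (‖x‖ ^ 2 - ρ ^ 2) *
          (ρ * ‖x - v‖) ^ Module.finrank ℝ E))))) :=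
    Measurable.indicator (by fun_prop) measurableSet_Ioo
  rw [lintegral_mul_const _ (by fun_prop), lintegral_volumeIoiPow _ hgm]
  congr 1
  rw [← lintegral_indicator measurableSet_Ioi, ← lintegral_indicator measurableSet_Ioo]
  refine lintegral_congr fun ρ ↦ ?_
  by_cases hρ : ρ ∈ Ioo r ‖x‖
  · have hρ0 : 0 < ρ := hr.trans hρ.1
    rw [indicator_of_mem hρ, indicator_of_mem (mem_Ioi.2 hρ0), indicator_of_mem hρ,
      ← ENNReal.ofReal_mul (by positivity)]
  · rw [indicator_of_notMem hρ]
    by_cases hρ0 : ρ ∈ Ioi (0 : ℝ)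
    · rw [indicator_of_mem hρ0, indicator_of_notMem hρ, mul_zero]
    · rw [indicator_of_notMem hρ0]

theorem integral_annulus_eq {v x : E} {r a : ℝ} (hv : ‖v‖ < r) (hx : r < ‖x‖) (ha : 0 < a) :
    ∫ z in {z : E | r < ‖z‖ ∧ ‖z‖ < ‖x‖}, (‖x‖ ^ 2 - ‖z‖ ^ 2) ^ a /
        ((‖z‖ ^ 2 - ‖v‖ ^ 2) ^ a * ‖z - v‖ ^ Module.finrank ℝ E *
          ‖z - x‖ ^ Module.finrank ℝ E) =
      (‖x‖ ^ 2 - r ^ 2) ^ a / ((r ^ 2 - ‖v‖ ^ 2) ^ a * ‖x - v‖ ^ Module.finrank ℝ E) / (2 * a) *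
        (volume : Measure E).toSphere.real univ := by
  have hv0 := norm_nonneg v
  have hr : 0 < r := hv0.trans_lt hv
  have hL : 0 < ‖x - v‖ := by linarith [norm_sub_norm_le x v]
  obtain ⟨n, hn⟩ : ∃ n, Module.finrank ℝ E = n + 1 :=
    Nat.exists_eq_succ_of_ne_zero Module.finrank_pos.ne'
  have hset : MeasurableSet {z : E | r < ‖z‖ ∧ ‖z‖ < ‖x‖} :=
    (measurableSet_lt measurable_const measurable_norm).inter
      (measurableSet_lt measurable_norm measurable_const)
  have hpos : ∀ ρ ∈ Ioo r ‖x‖, 0 < ρ ^ 2 - ‖v‖ ^ 2 ∧ 0 < ‖x‖ ^ 2 - ρ ^ 2 := fun ρ hρ ↦ by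
    have h1 := hρ.1
    have h2 := hρ.2
    exact ⟨by nlinarith, by nlinarith⟩
  have key := lintegral_annulus_radial_mul (E := E) (v := v) (x := x)
    (W := fun ρ ↦ (‖x‖ ^ 2 - ρ ^ 2) ^ a / (ρ ^ 2 - ‖v‖ ^ 2) ^ a) (by fun_prop) hv
    (fun ρ hρ ↦ by
      obtain ⟨h1, h2⟩ := hpos ρ hρ
      positivity)
  rw [hn, Nat.add_sub_cancel, lintegral_Ioo_radial n hv0 hr hv hx ha hL] at key
  rw [integral_eq_lintegral_of_nonneg_ae
    ((ae_restrict_mem hset).mono fun z hz ↦ by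
      obtain ⟨h1, h2⟩ := hpos _ hz
      simp only [Pi.zero_apply]
      positivity)
    (Measurable.aestronglyMeasurable (by fun_prop)), hn]
  simp_rw [mul_one_div, div_div, ← mul_assoc] at key
  rw [key, ENNReal.toReal_mul, ENNReal.toReal_ofReal ?_, Measure.real]
  · congr 1
    ring
  · have h1 : 0 ≤ r ^ 2 - ‖v‖ ^ 2 := by nlinarith
    have h2 : 0 ≤ ‖x‖ ^ 2 - r ^ 2 := by nlinarith
    positivity

end InnerProductSpace

theorem toSphere_real_univ_euclideanSpace {d : ℕ} (hd : 0 < d) :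
    (volume : Measure (EuclideanSpace ℝ (Fin d))).toSphere.real univ =
      2 * π ^ ((d : ℝ) / 2) / Gamma ((d : ℝ) / 2) := by
  have : Nonempty (Fin d) := Fin.pos_iff_nonempty.1 hd
  have hd' : 0 < (d : ℝ) / 2 := by positivity
  have hG := Gamma_pos_of_pos hd'
  rw [Measure.toSphere_real_apply_univ, Measure.real, EuclideanSpace.volume_ball,
    Real.Gamma_add_one (by positivity), finrank_euclideanSpace, Fintype.card_fin,
    ENNReal.ofReal_one, one_pow, one_mul, ENNReal.toReal_ofReal (by positivity),
    sqrt_eq_rpow, ← rpow_natCast, ← rpow_mul pi_pos.le, one_div_mul_eq_div]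
  field_simp

theorem mul_abs_Gamma_neg_mul_Gamma {a : ℝ} (h0 : 0 < a) (h1 : a < 1) :
    a * |Gamma (-a)| * Gamma a = π / sin (π * a) := by
  have h : Gamma (1 - a) = -a * Gamma (-a) := by
    rw [← Real.Gamma_add_one (by linarith), neg_add_eq_sub]
  rw [← Real.Gamma_mul_Gamma_one_sub, ← abs_of_pos (Gamma_pos_of_pos (by linarith : 0 < 1 - a)),
    h, abs_mul, abs_neg, abs_of_pos h0]
  ring

theorem marginalise_closest_reach_gives_BGR
    (d : ℕ) (hd : 2 ≤ d) (α : ℝ) (hα0 : 0 < α) (hα2 : α < 2)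
    (r : ℝ) (hr : 0 < r)
    (x v : EuclideanSpace ℝ (Fin d)) (hv : ‖v‖ < r) (hx : r < ‖x‖) :
    (Real.Gamma ((d : ℝ) / 2) ^ 2 /
        (π ^ (d : ℝ) * |Real.Gamma (-α / 2)| * Real.Gamma (α / 2))) *
      ∫ z in {z : EuclideanSpace ℝ (Fin d) | r < ‖z‖ ∧ ‖z‖ < ‖x‖},
        (‖x‖ ^ 2 - ‖z‖ ^ 2) ^ (α / 2) /
          ((‖z‖ ^ 2 - ‖v‖ ^ 2) ^ (α / 2) * ‖z - v‖ ^ d * ‖z - x‖ ^ d)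
      = π ^ (-((d : ℝ) / 2 + 1)) * Real.Gamma ((d : ℝ) / 2) * Real.sin (π * α / 2) *
          ((‖x‖ ^ 2 - r ^ 2) ^ (α / 2) /
            ((r ^ 2 - ‖v‖ ^ 2) ^ (α / 2) * ‖x - v‖ ^ d)) := by
  have hd0 : 0 < d := by omega
  have : Nonempty (Fin d) := Fin.pos_iff_nonempty.1 hd0
  have ha : 0 < α / 2 := by positivity
  have hint := integral_annulus_eq hv hx ha
  rw [finrank_euclideanSpace_fin, toSphere_real_univ_euclideanSpace hd0] at hint
  have hΓ := mul_abs_Gamma_neg_mul_Gamma ha (by linarith)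
  have hG : 0 < Gamma ((d : ℝ) / 2) := Gamma_pos_of_pos (by positivity)
  have hsin : 0 < sin (π * (α / 2)) :=
    sin_pos_of_pos_of_lt_pi (by positivity) (by nlinarith [pi_pos])
  have hΓa : |Gamma (-(α / 2))| * Gamma (α / 2) = π / (α / 2 * sin (π * (α / 2))) := by
    rw [div_mul_eq_div_div_swap, ← hΓ]
    field_simp
  have hπd : π ^ (d : ℝ) = π ^ ((d : ℝ) / 2) * π ^ ((d : ℝ) / 2) := by
    rw [← rpow_add pi_pos]
    congr 1
    ring
  have hπn : π ^ (-((d : ℝ) / 2 + 1)) = (π ^ ((d : ℝ) / 2) * π)⁻¹ := by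
    rw [rpow_neg pi_pos.le, rpow_add_one pi_ne_zero]
  have hπ : 0 < π ^ ((d : ℝ) / 2) := by positivity
  rw [hint, neg_div, mul_assoc (π ^ (d : ℝ)), hΓa, hπd, hπn, mul_div_assoc π α 2]
  generalize (‖x‖ ^ 2 - r ^ 2) ^ (α / 2) / ((r ^ 2 - ‖v‖ ^ 2) ^ (α / 2) * ‖x - v‖ ^ d) = K
  field_simp
end
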